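/- Let d ≥ 2, 0 < γ < 1 and a₀ ∈ 𝒮(ℝ^d). Let (ψ^ε)_{ε∈(0,1]} be an admissible solution family on [0,π] of the Hartree equation with harmonic potential iε∂_t ψ = −(ε²/2)Δψ + (|x|²/2)ψ + ε (|·|^{−γ} ∗ |ψ|²) ψ, with ψ^ε(0,·) = a₀, where (|·|^{−γ} ∗ |ψ|²)(x) := ∫_{ℝ^d} |x−y|^{−γ} |ψ(y)|² dy. Define g(t,x) := −( ∫_{ℝ^d} |x−y|^{−γ} |a₀(y)|² dy ) · ∫₀ᵗ |cos τ|^{−γ} dτ and, for τ ∈ [0,π] with τ ≠ π/2, v^ε(τ,x) := |cos τ|^{−d/2} a₀(x/cos τ) exp( −i |x|² tan τ/(2ε) + i g(τ, x/cos τ) ). Then: (i) for every t ∈ [0, π/2), sup_{0≤τ≤t} ‖ψ^ε(τ,·) − v^ε(τ,·)‖_{L²(ℝ^d)} → 0 as ε → 0; (ii) for every t ∈ (π/2, π], sup_{t≤τ≤π} ‖ψ^ε(τ,·) − e^{−i d π/2} v^ε(τ,·)‖_{L²(ℝ^d)} → 0 as ε → 0. -/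

import Mathlib

/-!
Write `c = |cos t|` and `φ = |·|^{-γ} ∗ |a|²`. The solution `ψ` is compared in `L²` with `vv` away
from the focus and with `ww` near it. In both cases the two functions have the same mass `A²`, so
that `‖p - q‖² = 2A² - 2 Re ⟨p, q⟩` and it suffices to control the time derivative of the overlap
`Re ⟨p, q⟩`. The Laplacian and every common real potential
cancel from that derivative (`energy`, `Hdot_sub_Ldot`).

*Away from the focus.* The profile `vv` is the lens transform of `a e^{-iG(t)φ}` with
`G(t) = ∫₀ᵗ |cos|^{-γ}`. The lens transform turns the harmonic oscillator into the free flow and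
scales the Hartree potential by `c^{-γ}`, so `vv` solves the Hartree equation up to a remainder
`vR` of size `O(ε / c²)` in `L²`. Since `2γ < 2 ≤ d`, one has
`∫ |x - y|^{-2γ} |vv(y)|² dy ≤ (M c^{-γ})²` uniformly in `x`; with Cauchy–Schwarz this makes the
difference of the Hartree potentials a source of size `c^{-γ} ‖ψ - vv‖²` (`trilinear_diff`,
`source_bound`), and Gronwall's inequality gives `vv_estimate`.

*Near the focus.* There `vv` degenerates and is replaced by the exact solution `ww` of the linear
equation, written as a lens transform centred at `π/2`. The overlap of `ψ` with `ww` varies by at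
most `M A³ ∫ |cos|^{-γ}` (`trilinear`, `ww_cross`), which is small on short intervals because
`γ < 1`.

*Matching.* Mehler's formula (`mehler`, `ww_mehler`) shows that `ww` is, on each side of the focus,
a lens transform of the free evolution of a fixed Schwartz function over the small time `ε tan t`.
Hence it is close to `vv` before the focus and to `e^{-idπ/2} vv` after it (`ww_data`): the Maslov
phase is the change of branch of `(i s)^{-d/2}` as the free time `s` changes sign.

Concatenating the comparisons over `[0, π/2 - δ]`, `[π/2 - δ, π/2 + δ]` and `[π/2 + δ, π]`, and
using that multiplying `a` by a unimodular constant does not change `φ`, bounds the error after the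
focus (`after_focus`); letting `ε → 0` and then `δ → 0` gives the theorem.
-/

open MeasureTheory Filter Complex Set
open scoped ENNReal

noncomputable section

/-- `ℝ^d` as a Euclidean space. -/
abbrev Ed (d : ℕ) := EuclideanSpace ℝ (Fin d)

/-- The Laplacian `Δf(x) = ∑ᵢ ∂²f/∂xᵢ²`. -/
noncomputable def lap (d : ℕ) (f : Ed d → ℂ) (x : Ed d) : ℂ :=
  ∑ i : Fin d,
    fderiv ℝ (fun y => fderiv ℝ f y (EuclideanSpace.single i 1)) x (EuclideanSpace.single i 1)

/-- An admissible solution family on `[0,T]`. -/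
def AdmissibleFamily (d : ℕ) (T : ℝ) (ψ : ℝ → ℝ → Ed d → ℂ) : Prop :=
  ∀ ε ∈ Set.Ioc (0 : ℝ) 1,
    Continuous (fun p : ℝ × Ed d => ψ ε p.1 p.2) ∧
    (∀ x, ContDiff ℝ 1 (fun t => ψ ε t x)) ∧
    (∀ t, ContDiff ℝ (⊤ : ℕ∞) (ψ ε t)) ∧
    (∀ n : ℕ, ∃ C : ℝ, ∀ t ∈ Set.Icc (0 : ℝ) T,
      eLpNorm (fun x => iteratedFDeriv ℝ n (ψ ε t) x) 2 volume ≤ ENNReal.ofReal C) ∧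
    (∀ n : ℕ, ∀ t₀ ∈ Set.Icc (0 : ℝ) T,
      Tendsto (fun t =>
          (eLpNorm (fun x => iteratedFDeriv ℝ n (ψ ε t) x - iteratedFDeriv ℝ n (ψ ε t₀) x)
            2 volume).toReal)
        (nhdsWithin t₀ (Set.Icc 0 T)) (nhds 0))

/-- The nonlinear phase shift
`g(t,x) = -(|·|^{-γ} ∗ |a₀|²)(x) ∫₀ᵗ |cos τ|^{-γ} dτ`. -/
noncomputable def gphase (d : ℕ) (γ : ℝ) (a₀ : Ed d → ℂ) (t : ℝ) (x : Ed d) : ℝ :=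
  -(∫ y : Ed d, ‖x - y‖ ^ (-γ) * ‖a₀ y‖ ^ 2) * ∫ τ in (0 : ℝ)..t, |Real.cos τ| ^ (-γ)

/-- The WKB profile
`v^ε(τ,x) = |cos τ|^{-d/2} a₀(x/cos τ) e^{-i|x|² tan τ/(2ε) + i g(τ, x/cos τ)}`. -/
noncomputable def hartreeProfile (d : ℕ) (γ : ℝ) (a₀ : Ed d → ℂ) (ε τ : ℝ) (x : Ed d) : ℂ :=
  ((|Real.cos τ| ^ (-(d : ℝ) / 2) : ℝ) : ℂ) * a₀ ((Real.cos τ)⁻¹ • x) *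
    Complex.exp (-Complex.I * ((‖x‖ ^ 2 * Real.tan τ / (2 * ε) : ℝ) : ℂ) +
      Complex.I * ((gphase d γ a₀ τ ((Real.cos τ)⁻¹ • x) : ℝ) : ℂ))

/-! ### Partial derivatives, the Laplacian and cutoffs -/

/-- The partial derivative `∂ᵢf`. -/
def pd (d : ℕ) (i : Fin d) (f : Ed d → ℂ) (x : Ed d) : ℂ :=
  fderiv ℝ f x (EuclideanSpace.single i 1)

lemma lap_eq (d : ℕ) (f : Ed d → ℂ) (x : Ed d) : lap d f x = ∑ i, pd d i (pd d i f) x := rfl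

lemma pd_contDiff {d : ℕ} {n m : WithTop ℕ∞} {f : Ed d → ℂ} (hf : ContDiff ℝ n f) (h : m + 1 ≤ n)
    (i : Fin d) : ContDiff ℝ m (pd d i f) :=
  (hf.fderiv_right h).clm_apply contDiff_const

lemma pd_mul {d : ℕ} {f g : Ed d → ℂ} (hf : Differentiable ℝ f) (hg : Differentiable ℝ g)
    (i : Fin d) : pd d i (fun x => f x * g x) = fun x => f x * pd d i g x + pd d i f x * g x := by
  funext x
  unfold pd
  rw [fderiv_fun_mul (hf x) (hg x)]
  simp [mul_comm]

lemma pd_add {d : ℕ} {f g : Ed d → ℂ} (hf : Differentiable ℝ f) (hg : Differentiable ℝ g)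
    (i : Fin d) : pd d i (fun x => f x + g x) = fun x => pd d i f x + pd d i g x := by
  funext x
  unfold pd
  rw [fderiv_fun_add (hf x) (hg x)]
  simp

lemma pd_const_mul {d : ℕ} {f : Ed d → ℂ} (c : ℂ) (hf : Differentiable ℝ f)
    (i : Fin d) : pd d i (fun x => c * f x) = fun x => c * pd d i f x := by
  funext x
  unfold pd
  rw [fderiv_const_mul (hf x)]
  simp

lemma lap_mul {d : ℕ} {f g : Ed d → ℂ} (hf : ContDiff ℝ 2 f) (hg : ContDiff ℝ 2 g) (x : Ed d) :
    lap d (fun x => f x * g x) x =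
      f x * lap d g x + 2 * ∑ i, pd d i f x * pd d i g x + lap d f x * g x := by
  simp only [lap_eq, Finset.mul_sum, Finset.sum_mul, ← Finset.sum_add_distrib]
  refine Finset.sum_congr rfl fun i _ => ?_
  have h1 := hf.differentiable two_ne_zero
  have h2 := hg.differentiable two_ne_zero
  have h3 := (pd_contDiff (m := 1) hf (by norm_num) i).differentiable one_ne_zero
  have h4 := (pd_contDiff (m := 1) hg (by norm_num) i).differentiable one_ne_zero
  rw [pd_mul h1 h2, pd_add (f := fun x => f x * pd d i g x) (g := fun x => pd d i f x * g x)
    (h1.mul h4) (h3.mul h2), pd_mul h1 h4, pd_mul h3 h2]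
  ring

lemma lap_const_mul {d : ℕ} {f : Ed d → ℂ} (c : ℂ) (hf : ContDiff ℝ 2 f) (x : Ed d) :
    lap d (fun x => c * f x) x = c * lap d f x := by
  simp only [lap_eq, Finset.mul_sum]
  refine Finset.sum_congr rfl fun i _ => ?_
  rw [pd_const_mul c (hf.differentiable two_ne_zero),
    pd_const_mul c ((pd_contDiff (m := 1) hf (by norm_num) i).differentiable one_ne_zero)]

lemma lap_continuous {d : ℕ} {f : Ed d → ℂ} (hf : ContDiff ℝ 2 f) : Continuous (lap d f) := by
  have : lap d f = fun x => ∑ i, pd d i (pd d i f) x := rfl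
  rw [this]
  exact continuous_finsetSum _ fun i _ =>
    (pd_contDiff (m := 0) (pd_contDiff (m := 1) hf (by norm_num) i) (by norm_num) i).continuous

lemma pd_conj {d : ℕ} {f : Ed d → ℂ} (i : Fin d) :
    pd d i (fun x => (starRingEnd ℂ) (f x)) = fun x => (starRingEnd ℂ) (pd d i f x) := by
  funext x
  unfold pd
  have := (Complex.conjCLE.comp_fderiv (f := f) (x := x))
  have h2 : (fun x => (starRingEnd ℂ) (f x)) = (Complex.conjCLE ∘ f) := by
    funext x; simp
  rw [h2, this]; simp

lemma contDiff_conj {d : ℕ} {n : WithTop ℕ∞} {f : Ed d → ℂ} (hf : ContDiff ℝ n f) :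
    ContDiff ℝ n (fun x => (starRingEnd ℂ) (f x)) :=
  Complex.conjCLE.contDiff.comp hf

lemma lap_conj {d : ℕ} {f : Ed d → ℂ} (x : Ed d) :
    lap d (fun x => (starRingEnd ℂ) (f x)) x = (starRingEnd ℂ) (lap d f x) := by
  simp only [lap_eq, map_sum]
  refine Finset.sum_congr rfl fun i _ => ?_
  rw [pd_conj, pd_conj]

lemma norm_pd_le {d : ℕ} {f : Ed d → ℂ} (i : Fin d) (x : Ed d) :
    ‖pd d i f x‖ ≤ ‖fderiv ℝ f x‖ := by
  refine ((fderiv ℝ f x).le_opNorm _).trans (by simp)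

lemma norm_lap_le {d : ℕ} {f : Ed d → ℂ} (hf : ContDiff ℝ 2 f) (x : Ed d) :
    ‖lap d f x‖ ≤ d * ‖iteratedFDeriv ℝ 2 f x‖ := by
  unfold lap
  refine (norm_sum_le _ _).trans ?_
  have : ∀ i ∈ (Finset.univ : Finset (Fin d)), ‖fderiv ℝ (fun y => fderiv ℝ f y (EuclideanSpace.single i 1)) x
      (EuclideanSpace.single i 1)‖ ≤ ‖iteratedFDeriv ℝ 2 f x‖ := by
    intro i _
    have h1 : DifferentiableAt ℝ (fderiv ℝ f) x :=
      (hf.fderiv_right (m := 1) (by norm_num)).differentiable one_ne_zero x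
    rw [fderiv_clm_apply h1 (by fun_prop)]
    have := (iteratedFDeriv ℝ 2 f x).le_opNorm ![EuclideanSpace.single i 1, EuclideanSpace.single i 1]
    simp only [iteratedFDeriv_two_apply] at this
    simpa [Fin.prod_univ_two] using this
  refine (Finset.sum_le_sum this).trans ?_
  simp

lemma hasCompactSupport_pd {d : ℕ} {f : Ed d → ℂ} (hf : HasCompactSupport f) (i : Fin d) :
    HasCompactSupport (pd d i f) :=
  hf.fderiv_apply (𝕜 := ℝ) (EuclideanSpace.single i 1)

/-- Green's identity against a compactly supported function. -/
lemma integral_mul_lap {d : ℕ} {u v : Ed d → ℂ} (hu : ContDiff ℝ 2 u) (hv : ContDiff ℝ 2 v)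
    (hs : HasCompactSupport u) :
    ∫ x, u x * lap d v x = ∫ x, lap d u x * v x := by
  have cu := hu.continuous
  have cv := hv.continuous
  have pu : ∀ i, ContDiff ℝ 1 (pd d i u) := fun i => pd_contDiff hu (by norm_num) i
  have pv : ∀ i, ContDiff ℝ 1 (pd d i v) := fun i => pd_contDiff hv (by norm_num) i
  have ppu : ∀ i, Continuous (pd d i (pd d i u)) := fun i =>
    (pd_contDiff (m := 0) (pu i) (by norm_num) i).continuous
  have ppv : ∀ i, Continuous (pd d i (pd d i v)) := fun i =>
    (pd_contDiff (m := 0) (pv i) (by norm_num) i).continuous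
  have I1 : ∀ f g : Ed d → ℂ, Continuous f → Continuous g → HasCompactSupport f →
      Integrable (fun x => f x * g x) := fun f g hf hg hfs =>
    (hf.mul hg).integrable_of_hasCompactSupport hfs.mul_right
  have key : ∀ i, ∫ x, u x * pd d i (pd d i v) x = ∫ x, pd d i (pd d i u) x * v x := by
    intro i
    have e1 : ∫ x, u x * pd d i (pd d i v) x = -∫ x, pd d i u x * pd d i v x :=
      integral_mul_fderiv_eq_neg_fderiv_mul_of_integrable
        (I1 _ _ (pu i).continuous (pv i).continuous (hasCompactSupport_pd hs i))
        (I1 _ _ cu (ppv i) hs) (I1 _ _ cu (pv i).continuous hs)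
        (fun x _ => hu.differentiable two_ne_zero x)
        (fun x _ => (pv i).differentiable one_ne_zero x)
    have e2 : ∫ x, pd d i u x * pd d i v x = -∫ x, pd d i (pd d i u) x * v x :=
      integral_mul_fderiv_eq_neg_fderiv_mul_of_integrable
        (I1 _ _ (ppu i) cv (hasCompactSupport_pd (hasCompactSupport_pd hs i) i))
        (I1 _ _ (pu i).continuous (pv i).continuous (hasCompactSupport_pd hs i))
        (I1 _ _ (pu i).continuous cv (hasCompactSupport_pd hs i))
        (fun x _ => (pu i).differentiable one_ne_zero x)
        (fun x _ => hv.differentiable two_ne_zero x)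
    rw [e1, e2, neg_neg]
  simp only [lap_eq, Finset.mul_sum, Finset.sum_mul]
  rw [integral_finsetSum, integral_finsetSum]
  · exact Finset.sum_congr rfl fun i _ => key i
  · exact fun i _ => I1 _ _ (ppu i) cv (hasCompactSupport_pd (hasCompactSupport_pd hs i) i)
  · exact fun i _ => I1 _ _ cu (ppv i) hs

lemma pd_comp_smul {d : ℕ} {f : Ed d → ℂ} (c : ℝ) (i : Fin d) :
    pd d i (fun x => f (c • x)) = fun x => (c : ℂ) * pd d i f (c • x) := by
  funext x
  unfold pd
  rw [fderiv_comp_smul]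
  simp

lemma lap_comp_smul {d : ℕ} {f : Ed d → ℂ} (hf : ContDiff ℝ 2 f) (c : ℝ) (x : Ed d) :
    lap d (fun x => f (c • x)) x = (c : ℂ) ^ 2 * lap d f (c • x) := by
  simp only [lap_eq, Finset.mul_sum]
  refine Finset.sum_congr rfl fun i _ => ?_
  have h := ((pd_contDiff (m := 1) hf (by norm_num) i).differentiable one_ne_zero)
  rw [pd_comp_smul, pd_const_mul (f := fun x => pd d i f (c • x)) _ (h.comp (by fun_prop : Differentiable ℝ fun x : Ed d => c • x)) i]
  rw [pd_comp_smul]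
  ring

/-- A sequence of smooth cutoffs equal to a rescaled bump, with derivatives of size `O(1/n)`. -/
lemma exists_cutoff (d : ℕ) : ∃ (χ : ℕ → Ed d → ℂ) (C : ℝ), 0 ≤ C ∧
    (∀ n, ContDiff ℝ 2 (χ n)) ∧ (∀ n, HasCompactSupport (χ n)) ∧
    (∀ n x, ‖χ n x‖ ≤ 1) ∧ (∀ n x, (starRingEnd ℂ) (χ n x) = χ n x) ∧
    (∀ x, Tendsto (fun n => χ n x) atTop (nhds 1)) ∧
    (∀ n x i, ‖pd d i (χ n) x‖ ≤ C / (n + 1)) ∧ (∀ n x, ‖lap d (χ n) x‖ ≤ C / (n + 1)) := by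
  let f : ContDiffBump (0 : Ed d) := ⟨1, 2, one_pos, one_lt_two⟩
  let F : Ed d → ℂ := fun x => (f x : ℂ)
  have hF : ContDiff ℝ 2 F := Complex.ofRealCLM.contDiff.comp f.contDiff
  have hFs : HasCompactSupport F := f.hasCompactSupport.comp_left (g := fun x : ℝ => (x : ℂ)) (by simp)
  have hb1 : ∀ i, ∃ C, ∀ x, ‖pd d i F x‖ ≤ C := fun i =>
    (hasCompactSupport_pd hFs i).exists_bound_of_continuous
      (pd_contDiff (m := 1) hF (by norm_num) i).continuous
  choose C1 hC1 using hb1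
  have hls : HasCompactSupport (lap d F) := by
    have : lap d F = ∑ i, pd d i (pd d i F) := by funext x; rw [lap_eq]; simp
    rw [this]
    exact HasCompactSupport.finset_sum fun i _ => hasCompactSupport_pd (hasCompactSupport_pd hFs i) i
  obtain ⟨C2, hC2⟩ := hls.exists_bound_of_continuous (lap_continuous hF)
  have hC10 : ∀ i, 0 ≤ C1 i := fun i => (norm_nonneg _).trans (hC1 i 0)
  have hC20 : 0 ≤ C2 := (norm_nonneg _).trans (hC2 0)
  have hs0 : 0 ≤ ∑ i, C1 i := Finset.sum_nonneg fun i _ => hC10 i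
  let c : ℕ → ℝ := fun n => 1 / ((n : ℝ) + 1)
  have hcpos : ∀ n, 0 < c n := fun n => by positivity
  have hc1 : ∀ n, c n ≤ 1 := fun n => by
    simp only [c]; rw [div_le_one (by positivity)]; linarith [(Nat.cast_nonneg n : (0:ℝ) ≤ n)]
  refine ⟨fun n x => F (c n • x), (∑ i, C1 i) + C2, by positivity, ?_, ?_, ?_, ?_, ?_, ?_, ?_⟩
  · exact fun n => hF.comp (contDiff_const_smul _)
  · exact fun n => hFs.comp_smul (hcpos n).ne'
  · intro n x
    simp only [F, Complex.norm_real, Real.norm_eq_abs]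
    rw [abs_of_nonneg f.nonneg]; exact f.le_one
  · intro n x; simp [F]
  · intro x
    have : Tendsto (fun n => c n • x) atTop (nhds ((0:ℝ) • x)) :=
      (tendsto_one_div_add_atTop_nhds_zero_nat).smul_const x
    have h2 := (hF.continuous.tendsto _).comp this
    have h3 : F ((0:ℝ) • x) = 1 := by
      simp only [F, zero_smul]
      rw [f.one_of_mem_closedBall (by simp [f])]; simp
    rw [h3] at h2; exact h2
  · intro n x i
    rw [pd_comp_smul]
    simp only [norm_mul, Complex.norm_real, Real.norm_eq_abs, abs_of_pos (hcpos n)]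
    calc c n * ‖pd d i F (c n • x)‖ ≤ c n * ((∑ i, C1 i) + C2) := by
          refine mul_le_mul_of_nonneg_left ?_ (hcpos n).le
          · refine (hC1 i _).trans ?_
            have := Finset.single_le_sum (fun i _ => hC10 i) (Finset.mem_univ i)
            linarith
      _ = _ := by simp only [c]; ring
  · intro n x
    rw [lap_comp_smul hF]
    simp only [norm_mul, norm_pow, Complex.norm_real, Real.norm_eq_abs, abs_of_pos (hcpos n)]
    calc c n ^ 2 * ‖lap d F (c n • x)‖ ≤ c n * ((∑ i, C1 i) + C2) := by
          refine mul_le_mul ?_ ?_ (norm_nonneg _) (hcpos n).le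
          · nlinarith [hc1 n, hcpos n]
          · refine (hC2 _).trans ?_
            linarith
      _ = _ := by simp only [c]; ring

/-! ### The variation of the overlap of two Schrödinger solutions -/

/-- `p` is a regular time-dependent function on `[a,b]` with time derivative `D`: continuous, `C²` in
space, `C¹` in time, with `D` measurable and locally integrable in space uniformly in time. -/
structure Good {d : ℕ} (a b : ℝ) (p D : ℝ → Ed d → ℂ) : Prop where
  cont : ContinuousOn (fun z : ℝ × Ed d => p z.1 z.2) (Icc a b ×ˢ univ)
  smooth : ∀ t ∈ Icc a b, ContDiff ℝ 2 (p t)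
  hderiv : ∀ x, ∀ t ∈ Ioo a b, HasDerivAt (fun s => p s x) (D t x) t
  dcont : ∀ x, ContinuousOn (fun t => D t x) (Icc a b)
  meas : AEStronglyMeasurable (fun z : ℝ × Ed d => D z.1 z.2)
    ((volume.restrict (Icc a b)).prod volume)
  loc : ∀ R : ℝ, ∃ C : ℝ≥0∞, C ≠ ⊤ ∧ ∀ t ∈ Icc a b, ∫⁻ x in Metric.closedBall 0 R, ‖D t x‖ₑ ≤ C

/-- `f ∈ L²` with `‖f‖² ≤ K`. -/
def L2le {d : ℕ} {F : Type*} [NormedAddCommGroup F] (f : Ed d → F) (K : ℝ) : Prop :=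
  MemLp f 2 volume ∧ ∫ x, ‖f x‖ ^ 2 ≤ K

lemma L2le.int {d : ℕ} {F : Type*} [NormedAddCommGroup F] {f : Ed d → F} {K : ℝ}
    (h : L2le f K) : Integrable (fun x => ‖f x‖ ^ 2) := h.1.integrable_norm_pow two_ne_zero

/-- Integrand of the time derivative of `Re ∫ p q̄`. -/
def Hdot {d : ℕ} (p q Dp Dq : ℝ → Ed d → ℂ) (t : ℝ) (x : Ed d) : ℝ :=
  (Dp t x * (starRingEnd ℂ) (q t x) + p t x * (starRingEnd ℂ) (Dq t x)).re

/-- Contribution of the Laplacian to the time derivative of `Re ∫ p q̄`. -/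
def Ldot {d : ℕ} (ε : ℝ) (p q : Ed d → ℂ) (x : Ed d) : ℝ :=
  (I * ε / 2 * (lap d p x * (starRingEnd ℂ) (q x) - p x * (starRingEnd ℂ) (lap d q x))).re

lemma Good.bound {d : ℕ} {a b : ℝ} {p D : ℝ → Ed d → ℂ} (h : Good a b p D) (R : ℝ) :
    ∃ M : ℝ, 0 ≤ M ∧ ∀ t ∈ Icc a b, ∀ x ∈ Metric.closedBall (0 : Ed d) R, ‖p t x‖ ≤ M := by
  have hc : IsCompact (Icc a b ×ˢ Metric.closedBall (0 : Ed d) R) :=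
    isCompact_Icc.prod (isCompact_closedBall _ _)
  obtain ⟨M, hM⟩ := hc.exists_bound_of_continuousOn (h.cont.mono (prod_mono_right (subset_univ _)))
  exact ⟨max M 0, le_max_right _ _, fun t ht x hx => (hM (t, x) ⟨ht, hx⟩).trans (le_max_left _ _)⟩

lemma Good.aesm {d : ℕ} {a b : ℝ} {p D : ℝ → Ed d → ℂ} (h : Good a b p D) :
    AEStronglyMeasurable (fun z : ℝ × Ed d => p z.1 z.2)
      ((volume.restrict (Icc a b)).prod volume) := by
  have := h.cont.aestronglyMeasurable (μ := (volume : Measure ℝ).prod (volume : Measure (Ed d)))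
    (measurableSet_Icc.prod MeasurableSet.univ)
  rwa [← Measure.prod_restrict, Measure.restrict_univ] at this

lemma Hdot_aesm {d : ℕ} {a b : ℝ} {p q Dp Dq : ℝ → Ed d → ℂ} (hp : Good a b p Dp)
    (hq : Good a b q Dq) : AEStronglyMeasurable (fun z : ℝ × Ed d => Hdot p q Dp Dq z.1 z.2)
      ((volume.restrict (Icc a b)).prod volume) := by
  unfold Hdot
  have c : Continuous (starRingEnd ℂ) := Complex.continuous_conj
  exact Complex.continuous_re.comp_aestronglyMeasurable
    ((hp.meas.mul (c.comp_aestronglyMeasurable hq.aesm)).add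
      (hp.aesm.mul (c.comp_aestronglyMeasurable hq.meas)))

/-- Integrability in space-time after a cutoff, as needed for Fubini. -/
lemma Hdot_integrable {d : ℕ} {a b : ℝ} {p q Dp Dq : ℝ → Ed d → ℂ} (hp : Good a b p Dp)
    (hq : Good a b q Dq) {χ : Ed d → ℂ} (hχ : Continuous χ) (hs : HasCompactSupport χ)
    (h1 : ∀ x, ‖χ x‖ ≤ 1) :
    Integrable (fun z : ℝ × Ed d => (χ z.2).re * Hdot p q Dp Dq z.1 z.2)
      ((volume.restrict (Icc a b)).prod volume) := by
  obtain ⟨R, hR⟩ : ∃ R : ℝ, tsupport χ ⊆ Metric.closedBall 0 R :=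
    hs.isCompact.isBounded.subset_closedBall 0
  obtain ⟨M, hM0, hM⟩ := hp.bound R
  obtain ⟨M', hM0', hM'⟩ := hq.bound R
  obtain ⟨C, hC, hC'⟩ := hp.loc R
  obtain ⟨C2, hC2, hC2'⟩ := hq.loc R
  have hm : AEStronglyMeasurable (fun z : ℝ × Ed d => (χ z.2).re * Hdot p q Dp Dq z.1 z.2)
      ((volume.restrict (Icc a b)).prod volume) :=
    (Complex.continuous_re.comp (hχ.comp continuous_snd)).aestronglyMeasurable.mul (Hdot_aesm hp hq)
  refine ⟨hm, ?_⟩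
  unfold HasFiniteIntegral
  rw [lintegral_prod _ hm.enorm]
  have hsec : ∀ᵐ t ∂(volume.restrict (Icc a b)), ∫⁻ x, ‖(χ x).re * Hdot p q Dp Dq t x‖ₑ ≤
      ENNReal.ofReal M' * C + ENNReal.ofReal M * C2 := by
    filter_upwards [ae_restrict_mem measurableSet_Icc, hp.meas.prodMk_left, hq.meas.prodMk_left]
      with t ht m1 m2
    have hle : ∀ x, ‖(χ x).re * Hdot p q Dp Dq t x‖ₑ ≤ (Metric.closedBall (0 : Ed d) R).indicator
        (fun x => ENNReal.ofReal M' * ‖Dp t x‖ₑ + ENNReal.ofReal M * ‖Dq t x‖ₑ) x := by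
      intro x
      by_cases hx : x ∈ Metric.closedBall (0 : Ed d) R
      · rw [indicator_of_mem hx]
        have e : ENNReal.ofReal M' * ‖Dp t x‖ₑ + ENNReal.ofReal M * ‖Dq t x‖ₑ =
            ENNReal.ofReal (M' * ‖Dp t x‖ + M * ‖Dq t x‖) := by
          rw [ENNReal.ofReal_add (by positivity) (by positivity), ENNReal.ofReal_mul hM0',
            ENNReal.ofReal_mul hM0, ofReal_norm, ofReal_norm]
        rw [e, ← ofReal_norm]
        apply ENNReal.ofReal_le_ofReal
        rw [norm_mul]
        have a1 : ‖(χ x).re‖ ≤ 1 := (Complex.abs_re_le_norm _).trans (h1 x)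
        have a2 : ‖Hdot p q Dp Dq t x‖ ≤ M' * ‖Dp t x‖ + M * ‖Dq t x‖ := by
          refine (Complex.abs_re_le_norm _).trans ((norm_add_le _ _).trans ?_)
          rw [norm_mul, norm_mul, RCLike.norm_conj, RCLike.norm_conj]
          nlinarith [hM t ht x hx, hM' t ht x hx, norm_nonneg (Dp t x), norm_nonneg (Dq t x)]
        calc _ ≤ 1 * (M' * ‖Dp t x‖ + M * ‖Dq t x‖) := by gcongr
          _ = _ := one_mul _
      · rw [indicator_of_notMem hx]
        have : χ x = 0 := image_eq_zero_of_notMem_tsupport fun h => hx (hR h)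
        simp [this]
    refine (lintegral_mono hle).trans ?_
    rw [lintegral_indicator Metric.isClosed_closedBall.measurableSet]
    rw [lintegral_add_left' (m1.enorm.restrict.const_mul _),
      lintegral_const_mul'' _ m1.enorm.restrict, lintegral_const_mul'' _ m2.enorm.restrict]
    gcongr
    · exact hC' t ht
    · exact hC2' t ht
  refine (lintegral_mono_ae hsec).trans_lt ?_
  rw [lintegral_const]
  refine ENNReal.mul_lt_top ?_ (by simp)
  exact ENNReal.add_lt_top.2 ⟨ENNReal.mul_lt_top ENNReal.ofReal_lt_top hC.lt_top,
    ENNReal.mul_lt_top ENNReal.ofReal_lt_top hC2.lt_top⟩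

/-- Green's identity moves both derivatives from `q` onto `χ p`. What is left once the terms in
`Δp` cancel is the commutator of the Laplacian with the cutoff `χ`. -/
lemma Ldot_integral {d : ℕ} (ε : ℝ) {p q χ : Ed d → ℂ} (hp : ContDiff ℝ 2 p) (hq : ContDiff ℝ 2 q)
    (hχ : ContDiff ℝ 2 χ) (hs : HasCompactSupport χ) (hr : ∀ x, (starRingEnd ℂ) (χ x) = χ x) :
    Integrable (fun x => (χ x).re * Ldot ε p q x) ∧
    ∫ x, (χ x).re * Ldot ε p q x = -(I * ε / 2 *
      ∫ x, (2 * ∑ i, pd d i χ x * pd d i p x + lap d χ x * p x) * (starRingEnd ℂ) (q x)).re := by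
  have cq : Continuous fun x => (starRingEnd ℂ) (q x) := Complex.continuous_conj.comp hq.continuous
  have clq : Continuous fun x => (starRingEnd ℂ) (lap d q x) :=
    Complex.continuous_conj.comp (lap_continuous hq)
  have i1 : Integrable fun x => χ x * (lap d p x * (starRingEnd ℂ) (q x)) :=
    (hχ.continuous.mul ((lap_continuous hp).mul cq)).integrable_of_hasCompactSupport hs.mul_right
  have i2 : Integrable fun x => χ x * (p x * (starRingEnd ℂ) (lap d q x)) :=
    (hχ.continuous.mul (hp.continuous.mul clq)).integrable_of_hasCompactSupport hs.mul_right
  have hpt : ∀ x, (χ x).re * Ldot ε p q x = (I * ε / 2 * (χ x * (lap d p x * (starRingEnd ℂ) (q x)) -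
      χ x * (p x * (starRingEnd ℂ) (lap d q x)))).re := by
    intro x
    have : χ x = ((χ x).re : ℂ) := (Complex.conj_eq_iff_re.1 (hr x)).symm
    unfold Ldot
    rw [← Complex.re_ofReal_mul, ← this]
    congr 1; ring
  have hi : Integrable fun x => I * ε / 2 * (χ x * (lap d p x * (starRingEnd ℂ) (q x)) -
      χ x * (p x * (starRingEnd ℂ) (lap d q x))) := (i1.sub i2).const_mul _
  simp only [hpt]
  refine ⟨hi.re, ?_⟩
  have e0 := integral_re hi
  simp only [RCLike.re_to_complex] at e0
  rw [e0, integral_const_mul, integral_sub i1 i2]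
  have e1 : ∫ x, χ x * (p x * (starRingEnd ℂ) (lap d q x)) =
      ∫ x, lap d (fun y => χ y * p y) x * (starRingEnd ℂ) (q x) := by
    rw [← integral_mul_lap (hχ.mul hp) (contDiff_conj hq) hs.mul_right]
    refine integral_congr_ae (ae_of_all _ fun x => ?_)
    simp only [lap_conj]; ring
  rw [e1, ← integral_sub i1, ← integral_const_mul, ← integral_const_mul, ← Complex.neg_re,
    ← integral_neg]
  · congr 2
    funext x
    rw [lap_mul hχ hp]; ring
  · have : ContDiff ℝ 2 fun y => χ y * p y := hχ.mul hp
    refine ((lap_continuous this).mul cq).integrable_of_hasCompactSupport ?_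
    refine HasCompactSupport.mul_right ?_
    have e : lap d (fun y => χ y * p y) = ∑ i, pd d i (pd d i (fun y => χ y * p y)) := by
      funext x; rw [lap_eq]; simp
    rw [e]
    exact HasCompactSupport.finset_sum fun i _ =>
      hasCompactSupport_pd (hasCompactSupport_pd hs.mul_right i) i

/-- If the derivatives of the cutoff are at most `δ`, the contribution of the Laplacian is `O(δ)`. No
bound on the derivatives of `q` is needed. -/
lemma Ldot_bound {d : ℕ} {ε K C δ : ℝ} (hε : 0 ≤ ε) {p q χ : Ed d → ℂ} (hp : ContDiff ℝ 2 p)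
    (hq : ContDiff ℝ 2 q) (hχ : ContDiff ℝ 2 χ) (hs : HasCompactSupport χ)
    (hr : ∀ x, (starRingEnd ℂ) (χ x) = χ x) (hδ : 0 ≤ δ)
    (h1 : ∀ x i, ‖pd d i χ x‖ ≤ δ) (h2 : ∀ x, ‖lap d χ x‖ ≤ δ)
    (kp : L2le p K) (kdp : L2le (fun x => fderiv ℝ p x) K) (kq : L2le q C) :
    |∫ x, (χ x).re * Ldot ε p q x| ≤ ε * δ * (d + 1) * (2 * K + C) := by
  rw [(Ldot_integral ε hp hq hχ hs hr).2, abs_neg]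
  refine (Complex.abs_re_le_norm _).trans ?_
  rw [norm_mul]
  have n1 : ‖I * ε / 2‖ ≤ ε := by
    simp [abs_of_nonneg hε]; linarith
  have key : ‖∫ x, (2 * ∑ i, pd d i χ x * pd d i p x + lap d χ x * p x) * (starRingEnd ℂ) (q x)‖ ≤
      ∫ x, δ * (d + 1) * (‖fderiv ℝ p x‖ ^ 2 + ‖p x‖ ^ 2 + ‖q x‖ ^ 2) := by
    refine norm_integral_le_of_norm_le (((kdp.int.add kp.int).add kq.int).const_mul _)
      (ae_of_all _ fun x => ?_)
    rw [norm_mul, RCLike.norm_conj]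
    have a1 : ‖∑ i, pd d i χ x * pd d i p x‖ ≤ d * (δ * ‖fderiv ℝ p x‖) := by
      refine (norm_sum_le _ _).trans ?_
      refine (Finset.sum_le_sum (g := fun _ => δ * ‖fderiv ℝ p x‖) fun i _ => ?_).trans (by simp)
      rw [norm_mul]
      exact mul_le_mul (h1 x i) (norm_pd_le i x) (norm_nonneg _) hδ
    have a2 : ‖2 * ∑ i, pd d i χ x * pd d i p x + lap d χ x * p x‖ ≤
        δ * (2 * d * ‖fderiv ℝ p x‖ + ‖p x‖) := by
      refine (norm_add_le _ _).trans ?_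
      rw [norm_mul, norm_mul]
      have := mul_le_mul_of_nonneg_right (h2 x) (norm_nonneg (p x))
      simp only [Complex.norm_ofNat]
      linarith
    refine (mul_le_mul_of_nonneg_right a2 (norm_nonneg _)).trans ?_
    have b1 := sq_nonneg (‖fderiv ℝ p x‖ - ‖q x‖)
    have b2 := sq_nonneg (‖p x‖ - ‖q x‖)
    have hd : (0:ℝ) ≤ d := Nat.cast_nonneg d
    have b3 := mul_nonneg hd b1
    have b4 := mul_nonneg hd (sq_nonneg ‖p x‖)
    have : (2 * d * ‖fderiv ℝ p x‖ + ‖p x‖) * ‖q x‖ ≤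
      (d + 1) * (‖fderiv ℝ p x‖ ^ 2 + ‖p x‖ ^ 2 + ‖q x‖ ^ 2) := by
      nlinarith [sq_nonneg ‖p x‖, sq_nonneg ‖q x‖, sq_nonneg ‖fderiv ℝ p x‖]
    calc _ = δ * ((2 * d * ‖fderiv ℝ p x‖ + ‖p x‖) * ‖q x‖) := by ring
      _ ≤ δ * ((d + 1) * (‖fderiv ℝ p x‖ ^ 2 + ‖p x‖ ^ 2 + ‖q x‖ ^ 2)) := by gcongr
      _ = _ := by ring
  have e2 : ∫ x, δ * (d + 1) * (‖fderiv ℝ p x‖ ^ 2 + ‖p x‖ ^ 2 + ‖q x‖ ^ 2) ≤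
      δ * (d + 1) * (2 * K + C) := by
    have s1 : ∫ x, (‖fderiv ℝ p x‖ ^ 2 + ‖p x‖ ^ 2 + ‖q x‖ ^ 2) =
        (∫ x, ‖fderiv ℝ p x‖ ^ 2) + (∫ x, ‖p x‖ ^ 2) + ∫ x, ‖q x‖ ^ 2 := by
      have h12 : Integrable fun x => ‖fderiv ℝ p x‖ ^ 2 + ‖p x‖ ^ 2 := kdp.int.add kp.int
      rw [← integral_add kdp.int kp.int, ← integral_add h12 kq.int]
    rw [integral_const_mul, s1]
    have := kdp.2; have := kp.2; have := kq.2
    gcongr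
    linarith
  calc _ ≤ ε * (δ * (d + 1) * (2 * K + C)) := mul_le_mul n1 (key.trans e2) (norm_nonneg _) hε
    _ = _ := by ring

lemma integrable_mul_conj {d : ℕ} {p q : Ed d → ℂ} (hp : MemLp p 2 volume) (hq : MemLp q 2 volume) :
    Integrable fun x => (p x * (starRingEnd ℂ) (q x)).re := by
  have hq' : MemLp (fun x => (starRingEnd ℂ) (q x)) 2 volume :=
    hq.of_le (Complex.continuous_conj.comp_aestronglyMeasurable hq.1) (ae_of_all _ fun x => by simp)
  exact (hp.integrable_mul hq').re

/-- The variation of `Re ⟨p, q⟩` along two solutions of Schrödinger equations with sources is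
controlled by the `L¹` norm of the source terms. Only `p` needs to be bounded in `H¹`: after a
spatial cutoff, both derivatives of the Laplacian acting on `q` are moved onto `p`. -/
lemma energy {d : ℕ} {ε a b K C : ℝ} (hε : 0 ≤ ε) (hab : a ≤ b) {p q Dp Dq : ℝ → Ed d → ℂ}
    {β : ℝ → ℝ} (hp : Good a b p Dp) (hq : Good a b q Dq)
    (kp : ∀ t ∈ Icc a b, L2le (p t) K) (kdp : ∀ t ∈ Icc a b, L2le (fun x => fderiv ℝ (p t) x) K)
    (kq : ∀ᵐ t ∂(volume.restrict (Icc a b)), L2le (q t) C)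
    (ha : MemLp (q a) 2 volume) (hb : MemLp (q b) 2 volume)
    (hβ : IntervalIntegrable β volume a b)
    (hβ0 : ∀ t, 0 ≤ β t)
    (hE : ∀ᵐ t ∂(volume.restrict (Icc a b)),
      ∫⁻ x, ‖Hdot p q Dp Dq t x - Ldot ε (p t) (q t) x‖ₑ ≤ ENNReal.ofReal (β t)) :
    |(∫ x, (p b x * (starRingEnd ℂ) (q b x)).re) - ∫ x, (p a x * (starRingEnd ℂ) (q a x)).re| ≤
      ∫ t in a..b, β t := by
  obtain ⟨χ, C0, hC0, χs, χc, χ1, χr, χlim, χd, χl⟩ := exists_cutoff d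
  have ea : a ∈ Icc a b := ⟨le_rfl, hab⟩
  have eb : b ∈ Icc a b := ⟨hab, le_rfl⟩
  have lim : ∀ t ∈ Icc a b, MemLp (q t) 2 volume →
      Tendsto (fun n => ∫ x, (χ n x).re * (p t x * (starRingEnd ℂ) (q t x)).re) atTop
        (nhds (∫ x, (p t x * (starRingEnd ℂ) (q t x)).re)) := by
    intro t ht hqt
    have hi := integrable_mul_conj (kp t ht).1 hqt
    refine tendsto_integral_of_dominated_convergence
      (fun x => ‖(p t x * (starRingEnd ℂ) (q t x)).re‖) ?_ hi.norm ?_ ?_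
    · intro n
      exact (Complex.continuous_re.comp (χs n).continuous).aestronglyMeasurable.mul hi.1
    · intro n
      refine ae_of_all _ fun x => ?_
      rw [norm_mul]
      have a1 : ‖(χ n x).re‖ ≤ 1 := (Complex.abs_re_le_norm _).trans (χ1 n x)
      nlinarith [norm_nonneg (p t x * (starRingEnd ℂ) (q t x)).re]
    · refine ae_of_all _ fun x => ?_
      have := ((Complex.continuous_re.tendsto _).comp (χlim x)).mul_const
        ((p t x * (starRingEnd ℂ) (q t x)).re)
      simpa using this
  have lim2 := ((lim b eb hb).sub (lim a ea ha)).abs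
  have lim3 : Tendsto (fun n : ℕ => (∫ t in a..b, β t) +
      (b - a) * (ε * (C0 / (n + 1)) * (d + 1) * (2 * K + C))) atTop (nhds (∫ t in a..b, β t)) := by
    have h0 := (tendsto_one_div_add_atTop_nhds_zero_nat (𝕜 := ℝ)).const_mul
      ((b - a) * (ε * C0 * (d + 1) * (2 * K + C)))
    have := h0.const_add (∫ t in a..b, β t)
    simp only [mul_zero, add_zero] at this
    refine this.congr fun n => ?_
    ring
  -- It suffices to bound the variation of the overlap cut off by `χ n`, with an error `O(1 / n)`.
  refine le_of_tendsto_of_tendsto' lim2 lim3 fun n => ?_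
  have hG := Hdot_integrable hp hq (χs n).continuous (χc n) (χ1 n)
  have ftc : ∀ x, ∫ t in Icc a b, (χ n x).re * Hdot p q Dp Dq t x =
      (χ n x).re * (p b x * (starRingEnd ℂ) (q b x)).re -
        (χ n x).re * (p a x * (starRingEnd ℂ) (q a x)).re := by
    intro x
    have cp : ContinuousOn (fun t => p t x) (Icc a b) :=
      hp.cont.comp (f := fun t => (t, x)) (by fun_prop) fun t ht => ⟨ht, mem_univ _⟩
    have cq : ContinuousOn (fun t => q t x) (Icc a b) :=
      hq.cont.comp (f := fun t => (t, x)) (by fun_prop) fun t ht => ⟨ht, mem_univ _⟩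
    have cc : Continuous (starRingEnd ℂ) := Complex.continuous_conj
    have cH : ContinuousOn (fun t => Hdot p q Dp Dq t x) (Icc a b) :=
      Complex.continuous_re.comp_continuousOn (((hp.dcont x).mul (cc.comp_continuousOn cq)).add
        (cp.mul (cc.comp_continuousOn (hq.dcont x))))
    rw [integral_const_mul, integral_Icc_eq_integral_Ioc, ← intervalIntegral.integral_of_le hab,
      intervalIntegral.integral_eq_sub_of_hasDerivAt_of_le hab
        (f := fun t => (p t x * (starRingEnd ℂ) (q t x)).re)]
    · ring
    · exact Complex.continuous_re.comp_continuousOn (cp.mul (cc.comp_continuousOn cq))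
    · intro t ht
      have h1 := hp.hderiv x t ht
      have h2 := hq.hderiv x t ht
      have h3 : HasDerivAt (fun s => (starRingEnd ℂ) (q s x)) ((starRingEnd ℂ) (Dq t x)) t := by
        have := (Complex.conjCLE.toContinuousLinearMap.hasFDerivAt (x := q t x)).comp_hasDerivAt t h2
        simpa [Function.comp_def] using this
      exact (Complex.reCLM.hasFDerivAt.comp_hasDerivAt t (h1.mul h3))
    · exact (cH.mono (by rw [uIcc_of_le hab])).intervalIntegrable
  -- Fubini: the fundamental theorem of calculus is available pointwise in `x`, the bound on the
  -- source pointwise in `t`.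
  have e1 : (∫ x, (χ n x).re * (p b x * (starRingEnd ℂ) (q b x)).re) -
      ∫ x, (χ n x).re * (p a x * (starRingEnd ℂ) (q a x)).re =
      ∫ t in Icc a b, ∫ x, (χ n x).re * Hdot p q Dp Dq t x := by
    rw [integral_integral_swap hG]
    simp only [ftc]
    rw [integral_sub]
    · have hi := integrable_mul_conj (kp b eb).1 hb
      refine hi.bdd_mul (c := 1) (Complex.continuous_re.comp (χs n).continuous).aestronglyMeasurable
        (ae_of_all _ fun x => (Complex.abs_re_le_norm _).trans (χ1 n x))
    · have hi := integrable_mul_conj (kp a ea).1 ha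
      refine hi.bdd_mul (c := 1) (Complex.continuous_re.comp (χs n).continuous).aestronglyMeasurable
        (ae_of_all _ fun x => (Complex.abs_re_le_norm _).trans (χ1 n x))
  rw [e1]
  set δ := C0 / ((n:ℝ) + 1) with hδ
  have hδ0 : 0 ≤ δ := by positivity
  have hβI : IntegrableOn β (Icc a b) := by
    rw [integrableOn_Icc_iff_integrableOn_Ioc]
    exact (intervalIntegrable_iff_integrableOn_Ioc_of_le hab).1 hβ
  have bnd : ∀ᵐ t ∂(volume.restrict (Icc a b)), ‖∫ x, (χ n x).re * Hdot p q Dp Dq t x‖ ≤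
      β t + ε * δ * (d + 1) * (2 * K + C) := by
    filter_upwards [ae_restrict_mem measurableSet_Icc, kq, hE, hG.prod_right_ae] with t ht kqt hEt hGt
    obtain ⟨iL, -⟩ := Ldot_integral ε (hp.smooth t ht) (hq.smooth t ht) (χs n) (χc n) (χr n)
    have bL := Ldot_bound hε (hp.smooth t ht) (hq.smooth t ht) (χs n) (χc n) (χr n) hδ0
      (χd n) (χl n) (kp t ht) (kdp t ht) kqt
    have e : ∫ x, (χ n x).re * Hdot p q Dp Dq t x =
        (∫ x, ((χ n x).re * Hdot p q Dp Dq t x - (χ n x).re * Ldot ε (p t) (q t) x)) +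
        ∫ x, (χ n x).re * Ldot ε (p t) (q t) x := by
      rw [integral_sub hGt iL]; ring
    rw [e]
    refine (norm_add_le _ _).trans (add_le_add ?_ bL)
    have : ENNReal.ofReal ‖∫ x, ((χ n x).re * Hdot p q Dp Dq t x -
        (χ n x).re * Ldot ε (p t) (q t) x)‖ ≤ ENNReal.ofReal (β t) := by
      rw [ofReal_norm]
      refine (enorm_integral_le_lintegral_enorm _).trans ((lintegral_mono fun x => ?_).trans hEt)
      rw [← mul_sub, enorm_mul]
      have a1 : ‖(χ n x).re‖ₑ ≤ 1 := by
        rw [← ofReal_norm]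
        exact ENNReal.ofReal_le_one.2 ((Complex.abs_re_le_norm _).trans (χ1 n x))
      exact mul_le_of_le_one_left zero_le a1
    exact (ENNReal.ofReal_le_ofReal_iff (hβ0 t)).1 this
  have fin := norm_integral_le_of_norm_le (hβI.add (integrable_const _)) bnd
  refine fin.trans (le_of_eq ?_)
  simp only [Pi.add_apply]
  rw [integral_add hβI (integrable_const _), integral_const, intervalIntegral.integral_of_le hab,
    integral_Icc_eq_integral_Ioc]
  simp [hab]

/-! ### The Hartree kernel: pointwise, scaling and trilinear bounds -/

/-- The Hartree potential `|·|^{-γ} ∗ |q|²`. -/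
def VK {d : ℕ} (γ : ℝ) (q : Ed d → ℂ) (x : Ed d) : ℝ := ∫ y : Ed d, ‖x - y‖ ^ (-γ) * ‖q y‖ ^ 2

lemma kernel_integrableOn {d : ℕ} (hd : 1 ≤ d) {p : ℝ} (hp : p < d) :
    IntegrableOn (fun z : Ed d => ‖z‖ ^ (-p)) (Metric.ball 0 1) := by
  have : Nonempty (Fin d) := ⟨⟨0, hd⟩⟩
  have : Nontrivial (Ed d) := inferInstance
  rw [integrableOn_fun_norm_addHaar (volume : Measure (Ed d)) (f := fun r : ℝ => r ^ (-p))]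
  have : IntegrableOn (fun y : ℝ => y ^ ((d:ℝ) - 1 - p)) (Ioo 0 1) :=
    (intervalIntegral.integrableOn_Ioo_rpow_iff one_pos).2 (by linarith)
  refine this.congr_fun (fun y hy => ?_) measurableSet_Ioo
  have hy0 : 0 < y := hy.1
  simp only [finrank_euclideanSpace, Fintype.card_fin, smul_eq_mul]
  rw [← Real.rpow_natCast y (d - 1), ← Real.rpow_add hy0]
  congr 1
  push_cast [Nat.cast_sub hd]; ring

/-- The mass `∫_{|z| < 1} |z|^{-p} dz` of the singular part of the kernel. -/
def kap (d : ℕ) (p : ℝ) : ℝ := ∫ z in Metric.ball (0 : Ed d) 1, ‖z‖ ^ (-p)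

lemma kap_nonneg (d : ℕ) (p : ℝ) : 0 ≤ kap d p :=
  integral_nonneg fun z => Real.rpow_nonneg (norm_nonneg z) _

/-- Split at `|x - y| = 1`: the singular part sees the local supremum `A`, the rest is at most the
mass `K`. -/
lemma kernel_bound {d : ℕ} (hd : 1 ≤ d) {p A K : ℝ} (hp0 : 0 ≤ p) (hp : p < d) {q : Ed d → ℂ}
    (hq : L2le q K) (x : Ed d) (hA : ∀ y ∈ Metric.ball x 1, ‖q y‖ ≤ A) :
    Integrable (fun y => ‖x - y‖ ^ (-p) * ‖q y‖ ^ 2) ∧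
      ∫ y, ‖x - y‖ ^ (-p) * ‖q y‖ ^ 2 ≤ A ^ 2 * kap d p + K := by
  let g : Ed d → ℝ := (Metric.ball (0 : Ed d) 1).indicator (fun z => ‖z‖ ^ (-p))
  have hg : Integrable g := (kernel_integrableOn hd hp).integrable_indicator measurableSet_ball
  have hgx : Integrable fun y => g (x - y) := hg.comp_sub_left x
  have hb : Integrable fun y => A ^ 2 * g (x - y) + ‖q y‖ ^ 2 := (hgx.const_mul _).add hq.int
  have hm : AEStronglyMeasurable (fun y => ‖x - y‖ ^ (-p) * ‖q y‖ ^ 2) volume := by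
    refine AEStronglyMeasurable.mul ?_ hq.int.1
    exact Measurable.aestronglyMeasurable (by fun_prop)
  have hle : ∀ y, ‖x - y‖ ^ (-p) * ‖q y‖ ^ 2 ≤ A ^ 2 * g (x - y) + ‖q y‖ ^ 2 := by
    intro y
    by_cases hy : y ∈ Metric.ball x 1
    · have hy' : x - y ∈ Metric.ball (0 : Ed d) 1 := by
        rw [mem_ball_zero_iff, ← dist_eq_norm, dist_comm]; exact hy
      simp only [g, indicator_of_mem hy']
      have h1 := hA y hy
      have h2 : ‖q y‖ ^ 2 ≤ A ^ 2 := by gcongr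
      have h3 : 0 ≤ ‖x - y‖ ^ (-p) := Real.rpow_nonneg (norm_nonneg _) _
      nlinarith [sq_nonneg ‖q y‖]
    · have hy' : x - y ∉ Metric.ball (0 : Ed d) 1 := by
        rw [mem_ball_zero_iff, ← dist_eq_norm, dist_comm]; exact hy
      simp only [g, indicator_of_notMem hy', mul_zero, zero_add]
      have : 1 ≤ ‖x - y‖ := by
        rw [mem_ball_zero_iff, not_lt] at hy'; exact hy'
      have h3 : ‖x - y‖ ^ (-p) ≤ 1 := Real.rpow_le_one_of_one_le_of_nonpos this (by linarith)
      nlinarith [sq_nonneg ‖q y‖]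
  have hnn : ∀ y, 0 ≤ ‖x - y‖ ^ (-p) * ‖q y‖ ^ 2 := fun y => by positivity
  have hi : Integrable (fun y => ‖x - y‖ ^ (-p) * ‖q y‖ ^ 2) :=
    hb.mono' hm (ae_of_all _ fun y => by rw [Real.norm_of_nonneg (hnn y)]; exact hle y)
  refine ⟨hi, (integral_mono hi hb hle).trans ?_⟩
  rw [integral_add (hgx.const_mul _) hq.int, integral_const_mul, integral_sub_left_eq_self g volume x,
    integral_indicator measurableSet_ball]
  exact add_le_add_right hq.2 _

section scaling
variable {d : ℕ} {c : ℝ} {q B : Ed d → ℂ}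

lemma rpow_half_sq (c : ℝ) (d : ℕ) : (|c| ^ (-(d : ℝ) / 2)) ^ 2 = |c ^ d|⁻¹ := by
  rw [← Real.rpow_natCast, ← Real.rpow_mul (abs_nonneg c), abs_pow, ← Real.rpow_natCast |c| d,
    ← Real.rpow_neg (abs_nonneg c)]
  congr 1; push_cast; ring

lemma scale_sq (h : ∀ x, ‖q x‖ = |c| ^ (-(d : ℝ) / 2) * ‖B (c⁻¹ • x)‖) (x : Ed d) :
    ‖q x‖ ^ 2 = |c ^ d|⁻¹ * ‖B (c⁻¹ • x)‖ ^ 2 := by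
  rw [h, mul_pow, rpow_half_sq]

lemma scale_integral (hc : c ≠ 0) (F : Ed d → ℝ) :
    ∫ y, |c ^ d|⁻¹ * F (c⁻¹ • y) = ∫ y, F y := by
  rw [integral_const_mul, Measure.integral_comp_inv_smul]
  have : (0:ℝ) < |c ^ d| := abs_pos.2 (pow_ne_zero _ hc)
  simp only [finrank_euclideanSpace, Fintype.card_fin, smul_eq_mul]
  field_simp

lemma scale_integrable (hc : c ≠ 0) {F : Ed d → ℝ} (hF : Integrable F) :
    Integrable fun y => |c ^ d|⁻¹ * F (c⁻¹ • y) :=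
  ((integrable_comp_smul_iff volume F (inv_ne_zero hc)).2 hF).const_mul _

lemma scale_L2le (hc : c ≠ 0) (h : ∀ x, ‖q x‖ = |c| ^ (-(d : ℝ) / 2) * ‖B (c⁻¹ • x)‖)
    (hm : AEStronglyMeasurable q volume) {K : ℝ} (hB : L2le B K) : L2le q K := by
  have e : (fun x => ‖q x‖ ^ 2) = fun x => |c ^ d|⁻¹ * ‖B (c⁻¹ • x)‖ ^ 2 := funext (scale_sq h)
  constructor
  · rw [memLp_two_iff_integrable_sq_norm hm, e]
    exact scale_integrable hc (F := fun x => ‖B x‖ ^ 2) hB.int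
  · rw [e, scale_integral hc (fun x => ‖B x‖ ^ 2)]
    exact hB.2

lemma scale_kernel (hc : c ≠ 0) (h : ∀ x, ‖q x‖ = |c| ^ (-(d : ℝ) / 2) * ‖B (c⁻¹ • x)‖)
    (p : ℝ) (x y : Ed d) : ‖x - y‖ ^ (-p) * ‖q y‖ ^ 2 =
      |c| ^ (-p) * (|c ^ d|⁻¹ * (‖c⁻¹ • x - c⁻¹ • y‖ ^ (-p) * ‖B (c⁻¹ • y)‖ ^ 2)) := by
  rw [scale_sq h, ← smul_sub, norm_smul, Real.mul_rpow (norm_nonneg _) (norm_nonneg _), norm_inv,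
    Real.norm_eq_abs, Real.inv_rpow (abs_nonneg c)]
  have : |c| ^ (-p) ≠ 0 := (Real.rpow_pos_of_pos (abs_pos.2 hc) _).ne'
  field_simp

lemma scale_kernel_integral (hc : c ≠ 0) (h : ∀ x, ‖q x‖ = |c| ^ (-(d : ℝ) / 2) * ‖B (c⁻¹ • x)‖)
    (p : ℝ) (x : Ed d) : VK p q x = |c| ^ (-p) * VK p B (c⁻¹ • x) := by
  unfold VK
  simp only [scale_kernel hc h]
  rw [integral_const_mul, scale_integral hc (fun y => ‖c⁻¹ • x - y‖ ^ (-p) * ‖B y‖ ^ 2)]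

lemma scale_kernel_integrable (hc : c ≠ 0) (h : ∀ x, ‖q x‖ = |c| ^ (-(d : ℝ) / 2) * ‖B (c⁻¹ • x)‖)
    (p : ℝ) (x : Ed d) (hB : Integrable fun y => ‖c⁻¹ • x - y‖ ^ (-p) * ‖B y‖ ^ 2) :
    Integrable (fun y => ‖x - y‖ ^ (-p) * ‖q y‖ ^ 2) := by
  simp only [scale_kernel hc h]
  exact (scale_integrable hc hB).const_mul _

end scaling

/-- `q` satisfies `sup_x ∫ |x-y|^{-2γ} |q(y)|² dy ≤ M²`. -/
def Mle {d : ℕ} (γ : ℝ) (q : Ed d → ℂ) (M : ℝ) : Prop :=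
  ∀ x, Integrable (fun y => ‖x - y‖ ^ (-(2 * γ)) * ‖q y‖ ^ 2) ∧ VK (2 * γ) q x ≤ M ^ 2

/-- The kernel `|·|^{-2γ}` is locally integrable because `2γ < 2 ≤ d`. -/
lemma Mle_of_bdd {d : ℕ} (hd : 2 ≤ d) {γ A K : ℝ} (h0 : 0 ≤ γ) (h1 : γ < 1) {q : Ed d → ℂ}
    (hq : L2le q K) (hA : ∀ y, ‖q y‖ ≤ A) : Mle γ q (Real.sqrt (A ^ 2 * kap d (2 * γ) + K)) := by
  intro x
  have hd' : (2:ℝ) ≤ d := by exact_mod_cast hd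
  have := kernel_bound (by omega) (p := 2 * γ) (by linarith) (by linarith) hq x (fun y _ => hA y)
  refine ⟨this.1, ?_⟩
  rw [Real.sq_sqrt]
  · exact this.2
  · have h2 : 0 ≤ K := (integral_nonneg fun x => by positivity).trans hq.2
    have := kap_nonneg d (2 * γ)
    positivity

/-- An `L²`-normalised dilation by `c` costs a factor `|c|^{-γ}`, by homogeneity of the kernel. -/
lemma Mle_scale {d : ℕ} {c γ M : ℝ} {q B : Ed d → ℂ} (hc : c ≠ 0)
    (h : ∀ x, ‖q x‖ = |c| ^ (-(d : ℝ) / 2) * ‖B (c⁻¹ • x)‖) (hB : Mle γ B M) :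
    Mle γ q (|c| ^ (-γ) * M) := by
  intro x
  refine ⟨scale_kernel_integrable hc h _ x (hB _).1, ?_⟩
  rw [scale_kernel_integral hc h, mul_pow, ← Real.rpow_natCast (|c| ^ (-γ)) 2,
    ← Real.rpow_mul (abs_nonneg c)]
  have : -γ * (2:ℕ) = -(2 * γ) := by push_cast; ring
  rw [this]
  exact mul_le_mul_of_nonneg_left (hB _).2 (Real.rpow_nonneg (abs_nonneg c) _)

/-- The Cauchy–Schwarz inequality for lower integrals. -/
lemma cs {α : Type*} [MeasurableSpace α] {μ : Measure α} {f g : α → ℝ≥0∞} (hf : AEMeasurable f μ)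
    (hg : AEMeasurable g μ) {A B : ℝ} (hA : 0 ≤ A) (hB : 0 ≤ B)
    (h1 : ∫⁻ x, f x ^ 2 ∂μ ≤ ENNReal.ofReal (A ^ 2)) (h2 : ∫⁻ x, g x ^ 2 ∂μ ≤ ENNReal.ofReal (B ^ 2)) :
    ∫⁻ x, f x * g x ∂μ ≤ ENNReal.ofReal (A * B) := by
  have h := ENNReal.lintegral_mul_le_Lp_mul_Lq μ Real.HolderConjugate.two_two hf hg
  simp only [Pi.mul_apply, ENNReal.rpow_two] at h
  refine h.trans ?_
  rw [ENNReal.ofReal_mul hA]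
  have aux : ∀ C : ℝ, 0 ≤ C → ENNReal.ofReal C = (ENNReal.ofReal (C ^ 2)) ^ (1 / 2 : ℝ) := by
    intro C hC
    rw [ENNReal.ofReal_rpow_of_nonneg (by positivity) (by norm_num), ← Real.sqrt_eq_rpow,
      Real.sqrt_sq hC]
  rw [aux A hA, aux B hB]
  gcongr

lemma L2le.lint {d : ℕ} {F : Type*} [NormedAddCommGroup F] {f : Ed d → F} {K : ℝ}
    (h : L2le f K) : ∫⁻ x, ‖f x‖ₑ ^ 2 ≤ ENNReal.ofReal K := by
  have := ofReal_integral_eq_lintegral_ofReal h.int (ae_of_all _ fun x => by positivity)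
  simp only [ENNReal.ofReal_pow (norm_nonneg _), ofReal_norm] at this
  rw [← this]
  exact ENNReal.ofReal_le_ofReal h.2

/-- The kernel, with values in `ℝ≥0∞`. -/
def kE {d : ℕ} (γ : ℝ) (x y : Ed d) : ℝ≥0∞ := ENNReal.ofReal (‖x - y‖ ^ (-γ))

lemma kE_comm {d : ℕ} (γ : ℝ) (x y : Ed d) : kE γ x y = kE γ y x := by
  unfold kE; rw [norm_sub_rev]

lemma kE_meas {d : ℕ} (γ : ℝ) : Measurable fun z : Ed d × Ed d => kE γ z.1 z.2 := by
  unfold kE; fun_prop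

lemma Mle.lint {d : ℕ} {γ M : ℝ} {q : Ed d → ℂ} (h : Mle γ q M) (x : Ed d) :
    ∫⁻ y, (kE γ x y * ‖q y‖ₑ) ^ 2 ≤ ENNReal.ofReal (M ^ 2) := by
  have := ofReal_integral_eq_lintegral_ofReal (h x).1 (ae_of_all _ fun x => by positivity)
  refine le_trans (le_of_eq ?_) (ENNReal.ofReal_le_ofReal (h x).2)
  rw [VK, this]
  refine lintegral_congr fun y => ?_
  rw [mul_pow, kE, ← ENNReal.ofReal_pow (by positivity), ← ofReal_norm,
    ← ENNReal.ofReal_pow (by positivity), ← ENNReal.ofReal_mul (by positivity)]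
  congr 2
  rw [← Real.rpow_natCast (‖x - y‖ ^ (-γ)) 2, ← Real.rpow_mul (norm_nonneg _)]
  congr 1; push_cast; ring

/-- `sup_y ∫ |x-y|^{-γ} |q(x)| |r(x)| dx ≤ M ‖r‖`. -/
lemma kE_cs {d : ℕ} {γ M ρ : ℝ} {q r : Ed d → ℂ} (h : Mle γ q M) (hM : 0 ≤ M) (hρ : 0 ≤ ρ)
    (hr : L2le r (ρ ^ 2)) (hq : AEStronglyMeasurable q volume) (y : Ed d) :
    ∫⁻ x, kE γ y x * ‖q x‖ₑ * ‖r x‖ₑ ≤ ENNReal.ofReal (M * ρ) :=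
  cs (((kE_meas γ).comp (measurable_const.prodMk measurable_id)).aemeasurable.mul hq.enorm)
    hr.1.1.enorm hM hρ (h.lint y) hr.lint

/-- Exchanging the integrals puts the kernel on `|q| |r|`, where `kE_cs` applies, and leaves the `L¹`
norm of `u`. -/
lemma tonelli {d : ℕ} {γ M ρ A : ℝ} {q r : Ed d → ℂ} {u : Ed d → ℝ≥0∞} (h : Mle γ q M) (hM : 0 ≤ M)
    (hρ : 0 ≤ ρ) (hr : L2le r (ρ ^ 2)) (hq : AEStronglyMeasurable q volume) (hu : AEMeasurable u volume)
    (hA : ∫⁻ y, u y ≤ ENNReal.ofReal A) :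
    ∫⁻ x, (∫⁻ y, kE γ x y * u y) * (‖q x‖ₑ * ‖r x‖ₑ) ≤ ENNReal.ofReal (M * ρ) * ENNReal.ofReal A := by
  have hk : ∀ x, AEMeasurable (fun y => kE γ x y * u y) volume := fun x =>
    ((kE_meas γ).comp (measurable_const.prodMk measurable_id)).aemeasurable.mul hu
  have e : ∀ x, (∫⁻ y, kE γ x y * u y) * (‖q x‖ₑ * ‖r x‖ₑ) =
      ∫⁻ y, kE γ x y * u y * (‖q x‖ₑ * ‖r x‖ₑ) := fun x => (lintegral_mul_const'' _ (hk x)).symm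
  simp only [e]
  rw [lintegral_lintegral_swap]
  · calc ∫⁻ y, ∫⁻ x, kE γ x y * u y * (‖q x‖ₑ * ‖r x‖ₑ)
        ≤ ∫⁻ y, ENNReal.ofReal (M * ρ) * u y := by
          refine lintegral_mono fun y => ?_
          have : ∀ x, kE γ x y * u y * (‖q x‖ₑ * ‖r x‖ₑ) = kE γ y x * ‖q x‖ₑ * ‖r x‖ₑ * u y := by
            intro x; rw [kE_comm]; ring
          simp only [this]
          rw [lintegral_mul_const'']
          · gcongr; exact kE_cs h hM hρ hr hq y
          · exact (((kE_meas γ).comp (measurable_const.prodMk measurable_id)).aemeasurable.mul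
              hq.enorm).mul hr.1.1.enorm
      _ ≤ _ := by
          rw [lintegral_const_mul'' _ hu]; gcongr
  · exact ((kE_meas γ).aemeasurable.mul hu.comp_snd).mul
      (hq.enorm.comp_fst.mul hr.1.1.enorm.comp_fst)

lemma VK_enorm_le {d : ℕ} {γ : ℝ} {p : Ed d → ℂ} (x : Ed d) :
    ‖VK γ p x‖ₑ ≤ ∫⁻ y, kE γ x y * ‖p y‖ₑ ^ 2 := by
  refine (enorm_integral_le_lintegral_enorm _).trans (le_of_eq (lintegral_congr fun y => ?_))
  rw [enorm_mul, enorm_pow, enorm_norm, kE, ← ofReal_norm, Real.norm_of_nonneg (by positivity)]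

/-- `∫ (|·|^{-γ} ∗ |p|²) |p| |q| ≤ M ‖p‖³`, by Tonelli and Cauchy–Schwarz. -/
lemma trilinear {d : ℕ} {γ M A : ℝ} {p q : Ed d → ℂ} (h : Mle γ q M) (hM : 0 ≤ M) (hA : 0 ≤ A)
    (hp : L2le p (A ^ 2)) (hq : AEStronglyMeasurable q volume) :
    ∫⁻ x, ‖VK γ p x‖ₑ * (‖q x‖ₑ * ‖p x‖ₑ) ≤ ENNReal.ofReal (M * A ^ 3) := by
  refine (lintegral_mono fun x => mul_le_mul_left (VK_enorm_le x) _).trans ?_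
  refine (tonelli h hM hA hp hq (hp.1.1.enorm.pow_const 2) hp.lint).trans (le_of_eq ?_)
  rw [← ENNReal.ofReal_mul (by positivity)]; congr 1; ring

/-- Lipschitz bound for the Hartree potential tested against `|q| |p - q|`. -/
lemma trilinear_diff {d : ℕ} {γ M A ρ : ℝ} {p q : Ed d → ℂ} (h : Mle γ q M) (hM : 0 ≤ M)
    (hA : 0 ≤ A) (hρ : 0 ≤ ρ) (hr : L2le (fun x => p x - q x) (ρ ^ 2)) (hq : L2le q (A ^ 2))
    (ip : ∀ x, Integrable fun y => ‖x - y‖ ^ (-γ) * ‖p y‖ ^ 2)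
    (iq : ∀ x, Integrable fun y => ‖x - y‖ ^ (-γ) * ‖q y‖ ^ 2) :
    ∫⁻ x, ‖VK γ p x - VK γ q x‖ₑ * (‖q x‖ₑ * ‖p x - q x‖ₑ) ≤
      ENNReal.ofReal (M * ρ ^ 3 + 2 * M * ρ ^ 2 * A) := by
  let u : Ed d → ℝ≥0∞ := fun y => ‖p y - q y‖ₑ ^ 2 + 2 * (‖q y‖ₑ * ‖p y - q y‖ₑ)
  have hu : AEMeasurable u volume :=
    (hr.1.1.enorm.pow_const 2).add ((hq.1.1.enorm.mul hr.1.1.enorm).const_mul 2)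
  have hA' : ∫⁻ y, u y ≤ ENNReal.ofReal (ρ ^ 2 + 2 * (A * ρ)) := by
    have hm : AEMeasurable (fun y => ‖q y‖ₑ * ‖p y - q y‖ₑ) volume :=
      hq.1.1.enorm.mul hr.1.1.enorm
    rw [lintegral_add_left' (hr.1.1.enorm.pow_const 2),
      lintegral_const_mul'' _ hm, ENNReal.ofReal_add (by positivity)
      (by positivity), ENNReal.ofReal_mul (by norm_num)]
    gcongr
    · exact hr.lint
    · simp
    · exact cs hq.1.1.enorm hr.1.1.enorm hA hρ hq.lint hr.lint
  have hV : ∀ x, ‖VK γ p x - VK γ q x‖ₑ ≤ ∫⁻ y, kE γ x y * u y := by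
    intro x
    unfold VK
    rw [← integral_sub (ip x) (iq x)]
    refine (enorm_integral_le_lintegral_enorm _).trans (lintegral_mono fun y => ?_)
    rw [← mul_sub, enorm_mul, kE, ← ofReal_norm (‖x - y‖ ^ (-γ)), Real.norm_of_nonneg (by positivity)]
    gcongr
    have e : u y = ENNReal.ofReal (‖p y - q y‖ ^ 2 + 2 * (‖q y‖ * ‖p y - q y‖)) := by
      simp only [u]
      rw [ENNReal.ofReal_add (by positivity) (by positivity), ENNReal.ofReal_mul (by norm_num),
        ENNReal.ofReal_mul (by positivity), ENNReal.ofReal_pow (by positivity), ofReal_norm,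
        ofReal_norm]
      simp
    rw [e, ← ofReal_norm]
    apply ENNReal.ofReal_le_ofReal
    rw [Real.norm_eq_abs, abs_le]
    have h1 := norm_sub_norm_le (p y) (q y)
    have h2 : ‖q y‖ - ‖p y‖ ≤ ‖p y - q y‖ := by
      rw [norm_sub_rev]; exact norm_sub_norm_le _ _
    have := norm_nonneg (p y); have := norm_nonneg (q y); have := norm_nonneg (p y - q y)
    constructor <;> nlinarith
  refine (lintegral_mono fun x => mul_le_mul_left (hV x) _).trans ?_
  refine (tonelli h hM hρ hr hq.1.1 hu hA').trans (le_of_eq ?_)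
  rw [← ENNReal.ofReal_mul (by positivity)]; congr 1; ring

/-! ### Classical solutions and conservation of mass -/

lemma l2_sq {d : ℕ} {F : Type*} [NormedAddCommGroup F] {f : Ed d → F} (hf : MemLp f 2 volume) :
    (eLpNorm f 2 volume).toReal ^ 2 = ∫ x, ‖f x‖ ^ 2 := by
  rw [hf.eLpNorm_eq_integral_rpow_norm two_ne_zero ENNReal.ofNat_ne_top]
  have h0 : 0 ≤ ∫ x, ‖f x‖ ^ 2 := integral_nonneg fun x => by positivity
  have e : (fun x => ‖f x‖ ^ (2:ℝ≥0∞).toReal) = fun x => ‖f x‖ ^ 2 := by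
    ext x; simp
  rw [e, ENNReal.toReal_ofReal (by positivity), ← Real.rpow_natCast, ← Real.rpow_mul h0]
  simp

lemma L2le_of_eLpNorm {d : ℕ} {F : Type*} [NormedAddCommGroup F] {f : Ed d → F} {C : ℝ}
    (hm : AEStronglyMeasurable f volume) (h : eLpNorm f 2 volume ≤ ENNReal.ofReal C) :
    L2le f (C ^ 2) := by
  have hf : MemLp f 2 volume := ⟨hm, h.trans_lt ENNReal.ofReal_lt_top⟩
  refine ⟨hf, ?_⟩
  rw [← l2_sq hf]
  have : (eLpNorm f 2 volume).toReal ≤ |C| :=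
    ENNReal.toReal_le_of_le_ofReal (abs_nonneg C) (h.trans (ENNReal.ofReal_le_ofReal (le_abs_self C)))
  rw [← sq_abs C]
  gcongr

lemma L2le.mono {d : ℕ} {F : Type*} [NormedAddCommGroup F] {f : Ed d → F} {K L : ℝ}
    (h : L2le f K) (hKL : K ≤ L) : L2le f L := ⟨h.1, h.2.trans hKL⟩

/-- A classical solution on `[0, π]` for a fixed `ε`, all of whose spatial derivatives are bounded
in `L²` uniformly in time. -/
structure Sol {d : ℕ} (γ ε : ℝ) (ψ : ℝ → Ed d → ℂ) : Prop where
  cont : Continuous (fun p : ℝ × Ed d => ψ p.1 p.2)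
  c1 : ∀ x, ContDiff ℝ 1 (fun t => ψ t x)
  sm : ∀ t, ContDiff ℝ (⊤ : ℕ∞) (ψ t)
  bd : ∀ n : ℕ, ∃ C : ℝ, ∀ t ∈ Set.Icc (0 : ℝ) Real.pi,
      eLpNorm (fun x => iteratedFDeriv ℝ n (ψ t) x) 2 volume ≤ ENNReal.ofReal C
  eq : ∀ t ∈ Set.Icc (0 : ℝ) Real.pi, ∀ x : Ed d, deriv (fun s => ψ s x) t =
    I * ε / 2 * lap d (ψ t) x +
      -I * ((‖x‖ ^ 2 / (2 * ε) + VK γ (ψ t) x : ℝ) : ℂ) * ψ t x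

lemma Sol.sm2 {d : ℕ} {γ ε : ℝ} {ψ : ℝ → Ed d → ℂ} (h : Sol γ ε ψ) (t : ℝ) :
    ContDiff ℝ 2 (ψ t) := by exact_mod_cast contDiff_infty.1 (h.sm t) 2

lemma Sol.bound {d : ℕ} {γ ε : ℝ} {ψ : ℝ → Ed d → ℂ} (h : Sol γ ε ψ) :
    ∃ K : ℝ, 0 ≤ K ∧ ∀ t ∈ Icc 0 Real.pi, L2le (ψ t) K ∧ L2le (fun x => fderiv ℝ (ψ t) x) K ∧
      L2le (fun x => ‖iteratedFDeriv ℝ 2 (ψ t) x‖) K := by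
  obtain ⟨C0, h0⟩ := h.bd 0
  obtain ⟨C1, h1⟩ := h.bd 1
  obtain ⟨C2, h2⟩ := h.bd 2
  refine ⟨C0 ^ 2 + C1 ^ 2 + C2 ^ 2, by positivity, fun t ht => ⟨?_, ?_, ?_⟩⟩
  · refine (L2le_of_eLpNorm (C := C0) (h.sm t).continuous.aestronglyMeasurable ?_).mono
      (by nlinarith [sq_nonneg C1, sq_nonneg C2])
    refine le_trans (le_of_eq (eLpNorm_congr_norm_ae (ae_of_all _ fun x => ?_))) (h0 t ht)
    exact norm_iteratedFDeriv_zero.symm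
  · refine (L2le_of_eLpNorm (C := C1)
      ((h.sm2 t).continuous_fderiv (by norm_num)).aestronglyMeasurable ?_).mono
      (by nlinarith [sq_nonneg C0, sq_nonneg C2])
    refine le_trans (le_of_eq (eLpNorm_congr_norm_ae (ae_of_all _ fun x => ?_))) (h1 t ht)
    exact (norm_iteratedFDeriv_one _).symm
  · exact (L2le_of_eLpNorm (C := C2)
      ((h.sm2 t).continuous_iteratedFDeriv (by norm_num)).norm.aestronglyMeasurable
      ((eLpNorm_norm _).trans_le (h2 t ht))).mono
      (by nlinarith [sq_nonneg C0, sq_nonneg C1])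

lemma Sol.locbound {d : ℕ} {γ ε : ℝ} {ψ : ℝ → Ed d → ℂ} (h : Sol γ ε ψ) (R : ℝ) :
    ∃ M : ℝ, 0 ≤ M ∧ ∀ t ∈ Icc 0 Real.pi, ∀ x ∈ Metric.closedBall (0 : Ed d) R, ‖ψ t x‖ ≤ M := by
  have hc : IsCompact (Icc 0 Real.pi ×ˢ Metric.closedBall (0 : Ed d) R) :=
    isCompact_Icc.prod (isCompact_closedBall _ _)
  obtain ⟨M, hM⟩ := hc.exists_bound_of_continuousOn h.cont.continuousOn
  exact ⟨max M 0, le_max_right _ _, fun t ht x hx => (hM (t, x) ⟨ht, hx⟩).trans (le_max_left _ _)⟩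

lemma Sol.kernel {d : ℕ} (hd : 2 ≤ d) {γ ε : ℝ} (hγ : 0 < γ ∧ γ < 1) {ψ : ℝ → Ed d → ℂ}
    (h : Sol γ ε ψ) (R : ℝ) :
    ∃ C : ℝ, 0 ≤ C ∧ ∀ t ∈ Icc 0 Real.pi, ∀ x ∈ Metric.closedBall (0 : Ed d) R,
      Integrable (fun y => ‖x - y‖ ^ (-γ) * ‖ψ t y‖ ^ 2) ∧ VK γ (ψ t) x ≤ C := by
  obtain ⟨M, hM0, hM⟩ := h.locbound (R + 1)
  obtain ⟨K, hK0, hK⟩ := h.bound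
  have hd' : (2:ℝ) ≤ d := by exact_mod_cast hd
  refine ⟨M ^ 2 * kap d γ + K, by have := kap_nonneg d γ; positivity, fun t ht x hx => ?_⟩
  refine kernel_bound (by omega) hγ.1.le (by linarith [hγ.2]) (hK t ht).1 x fun y hy => ?_
  refine hM t ht y ?_
  rw [mem_closedBall_zero_iff] at *
  rw [Metric.mem_ball, dist_eq_norm] at hy
  calc ‖y‖ = ‖(y - x) + x‖ := by simp
    _ ≤ ‖y - x‖ + ‖x‖ := norm_add_le _ _
    _ ≤ R + 1 := by linarith

lemma VK_nonneg {d : ℕ} {γ : ℝ} {q : Ed d → ℂ} (x : Ed d) : 0 ≤ VK γ q x :=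
  integral_nonneg fun y => by positivity

lemma Sol.good {d : ℕ} (hd : 2 ≤ d) {γ ε : ℝ} (hγ : 0 < γ ∧ γ < 1) (hε : 0 < ε ∧ ε ≤ 1)
    {ψ : ℝ → Ed d → ℂ} (h : Sol γ ε ψ) :
    Good 0 Real.pi ψ (fun t x => deriv (fun s => ψ s x) t) where
  cont := h.cont.continuousOn
  smooth := fun t _ => h.sm2 t
  hderiv := fun x t _ => ((h.c1 x).differentiable (by norm_num) t).hasDerivAt
  dcont := fun x => ((h.c1 x).continuous_deriv le_rfl).continuousOn
  meas := by
    have hc : Continuous (Function.uncurry fun (x : Ed d) (s : ℝ) => ψ s x) :=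
      h.cont.comp continuous_swap
    exact ((measurable_deriv_with_param hc).comp measurable_swap).aestronglyMeasurable
  loc := by
    intro R
    obtain ⟨C, hC0, hC⟩ := h.kernel hd hγ R
    obtain ⟨M, hM0, hM⟩ := h.locbound R
    obtain ⟨K, hK0, hK⟩ := h.bound
    let L : ℝ := d + (R ^ 2 / (2 * ε) + C) * M
    have he := hε.1
    refine ⟨ENNReal.ofReal L * volume (Metric.closedBall (0 : Ed d) R) +
      ENNReal.ofReal d * ENNReal.ofReal K, ?_, fun t ht => ?_⟩
    · exact ENNReal.add_ne_top.2 ⟨ENNReal.mul_ne_top ENNReal.ofReal_ne_top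
        measure_closedBall_lt_top.ne, ENNReal.mul_ne_top ENNReal.ofReal_ne_top ENNReal.ofReal_ne_top⟩
    have key : ∀ x ∈ Metric.closedBall (0 : Ed d) R, ‖deriv (fun s => ψ s x) t‖ₑ ≤
        ENNReal.ofReal L + ENNReal.ofReal d * ‖iteratedFDeriv ℝ 2 (ψ t) x‖ₑ ^ 2 := by
      intro x hx
      rw [← ofReal_norm, ← ofReal_norm, ← ENNReal.ofReal_pow (norm_nonneg _),
        ← ENNReal.ofReal_mul (by positivity), ← ENNReal.ofReal_add (by positivity) (by positivity)]
      apply ENNReal.ofReal_le_ofReal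
      rw [h.eq t ht x]
      have hV := (hC t ht x hx).2
      have hV0 := VK_nonneg (γ := γ) (q := ψ t) x
      rw [mem_closedBall_zero_iff] at hx
      have n1 : ‖I * ε / 2 * lap d (ψ t) x‖ ≤ d * (1 + ‖iteratedFDeriv ℝ 2 (ψ t) x‖ ^ 2) := by
        have e1 : ‖I * ε / 2‖ ≤ 1 := by
          simp [abs_of_nonneg he.le]; linarith
        rw [norm_mul]
        calc _ ≤ 1 * ‖lap d (ψ t) x‖ := by gcongr
          _ ≤ 1 * (d * ‖iteratedFDeriv ℝ 2 (ψ t) x‖) := by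
              gcongr; exact norm_lap_le (h.sm2 t) x
          _ = d * ‖iteratedFDeriv ℝ 2 (ψ t) x‖ := one_mul _
          _ ≤ _ := by
              gcongr
              nlinarith [sq_nonneg (‖iteratedFDeriv ℝ 2 (ψ t) x‖ - 1)]
      have n2 : ‖-I * ((‖x‖ ^ 2 / (2 * ε) + VK γ (ψ t) x : ℝ) : ℂ) * ψ t x‖ ≤
          (R ^ 2 / (2 * ε) + C) * M := by
        rw [norm_mul, norm_mul, Complex.norm_real, Real.norm_of_nonneg (by positivity)]
        simp only [norm_neg, norm_I, one_mul]
        gcongr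
        exact hM t ht x (by simpa using hx)
      refine (norm_add_le _ _).trans ((add_le_add n1 n2).trans (le_of_eq ?_))
      simp only [L]; ring
    calc ∫⁻ x in Metric.closedBall 0 R, ‖deriv (fun s => ψ s x) t‖ₑ
        ≤ ∫⁻ x in Metric.closedBall 0 R,
          (ENNReal.ofReal L + ENNReal.ofReal d * ‖iteratedFDeriv ℝ 2 (ψ t) x‖ₑ ^ 2) :=
          setLIntegral_mono' Metric.isClosed_closedBall.measurableSet key
      _ = ENNReal.ofReal L * volume (Metric.closedBall (0 : Ed d) R) + ENNReal.ofReal d *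
          ∫⁻ x in Metric.closedBall 0 R, ‖iteratedFDeriv ℝ 2 (ψ t) x‖ₑ ^ 2 := by
          rw [lintegral_add_left measurable_const, lintegral_const_mul' _ _ ENNReal.ofReal_ne_top]
          simp
      _ ≤ _ := by
          gcongr
          refine (setLIntegral_le_lintegral _ _).trans ?_
          simpa only [enorm_norm] using (hK t ht).2.2.lint

lemma Good.mono {d : ℕ} {a b a' b' : ℝ} {p D : ℝ → Ed d → ℂ} (h : Good a b p D) (h1 : a ≤ a')
    (h2 : b' ≤ b) : Good a' b' p D where
  cont := h.cont.mono (prod_mono_left (Icc_subset_Icc h1 h2))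
  smooth := fun t ht => h.smooth t (Icc_subset_Icc h1 h2 ht)
  hderiv := fun x t ht => h.hderiv x t (Ioo_subset_Ioo h1 h2 ht)
  dcont := fun x => (h.dcont x).mono (Icc_subset_Icc h1 h2)
  meas := h.meas.mono_measure (Measure.prod_mono (Measure.restrict_mono (Icc_subset_Icc h1 h2) le_rfl)
    le_rfl)
  loc := fun R => by
    obtain ⟨C, hC, hC'⟩ := h.loc R
    exact ⟨C, hC, fun t ht => hC' t (Icc_subset_Icc h1 h2 ht)⟩

/-- Source terms of two Schrödinger equations with real potentials `Wp`, `Wq`; the common part of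
the potentials cancels. -/
lemma Hdot_sub_Ldot {d : ℕ} {ε : ℝ} {p q Dp Dq : ℝ → Ed d → ℂ} {t : ℝ} {x : Ed d} {Wp Wq : ℝ}
    {R : ℂ} (hp : Dp t x = I * ε / 2 * lap d (p t) x + -I * (Wp : ℂ) * p t x)
    (hq : Dq t x = I * ε / 2 * lap d (q t) x + -I * (Wq : ℂ) * q t x + R) :
    Hdot p q Dp Dq t x - Ldot ε (p t) (q t) x =
      (Wp - Wq) * (p t x * (starRingEnd ℂ) (q t x)).im +
        (p t x * (starRingEnd ℂ) R).re := by
  unfold Hdot Ldot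
  have e : I * (ε : ℂ) / 2 = I * ((ε / 2 : ℝ) : ℂ) := by push_cast; ring
  rw [hp, hq, e]
  generalize ε / 2 = η
  simp
  ring

/-- Conservation of mass. -/
lemma Sol.mass {d : ℕ} (hd : 2 ≤ d) {γ ε : ℝ} (hγ : 0 < γ ∧ γ < 1) (hε : 0 < ε ∧ ε ≤ 1)
    {ψ : ℝ → Ed d → ℂ} (h : Sol γ ε ψ) {t : ℝ} (ht : t ∈ Icc 0 Real.pi) :
    ∫ x, ‖ψ t x‖ ^ 2 = ∫ x, ‖ψ 0 x‖ ^ 2 := by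
  obtain ⟨K, hK0, hK⟩ := h.bound
  have hg := (h.good hd hγ hε).mono (le_refl 0) ht.2
  have hsub : ∀ s ∈ Icc 0 t, s ∈ Icc 0 Real.pi := fun s hs => ⟨hs.1, hs.2.trans ht.2⟩
  have := energy (β := fun _ => 0) hε.1.le ht.1 hg hg (fun s hs => (hK s (hsub s hs)).1)
    (fun s hs => (hK s (hsub s hs)).2.1)
    ((ae_restrict_mem measurableSet_Icc).mono fun s hs => (hK s (hsub s hs)).1)
    (hK 0 ⟨le_rfl, Real.pi_pos.le⟩).1.1 (hK t ht).1.1 intervalIntegrable_const (fun _ => le_rfl)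
    ((ae_restrict_mem measurableSet_Icc).mono fun s hs => by
      have e : ∀ x, Hdot ψ ψ (fun t x => deriv (fun s => ψ s x) t)
          (fun t x => deriv (fun s => ψ s x) t) s x - Ldot ε (ψ s) (ψ s) x = 0 := fun x => by
        rw [Hdot_sub_Ldot (R := 0) (h.eq s (hsub s hs) x)
          ((h.eq s (hsub s hs) x).trans (add_zero _).symm)]
        simp
      simp [e])
  have e : ∀ s x, (ψ s x * (starRingEnd ℂ) (ψ s x)).re = ‖ψ s x‖ ^ 2 := fun s x => by
    rw [Complex.mul_conj, Complex.ofReal_re, Complex.normSq_eq_norm_sq]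
  simp only [e, intervalIntegral.integral_zero] at this
  linarith [abs_nonpos_iff.1 this]

/-! ### Smoothness of the Hartree potential of Schwartz data -/

/-- A profile with `‖jap‖² = (1 + |·|)^{-(d+1)}`. -/
def jap (d : ℕ) (y : Ed d) : ℂ := (((1 + ‖y‖) ^ (-((d : ℝ) + 1) / 2) : ℝ) : ℂ)

lemma jap_sq (d : ℕ) (y : Ed d) : ‖jap d y‖ ^ 2 = (1 + ‖y‖) ^ (-((d : ℝ) + 1)) := by
  rw [jap, Complex.norm_real, Real.norm_of_nonneg (by positivity), ← Real.rpow_natCast,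
    ← Real.rpow_mul (by positivity)]
  congr 1; push_cast; ring

lemma jap_integrable (d : ℕ) : Integrable fun y : Ed d => (1 + ‖y‖) ^ (-((d : ℝ) + 1)) :=
  integrable_one_add_norm (by simp)

lemma jap_L2 (d : ℕ) : L2le (jap d) (∫ y : Ed d, (1 + ‖y‖) ^ (-((d : ℝ) + 1))) := by
  have hm : AEStronglyMeasurable (jap d) volume := by
    unfold jap
    apply Measurable.aestronglyMeasurable
    fun_prop
  constructor
  · rw [memLp_two_iff_integrable_sq_norm hm]
    simpa only [jap_sq] using jap_integrable d
  · simp only [jap_sq]; exact le_rfl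

/-- Uniform bound for `|·|^{-γ} ∗ (1 + |·|)^{-(d+1)}`. -/
lemma jap_kernel {d : ℕ} (hd : 2 ≤ d) {γ : ℝ} (hγ : 0 < γ ∧ γ < 1) : ∃ C : ℝ, ∀ x : Ed d,
    Integrable (fun z : Ed d => ‖z‖ ^ (-γ) * (1 + ‖x - z‖) ^ (-((d : ℝ) + 1))) ∧
      ∫ z : Ed d, ‖z‖ ^ (-γ) * (1 + ‖x - z‖) ^ (-((d : ℝ) + 1)) ≤ C := by
  have hd' : (2:ℝ) ≤ d := by exact_mod_cast hd
  refine ⟨1 ^ 2 * kap d γ + ∫ y : Ed d, (1 + ‖y‖) ^ (-((d : ℝ) + 1)), fun x => ?_⟩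
  have h := kernel_bound (by omega) hγ.1.le (by linarith [hγ.2] : γ < d) (jap_L2 d) x (A := 1)
    (fun y _ => by
      rw [jap, Complex.norm_real, Real.norm_of_nonneg (by positivity)]
      apply Real.rpow_le_one_of_one_le_of_nonpos
      · linarith [norm_nonneg y]
      · apply div_nonpos_of_nonpos_of_nonneg <;> linarith)
  simp only [jap_sq] at h
  have e : ∀ z : Ed d, ‖z‖ ^ (-γ) * (1 + ‖x - z‖) ^ (-((d : ℝ) + 1)) =
      (fun y => ‖x - y‖ ^ (-γ) * (1 + ‖y‖) ^ (-((d : ℝ) + 1))) (x - z) := fun z => by simp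
  simp only [e]
  refine ⟨h.1.comp_sub_left x, ?_⟩
  rw [integral_sub_left_eq_self (fun y => ‖x - y‖ ^ (-γ) * (1 + ‖y‖) ^ (-((d : ℝ) + 1)))]
  exact h.2

/-- Decay of Schwartz functions at the integrable rate `(1 + |y|)^{-(d+1)}`. -/
lemma schwartz_jap {d : ℕ} {V : Type} [NormedAddCommGroup V] [NormedSpace ℝ V]
    (F : SchwartzMap (Ed d) V) : ∃ C : ℝ, 0 ≤ C ∧ ∀ y, ‖F y‖ ≤ C * (1 + ‖y‖) ^ (-((d : ℝ) + 1)) := by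
  refine ⟨max 0 (2 ^ (d + 1) * (Finset.Iic (d + 1, 0)).sup (fun m => SchwartzMap.seminorm ℝ m.1 m.2) F),
    le_max_left _ _, fun y => ?_⟩
  have h := SchwartzMap.one_add_le_sup_seminorm_apply (𝕜 := ℝ) (m := (d + 1, 0)) le_rfl le_rfl F y
  rw [norm_iteratedFDeriv_zero] at h
  have hp : 0 < 1 + ‖y‖ := by positivity
  rw [Real.rpow_neg hp.le, ← div_eq_mul_inv, le_div_iff₀ (by positivity)]
  have : (1 + ‖y‖) ^ ((d : ℝ) + 1) = (1 + ‖y‖) ^ (d + 1) := by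
    rw [← Real.rpow_natCast]; push_cast; rfl
  rw [this, mul_comm]
  exact h.trans (le_max_right _ _)

/-- The convolution `|·|^{-γ} ∗ F`. -/
def pot {d : ℕ} {V : Type} [NormedAddCommGroup V] [NormedSpace ℝ V] (γ : ℝ)
    (F : Ed d → V) (x : Ed d) : V := ∫ z : Ed d, ‖z‖ ^ (-γ) • F (x - z)

lemma pot_meas {d : ℕ} {V : Type} [NormedAddCommGroup V] [NormedSpace ℝ V] (γ : ℝ)
    (F : SchwartzMap (Ed d) V) (x : Ed d) :
    AEStronglyMeasurable (fun z : Ed d => ‖z‖ ^ (-γ) • F (x - z)) volume := by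
  have h1 : Measurable fun z : Ed d => ‖z‖ ^ (-γ) := by fun_prop
  exact h1.aestronglyMeasurable.smul
    (F.continuous.comp (continuous_const.sub continuous_id)).aestronglyMeasurable

lemma pot_integrable {d : ℕ} (hd : 2 ≤ d) {γ : ℝ} (hγ : 0 < γ ∧ γ < 1) {V : Type}
    [NormedAddCommGroup V] [NormedSpace ℝ V] (F : SchwartzMap (Ed d) V) :
    (∀ x, Integrable (fun z : Ed d => ‖z‖ ^ (-γ) • F (x - z))) ∧ ∃ C, ∀ x, ‖pot γ F x‖ ≤ C := by
  obtain ⟨C, hC0, hC⟩ := schwartz_jap F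
  obtain ⟨K, hK⟩ := jap_kernel hd hγ
  have hb : ∀ x z : Ed d, ‖‖z‖ ^ (-γ) • F (x - z)‖ ≤
      C * (‖z‖ ^ (-γ) * (1 + ‖x - z‖) ^ (-((d : ℝ) + 1))) := by
    intro x z
    rw [norm_smul, Real.norm_of_nonneg (by positivity)]
    calc _ ≤ ‖z‖ ^ (-γ) * (C * (1 + ‖x - z‖) ^ (-((d : ℝ) + 1))) := by gcongr; exact hC _
      _ = _ := by ring
  refine ⟨fun x => ((hK x).1.const_mul C).mono' (pot_meas γ F x) (ae_of_all _ (hb x)),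
    C * K, fun x => ?_⟩
  refine (norm_integral_le_of_norm_le ((hK x).1.const_mul C) (ae_of_all _ (hb x))).trans ?_
  rw [integral_const_mul]
  exact mul_le_mul_of_nonneg_left (hK x).2 hC0

/-- Derivatives of the convolution fall on the Schwartz factor, since the kernel is only locally
integrable. -/
lemma pot_hasFDerivAt {d : ℕ} (hd : 2 ≤ d) {γ : ℝ} (hγ : 0 < γ ∧ γ < 1) {V : Type}
    [NormedAddCommGroup V] [NormedSpace ℝ V] (F : SchwartzMap (Ed d) V) (x₀ : Ed d) :
    HasFDerivAt (pot γ F) (pot γ (SchwartzMap.fderivCLM ℝ (Ed d) V F) x₀) x₀ := by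
  let G := SchwartzMap.fderivCLM ℝ (Ed d) V F
  obtain ⟨C, hC0, hC⟩ := schwartz_jap G
  obtain ⟨K, hK⟩ := jap_kernel hd hγ
  refine hasFDerivAt_integral_of_dominated_of_fderiv_le
    (F' := fun x z => ‖z‖ ^ (-γ) • G (x - z)) (s := Metric.ball x₀ 1)
    (bound := fun z => C * (2 + ‖x₀‖) ^ ((d : ℝ) + 1) *
      (‖z‖ ^ (-γ) * (1 + ‖(0 : Ed d) - z‖) ^ (-((d : ℝ) + 1))))
    (Metric.ball_mem_nhds _ one_pos)
    (Eventually.of_forall fun x => pot_meas γ F x) ((pot_integrable hd hγ F).1 x₀) (pot_meas γ G x₀)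
    (ae_of_all _ fun z x hx => ?_) ((hK 0).1.const_mul _) (ae_of_all _ fun z x _ => ?_)
  · rw [norm_smul, Real.norm_of_nonneg (by positivity)]
    have hx' : ‖x‖ ≤ 1 + ‖x₀‖ := by
      rw [Metric.mem_ball, dist_eq_norm] at hx
      calc ‖x‖ = ‖(x - x₀) + x₀‖ := by simp
        _ ≤ ‖x - x₀‖ + ‖x₀‖ := norm_add_le _ _
        _ ≤ _ := by linarith
    -- Peetre's inequality moves the decay from `x - z` to `z`.
    have hp : (1 + ‖x - z‖) ^ (-((d : ℝ) + 1)) ≤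
        (2 + ‖x₀‖) ^ ((d : ℝ) + 1) * (1 + ‖(0 : Ed d) - z‖) ^ (-((d : ℝ) + 1)) := by
      rw [Real.rpow_neg (by positivity), Real.rpow_neg (by positivity), ← div_eq_mul_inv,
        le_div_iff₀ (by positivity), inv_mul_le_iff₀ (by positivity), mul_comm,
        ← Real.mul_rpow (by positivity) (by positivity)]
      apply Real.rpow_le_rpow (by positivity) _ (by positivity)
      have : ‖(0 : Ed d) - z‖ ≤ ‖x - z‖ + ‖x‖ := by
        calc ‖(0 : Ed d) - z‖ = ‖(x - z) - x‖ := by congr 1; abel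
          _ ≤ _ := norm_sub_le _ _
      nlinarith [norm_nonneg (x - z), norm_nonneg x₀, norm_nonneg x]
    calc ‖z‖ ^ (-γ) * ‖G (x - z)‖ ≤ ‖z‖ ^ (-γ) * (C * ((2 + ‖x₀‖) ^ ((d : ℝ) + 1) *
          (1 + ‖(0 : Ed d) - z‖) ^ (-((d : ℝ) + 1)))) := by
          gcongr
          exact (hC _).trans (mul_le_mul_of_nonneg_left hp hC0)
      _ = _ := by ring
  · have h1 : HasFDerivAt (fun x : Ed d => F (x - z)) (fderiv ℝ F (x - z)) x := by
      have := (F.hasFDerivAt (x - z)).comp x ((hasFDerivAt_id x).sub_const z)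
      rwa [ContinuousLinearMap.comp_id] at this
    exact h1.const_smul (‖z‖ ^ (-γ))

/-- By induction on `n`, for all target spaces at once: the derivative of `pot γ F` is the
potential of the derivative of `F`. -/
lemma pot_contDiff {d : ℕ} (hd : 2 ≤ d) {γ : ℝ} (hγ : 0 < γ ∧ γ < 1) (n : ℕ) : ∀ (V : Type)
    [NormedAddCommGroup V] [NormedSpace ℝ V] (F : SchwartzMap (Ed d) V),
    ContDiff ℝ n (pot γ F) ∧ ∃ C, ∀ x, ‖iteratedFDeriv ℝ n (pot γ F) x‖ ≤ C := by
  induction n with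
  | zero =>
    intro V _ _ F
    have hc : Continuous (pot γ F) := continuous_iff_continuousAt.2 fun x =>
      (pot_hasFDerivAt hd hγ F x).continuousAt
    refine ⟨by exact_mod_cast contDiff_zero.2 hc, ?_⟩
    simpa only [norm_iteratedFDeriv_zero] using (pot_integrable hd hγ F).2
  | succ n ih =>
    intro V _ _ F
    have h := ih _ (SchwartzMap.fderivCLM ℝ (Ed d) V F)
    refine ⟨?_, ?_⟩
    · push_cast
      exact contDiff_succ_iff_hasFDerivAt.2 ⟨_, h.1, pot_hasFDerivAt hd hγ F⟩
    · have e : fderiv ℝ (pot γ F) = pot γ (SchwartzMap.fderivCLM ℝ (Ed d) V F) :=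
        funext fun x => (pot_hasFDerivAt hd hγ F x).fderiv
      obtain ⟨C, hC⟩ := h.2
      refine ⟨C, fun x => ?_⟩
      rw [← norm_iteratedFDeriv_fderiv, e]
      exact hC x

/-- For Schwartz data the Hartree potential is smooth with all derivatives bounded. -/
lemma VK_growth {d : ℕ} (hd : 2 ≤ d) {γ : ℝ} (hγ : 0 < γ ∧ γ < 1) (a : SchwartzMap (Ed d) ℂ) :
    ContDiff ℝ (⊤ : ℕ∞) (VK γ (fun y => a y)) ∧
      ∀ n : ℕ, ∃ C, ∀ x, ‖iteratedFDeriv ℝ n (VK γ (fun y => a y)) x‖ ≤ C := by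
  let F : SchwartzMap (Ed d) ℝ :=
    SchwartzMap.bilinLeftCLM (innerSL ℝ : ℂ →L[ℝ] ℂ →L[ℝ] ℝ) a.hasTemperateGrowth a
  have hF : ∀ y, F y = ‖a y‖ ^ 2 := fun y => by
    change inner ℝ (a y) (a y) = _
    exact real_inner_self_eq_norm_sq _
  have e : VK γ (fun y => a y) = pot γ F := by
    funext x
    unfold VK pot
    have e : ∀ z : Ed d, ‖z‖ ^ (-γ) • F (x - z) =
      (fun y => ‖x - y‖ ^ (-γ) * ‖a y‖ ^ 2) (x - z) := fun z => by simp [hF]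
    simp only [e]
    rw [integral_sub_left_eq_self (fun y => ‖x - y‖ ^ (-γ) * ‖a y‖ ^ 2)]
  rw [e]
  exact ⟨contDiff_infty.2 fun n => (pot_contDiff hd hγ n ℝ F).1,
    fun n => (pot_contDiff hd hγ n ℝ F).2⟩

lemma expI_growth (θ : ℝ) : Function.HasTemperateGrowth fun s : ℝ => cexp (I * (θ * s : ℝ)) := by
  have hd : ∀ s : ℝ, HasDerivAt (fun s : ℝ => cexp (I * (θ * s : ℝ)))
      (I * θ * cexp (I * (θ * s : ℝ))) s := by
    intro s
    have h : HasDerivAt (fun s : ℝ => I * ((θ * s : ℝ) : ℂ)) (I * ((θ * 1 : ℝ) : ℂ)) s :=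
      (((hasDerivAt_id s).const_mul θ).ofReal_comp).const_mul I
    convert h.cexp using 1
    push_cast; ring
  have hn : ∀ n : ℕ, iteratedDeriv n (fun s : ℝ => cexp (I * (θ * s : ℝ))) =
      fun s => (I * θ) ^ n * cexp (I * (θ * s : ℝ)) := by
    intro n
    induction n with
    | zero => simp
    | succ n ih =>
      rw [iteratedDeriv_succ, ih]
      funext s
      rw [((hd s).const_mul _).deriv]; ring
  have hs : ContDiff ℝ (⊤ : ℕ∞) fun s : ℝ => cexp (I * (θ * s : ℝ)) :=
    (contDiff_const.mul (Complex.ofRealCLM.contDiff.comp (contDiff_const.mul contDiff_id))).cexp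
  refine ⟨hs, fun n => ⟨0, ‖(I * θ : ℂ) ^ n‖, fun s => ?_⟩⟩
  rw [norm_iteratedFDeriv_eq_norm_iteratedDeriv, hn, norm_mul, mul_comm I ((θ * s : ℝ) : ℂ),
    Complex.norm_exp_ofReal_mul_I]
  simp

/-- The profile `a e^{-iθ(|·|^{-γ} ∗ |a|²)}` is again a Schwartz function. -/
lemma exists_schwartz_profile {d : ℕ} (hd : 2 ≤ d) {γ : ℝ} (hγ : 0 < γ ∧ γ < 1)
    (a : SchwartzMap (Ed d) ℂ) (θ : ℝ) : ∃ f : SchwartzMap (Ed d) ℂ, ∀ y,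
      f y = a y * cexp (-I * ((θ * VK γ (fun y => a y) y : ℝ) : ℂ)) := by
  have hφ : Function.HasTemperateGrowth (VK γ (fun y => a y)) :=
    ⟨(VK_growth hd hγ a).1, fun n => by
      obtain ⟨C, hC⟩ := (VK_growth hd hγ a).2 n
      exact ⟨0, C, fun x => by simpa using hC x⟩⟩
  have hg := (expI_growth (-θ)).comp hφ
  refine ⟨SchwartzMap.smulLeftCLM (𝕜 := ℂ) ℂ
    ((fun s : ℝ => cexp (I * (-θ * s : ℝ))) ∘ VK γ fun y => a y) a, fun y => ?_⟩
  rw [SchwartzMap.smulLeftCLM_apply_apply hg, smul_eq_mul, mul_comm]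
  simp

/-! ### Lens-type ansatz -/

/-- The quadratic oscillation `e^{iα|x|²}`. -/
def chirp {d : ℕ} (α : ℝ) (x : Ed d) : ℂ := cexp (I * ((α * ‖x‖ ^ 2 : ℝ) : ℂ))

lemma norm_chirp {d : ℕ} (α : ℝ) (x : Ed d) : ‖chirp α x‖ = 1 := by
  rw [chirp, mul_comm, Complex.norm_exp_ofReal_mul_I]

lemma chirp_contDiff {d : ℕ} (α : ℝ) {n : WithTop ℕ∞} : ContDiff ℝ n (chirp (d := d) α) := by
  unfold chirp
  exact (contDiff_const.mul (Complex.ofRealCLM.contDiff.comp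
    (contDiff_const.mul (contDiff_norm_sq ℝ)))).cexp

lemma pd_coord {d : ℕ} (i : Fin d) (x : Ed d) : pd d i (fun x => ((x i : ℝ) : ℂ)) x = 1 := by
  have h : HasFDerivAt (fun x : Ed d => ((x i : ℝ) : ℂ))
      (Complex.ofRealCLM.comp (EuclideanSpace.proj i)) x :=
    (Complex.ofRealCLM.comp (EuclideanSpace.proj (𝕜 := ℝ) i)).hasFDerivAt
  unfold pd
  rw [h.fderiv]
  simp

lemma pd_chirp {d : ℕ} (α : ℝ) (i : Fin d) :
    pd d i (chirp α) = fun x => 2 * I * α * (((x i : ℝ) : ℂ) * chirp α x) := by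
  funext x
  have h : HasFDerivAt (fun x : Ed d => ‖x‖ ^ 2) (2 • innerSL ℝ x) x :=
    (hasStrictFDerivAt_norm_sq x).hasFDerivAt
  have h2 : HasFDerivAt (chirp (d := d) α) _ x :=
    ((Complex.ofRealCLM.hasFDerivAt.comp x (h.const_mul α)).const_mul I).cexp
  unfold pd
  rw [h2.fderiv]
  simp [chirp, inner]
  ring

lemma lap_chirp {d : ℕ} (α : ℝ) (x : Ed d) :
    lap d (chirp α) x = (2 * I * d * α - 4 * α ^ 2 * ((‖x‖ ^ 2 : ℝ) : ℂ)) * chirp α x := by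
  have hc : ∀ i, ContDiff ℝ 1 fun x : Ed d => ((x i : ℝ) : ℂ) := fun i =>
    (Complex.ofRealCLM.comp (EuclideanSpace.proj (𝕜 := ℝ) i)).contDiff
  have hd := (chirp_contDiff (d := d) α (n := 1)).differentiable one_ne_zero
  have e : ∀ i, pd d i (pd d i (chirp α)) x =
      2 * I * α * chirp α x - 4 * α ^ 2 * chirp α x * (((x i) ^ 2 : ℝ) : ℂ) := by
    intro i
    have hm : Differentiable ℝ fun x : Ed d => ((x i : ℝ) : ℂ) * chirp α x :=
      ((hc i).differentiable one_ne_zero).mul hd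
    rw [pd_chirp, pd_const_mul _ hm]
    rw [pd_mul ((hc i).differentiable one_ne_zero) hd, pd_chirp]
    simp only [pd_coord]
    push_cast
    linear_combination (4 * α ^ 2 * (x i : ℂ) ^ 2 * chirp α x) * I_sq
  have e2 : ∑ i, 4 * α ^ 2 * chirp α x * (((x i) ^ 2 : ℝ) : ℂ) =
      4 * α ^ 2 * chirp α x * ((‖x‖ ^ 2 : ℝ) : ℂ) := by
    rw [EuclideanSpace.real_norm_sq_eq, ← Finset.mul_sum, Complex.ofReal_sum]
  rw [lap_eq, Finset.sum_congr rfl fun i _ => e i, Finset.sum_sub_distrib, e2]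
  simp
  ring

/-- The lens-type ansatz `ρ(t) e^{iα(t)|x|²} B(θ(t), σ(t)x)`. -/
def lens {d : ℕ} (ρ α θ σ : ℝ → ℝ) (B : ℝ × Ed d → ℂ) (t : ℝ) (x : Ed d) : ℂ :=
  (ρ t : ℂ) * (chirp (α t) x * B (θ t, σ t • x))

/-- The time derivative of `lens`. -/
def lensD {d : ℕ} (ρ α θ σ ρ' α' θ' σ' : ℝ → ℝ) (B : ℝ × Ed d → ℂ) (t : ℝ) (x : Ed d) : ℂ :=
  chirp (α t) x * ((ρ' t + ρ t * I * α' t * ((‖x‖ ^ 2 : ℝ) : ℂ)) * B (θ t, σ t • x) +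
    ρ t * fderiv ℝ B (θ t, σ t • x) (θ' t, σ' t • x))

lemma lens_hasDerivAt {d : ℕ} {ρ α θ σ ρ' α' θ' σ' : ℝ → ℝ} {B : ℝ × Ed d → ℂ} {t : ℝ}
    (hρ : HasDerivAt ρ (ρ' t) t) (hα : HasDerivAt α (α' t) t) (hθ : HasDerivAt θ (θ' t) t)
    (hσ : HasDerivAt σ (σ' t) t) (hB : Differentiable ℝ B) (x : Ed d) :
    HasDerivAt (fun s => lens ρ α θ σ B s x) (lensD ρ α θ σ ρ' α' θ' σ' B t x) t := by
  have h1 : HasDerivAt (fun s => chirp (α s) x) (chirp (α t) x * (I * ((α' t * ‖x‖ ^ 2 : ℝ) : ℂ))) t :=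
    ((hα.mul_const (‖x‖ ^ 2)).ofReal_comp.const_mul I).cexp
  have h2 : HasDerivAt (fun s => B (θ s, σ s • x)) (fderiv ℝ B (θ t, σ t • x) (θ' t, σ' t • x)) t :=
    (hB _).hasFDerivAt.comp_hasDerivAt t (hθ.prodMk (hσ.smul_const x))
  refine (hρ.ofReal_comp.mul (h1.mul h2)).congr_deriv ?_
  unfold lensD
  simp only [Pi.mul_apply]
  push_cast
  ring

/-- If the parameters satisfy the lens ODEs, the harmonic Schrödinger operator acting on the ansatz
reduces to the free Schrödinger operator acting on `B`. -/
lemma lens_eq {d : ℕ} {ε : ℝ} (hε : ε ≠ 0) {ρ α θ σ ρ' α' θ' σ' : ℝ → ℝ} {B : ℝ × Ed d → ℂ} {t : ℝ}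
    (eρ : ρ' t = -ε * d * α t * ρ t) (eα : α' t = -2 * ε * α t ^ 2 - 1 / (2 * ε))
    (eσ : σ' t = -2 * ε * α t * σ t) (hB : ContDiff ℝ 2 B) (x : Ed d) :
    lensD ρ α θ σ ρ' α' θ' σ' B t x = I * ε / 2 * lap d (lens ρ α θ σ B t) x +
      -I * ((‖x‖ ^ 2 / (2 * ε) : ℝ) : ℂ) * lens ρ α θ σ B t x +
      ρ t * (chirp (α t) x * (fderiv ℝ B (θ t, σ t • x) (θ' t, 0) -
        I * ε / 2 * (σ t : ℂ) ^ 2 * lap d (fun y => B (θ t, y)) (σ t • x))) := by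
  have hb : ContDiff ℝ 2 fun y => B (θ t, y) := hB.comp (contDiff_const.prodMk contDiff_id)
  have hb' : ContDiff ℝ 2 fun x : Ed d => B (θ t, σ t • x) :=
    hb.comp (contDiff_const_smul (σ t))
  have hf : ∀ v : Ed d, fderiv ℝ B (θ t, σ t • x) (0, v) = fderiv ℝ (fun y => B (θ t, y)) (σ t • x) v := by
    intro v
    have h : HasFDerivAt (fun y => B (θ t, y)) _ (σ t • x) :=
      (hB.differentiable two_ne_zero (θ t, σ t • x)).hasFDerivAt.comp (σ t • x)
        (hasFDerivAt_prodMk_right (θ t) (σ t • x))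
    rw [h.fderiv]
    simp
  have hsplit : fderiv ℝ B (θ t, σ t • x) (θ' t, σ' t • x) = fderiv ℝ B (θ t, σ t • x) (θ' t, 0) +
      σ' t * ∑ i, (x i : ℂ) * pd d i (fun y => B (θ t, y)) (σ t • x) := by
    have e1 : ((θ' t, σ' t • x) : ℝ × Ed d) = (θ' t, 0) + (0, σ' t • x) := by simp
    rw [e1, map_add, hf, map_smul]
    congr 1
    rw [real_smul]
    congr 1
    have e2 : x = ∑ i, x i • EuclideanSpace.single i (1:ℝ) := by
      ext j
      simp [Finset.sum_apply, Pi.single_apply]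
    generalize σ t • x = z
    conv_lhs => rw [e2]
    rw [map_sum]
    refine Finset.sum_congr rfl fun i _ => ?_
    rw [map_smul, real_smul]; rfl
  have hl : lap d (lens ρ α θ σ B t) x = ρ t * (chirp (α t) x * ((σ t : ℂ) ^ 2 *
      lap d (fun y => B (θ t, y)) (σ t • x)) + 2 * (2 * I * α t * σ t * chirp (α t) x *
      ∑ i, (x i : ℂ) * pd d i (fun y => B (θ t, y)) (σ t • x)) +
      (2 * I * d * α t - 4 * α t ^ 2 * ((‖x‖ ^ 2 : ℝ) : ℂ)) * chirp (α t) x * B (θ t, σ t • x)) := by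
    have : lens ρ α θ σ B t = fun x => (ρ t : ℂ) * (chirp (α t) x * B (θ t, σ t • x)) := rfl
    rw [this, lap_const_mul _ ((chirp_contDiff _).mul hb'), lap_mul (chirp_contDiff _) hb',
      lap_chirp, lap_comp_smul hb]
    congr 4
    rw [Finset.mul_sum]
    refine Finset.sum_congr rfl fun i _ => ?_
    rw [pd_chirp, pd_comp_smul (f := fun y => B (θ t, y))]
    ring
  rw [hl]
  unfold lensD lens
  rw [hsplit, eρ, eα, eσ]
  have hε' : (ε : ℂ) ≠ 0 := by exact_mod_cast hε
  push_cast
  generalize lap d (fun y => B (θ t, y)) (σ t • x) = L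
  generalize ∑ i, (x i : ℂ) * pd d i (fun y => B (θ t, y)) (σ t • x) = S
  generalize fderiv ℝ B (θ t, σ t • x) (θ' t, 0) = T
  generalize B (θ t, σ t • x) = b
  generalize chirp (α t) x = g
  field_simp
  ring_nf
  simp only [I_sq]
  ring

lemma lens_good {d : ℕ} {a b : ℝ} {ρ α θ σ ρ' α' θ' σ' : ℝ → ℝ} {B : ℝ × Ed d → ℂ}
    (hρ : ∀ t ∈ Icc a b, HasDerivAt ρ (ρ' t) t) (hα : ∀ t ∈ Icc a b, HasDerivAt α (α' t) t)
    (hθ : ∀ t ∈ Icc a b, HasDerivAt θ (θ' t) t) (hσ : ∀ t ∈ Icc a b, HasDerivAt σ (σ' t) t)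
    (cρ : ContinuousOn ρ' (Icc a b)) (cα : ContinuousOn α' (Icc a b))
    (cθ : ContinuousOn θ' (Icc a b)) (cσ : ContinuousOn σ' (Icc a b)) (hB : ContDiff ℝ 2 B) :
    Good a b (lens ρ α θ σ B) (lensD ρ α θ σ ρ' α' θ' σ' B) := by
  have dr : ∀ {f f' : ℝ → ℝ}, (∀ t ∈ Icc a b, HasDerivAt f (f' t) t) →
      ContinuousOn f (Icc a b) := fun h t ht => (h t ht).continuousAt.continuousWithinAt
  have lift : ∀ {f : ℝ → ℝ}, ContinuousOn f (Icc a b) →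
      ContinuousOn (fun z : ℝ × Ed d => f z.1) (Icc a b ×ˢ univ) := fun h =>
    h.comp continuousOn_fst fun z hz => hz.1
  have liftC : ∀ {f : ℝ → ℝ}, ContinuousOn f (Icc a b) →
      ContinuousOn (fun z : ℝ × Ed d => (f z.1 : ℂ)) (Icc a b ×ˢ univ) := fun h =>
    Complex.continuous_ofReal.comp_continuousOn (lift h)
  have cx : ContinuousOn (fun z : ℝ × Ed d => z.2) (Icc a b ×ˢ univ) := continuousOn_snd
  have cn : ContinuousOn (fun z : ℝ × Ed d => ((‖z.2‖ ^ 2 : ℝ) : ℂ)) (Icc a b ×ˢ univ) :=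
    Complex.continuous_ofReal.comp_continuousOn (cx.norm.pow 2)
  have cc : ContinuousOn (fun z : ℝ × Ed d => chirp (α z.1) z.2) (Icc a b ×ˢ univ) := by
    unfold chirp
    exact Complex.continuous_exp.comp_continuousOn (continuousOn_const.mul
      (Complex.continuous_ofReal.comp_continuousOn ((lift (dr hα)).mul (cx.norm.pow 2))))
  have cpt : ContinuousOn (fun z : ℝ × Ed d => (θ z.1, σ z.1 • z.2)) (Icc a b ×ˢ univ) :=
    (lift (dr hθ)).prodMk ((lift (dr hσ)).smul cx)
  have cB : ContinuousOn (fun z : ℝ × Ed d => B (θ z.1, σ z.1 • z.2)) (Icc a b ×ˢ univ) :=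
    hB.continuous.comp_continuousOn cpt
  have cD : ContinuousOn (fun z : ℝ × Ed d => lensD ρ α θ σ ρ' α' θ' σ' B z.1 z.2)
      (Icc a b ×ˢ univ) := by
    unfold lensD
    refine cc.mul (((liftC cρ).add ((((liftC (dr hρ)).mul continuousOn_const).mul (liftC cα)).mul
      cn)).mul cB |>.add ((liftC (dr hρ)).mul ?_))
    exact ((hB.continuous_fderiv (by norm_num)).comp_continuousOn cpt).clm_apply
      ((lift cθ).prodMk ((lift cσ).smul cx))
  refine ⟨(liftC (dr hρ)).mul (cc.mul cB), fun t _ => ?_, fun x t ht => ?_, fun x => ?_, ?_,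
    fun R => ?_⟩
  · exact contDiff_const.mul ((chirp_contDiff _).mul
      (hB.comp (contDiff_const.prodMk (contDiff_const_smul (σ t)))))
  · have ht' := Ioo_subset_Icc_self ht
    exact lens_hasDerivAt (hρ t ht') (hα t ht') (hθ t ht') (hσ t ht')
      (hB.differentiable two_ne_zero) x
  · have hc : ContinuousOn (fun t : ℝ => ((t, x) : ℝ × Ed d)) (Icc a b) := by fun_prop
    have := ContinuousOn.comp (g := fun z : ℝ × Ed d => lensD ρ α θ σ ρ' α' θ' σ' B z.1 z.2) cD hc
      fun t ht => ⟨ht, mem_univ x⟩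
    exact this
  · have := cD.aestronglyMeasurable (μ := (volume : Measure ℝ).prod (volume : Measure (Ed d)))
      (measurableSet_Icc.prod MeasurableSet.univ)
    rwa [← Measure.prod_restrict, Measure.restrict_univ] at this
  · have hc : IsCompact (Icc a b ×ˢ Metric.closedBall (0 : Ed d) R) :=
      isCompact_Icc.prod (isCompact_closedBall _ _)
    obtain ⟨M, hM⟩ := hc.exists_bound_of_continuousOn (cD.mono (prod_mono_right (subset_univ _)))
    refine ⟨ENNReal.ofReal M * volume (Metric.closedBall (0 : Ed d) R),
      ENNReal.mul_ne_top ENNReal.ofReal_ne_top measure_closedBall_lt_top.ne, fun t ht => ?_⟩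
    calc _ ≤ ∫⁻ x in Metric.closedBall (0 : Ed d) R, ENNReal.ofReal M :=
          setLIntegral_mono' Metric.isClosed_closedBall.measurableSet fun x hx => by
            rw [← ofReal_norm]; exact ENNReal.ofReal_le_ofReal (hM (t, x) ⟨ht, hx⟩)
      _ = _ := by simp

/-! ### The phase integral -/

/-- `G(t) = ∫₀ᵗ |cos τ|^{-γ} dτ`. -/
def GG (γ t : ℝ) : ℝ := ∫ τ in (0 : ℝ)..t, |Real.cos τ| ^ (-γ)

lemma cg_meas (γ : ℝ) : Measurable fun τ : ℝ => |Real.cos τ| ^ (-γ) := by fun_prop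

lemma cg_int {γ : ℝ} (hγ : 0 < γ ∧ γ < 1) :
    IntervalIntegrable (fun τ => |Real.cos τ| ^ (-γ)) volume 0 Real.pi := by
  have h0 : IntervalIntegrable (fun u : ℝ => (2 / Real.pi) ^ (-γ) * u ^ (-γ)) volume 0 (Real.pi / 2) :=
    (intervalIntegral.intervalIntegrable_rpow' (by linarith [hγ.2])).const_mul _
  have hp := Real.pi_pos
  have h1 : IntervalIntegrable (fun u : ℝ => |Real.cos (Real.pi / 2 - u)| ^ (-γ)) volume 0
      (Real.pi / 2) := by
    refine h0.mono_fun (by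
      apply Measurable.aestronglyMeasurable; fun_prop) ?_
    refine (ae_restrict_mem measurableSet_uIoc).mono fun u hu => ?_
    rw [uIoc_of_le (by positivity)] at hu
    have hs := Real.mul_le_sin hu.1.le hu.2
    have hu1 := hu.1
    have : 0 < 2 / Real.pi * u := by positivity
    beta_reduce
    rw [Real.cos_pi_div_two_sub, ← Real.mul_rpow (by positivity) hu.1.le,
      Real.norm_of_nonneg (by positivity), Real.norm_of_nonneg (by positivity),
      abs_of_pos (by linarith)]
    exact Real.rpow_le_rpow_of_nonpos this hs (by linarith [hγ.1])
  have h2 : IntervalIntegrable (fun τ => |Real.cos τ| ^ (-γ)) volume 0 (Real.pi / 2) := by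
    have := (h1.comp_sub_left (Real.pi / 2)).symm
    simpa using this
  have h3 : IntervalIntegrable (fun τ => |Real.cos τ| ^ (-γ)) volume (Real.pi / 2) Real.pi := by
    have := (h2.comp_sub_left Real.pi).symm
    simp only [Real.cos_pi_sub, abs_neg, sub_zero] at this
    convert this using 1
    ring
  exact h2.trans h3

lemma cg_int' {γ : ℝ} (hγ : 0 < γ ∧ γ < 1) {a b : ℝ} (ha : a ∈ Icc 0 Real.pi)
    (hb : b ∈ Icc 0 Real.pi) :
    IntervalIntegrable (fun τ => |Real.cos τ| ^ (-γ)) volume a b := by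
  apply (cg_int hγ).mono_set
  rw [uIcc_of_le Real.pi_pos.le]
  exact uIcc_subset_Icc ha hb

lemma GG_sub {γ : ℝ} (hγ : 0 < γ ∧ γ < 1) {a b : ℝ} (ha : a ∈ Icc 0 Real.pi)
    (hb : b ∈ Icc 0 Real.pi) : ∫ τ in a..b, |Real.cos τ| ^ (-γ) = GG γ b - GG γ a := by
  have h0 : (0:ℝ) ∈ Icc 0 Real.pi := ⟨le_rfl, Real.pi_pos.le⟩
  rw [GG, GG, intervalIntegral.integral_interval_sub_left (cg_int' hγ h0 hb) (cg_int' hγ h0 ha)]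

lemma GG_mono {γ : ℝ} (hγ : 0 < γ ∧ γ < 1) {a b : ℝ} (ha : a ∈ Icc 0 Real.pi)
    (hb : b ∈ Icc 0 Real.pi) (hab : a ≤ b) : GG γ a ≤ GG γ b := by
  have := GG_sub hγ ha hb
  have h : 0 ≤ ∫ τ in a..b, |Real.cos τ| ^ (-γ) :=
    intervalIntegral.integral_nonneg hab fun u _ => by positivity
  linarith

lemma GG_zero (γ : ℝ) : GG γ 0 = 0 := by simp [GG]

lemma GG_nonneg {γ : ℝ} (hγ : 0 < γ ∧ γ < 1) {a : ℝ} (ha : a ∈ Icc 0 Real.pi) : 0 ≤ GG γ a := by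
  have := GG_mono hγ ⟨le_rfl, Real.pi_pos.le⟩ ha ha.1
  rwa [GG_zero] at this

lemma GG_cont {γ : ℝ} (hγ : 0 < γ ∧ γ < 1) : ContinuousOn (GG γ) (Icc 0 Real.pi) := by
  have h := cg_int hγ
  rw [intervalIntegrable_iff_integrableOn_Icc_of_le Real.pi_pos.le] at h
  rw [← uIcc_of_le Real.pi_pos.le] at h ⊢
  exact intervalIntegral.continuousOn_primitive_interval h

lemma cg_cont {γ t : ℝ} (hc : Real.cos t ≠ 0) :
    ContinuousAt (fun τ => |Real.cos τ| ^ (-γ)) t :=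
  Real.continuous_cos.abs.continuousAt.rpow_const (Or.inl (abs_ne_zero.2 hc))

lemma GG_hasDerivAt {γ : ℝ} (hγ : 0 < γ ∧ γ < 1) {t : ℝ} (ht : t ∈ Icc 0 Real.pi)
    (hc : Real.cos t ≠ 0) : HasDerivAt (GG γ) (|Real.cos t| ^ (-γ)) t :=
  intervalIntegral.integral_hasDerivAt_right (cg_int' hγ ⟨le_rfl, Real.pi_pos.le⟩ ht)
    (cg_meas γ).stronglyMeasurable.stronglyMeasurableAtFilter (cg_cont hc)

/-! ### Lens parameters -/

/-- The amplitude `|cos (t - t0)|^{-d/2}` of the lens transform, written with `Real.log`, which is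
`log |·|` on negative numbers, so that it is differentiable off the zeros of the cosine. -/
def rh (d : ℕ) (t0 t : ℝ) : ℝ := Real.exp (-(d : ℝ) / 2 * Real.log (Real.cos (t - t0)))

/-- The coefficient `-tan (t - t0) / (2ε)` of the quadratic phase. -/
def al (ε t0 t : ℝ) : ℝ := -(Real.tan (t - t0)) / (2 * ε)

/-- The spatial scaling `1 / cos (t - t0)`. -/
def sg (t0 t : ℝ) : ℝ := (Real.cos (t - t0))⁻¹

/-- The derivative of `rh d t0` off the zeros of the cosine. -/
def rh' (d : ℕ) (t0 t : ℝ) : ℝ := d / 2 * Real.tan (t - t0) * rh d t0 t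

/-- The derivative of `al ε t0` off the zeros of the cosine. -/
def al' (ε t0 t : ℝ) : ℝ := -(1 + Real.tan (t - t0) ^ 2) / (2 * ε)

/-- The derivative of `sg t0` off the zeros of the cosine. -/
def sg' (t0 t : ℝ) : ℝ := Real.tan (t - t0) * sg t0 t

lemma rh_eq {d : ℕ} {t0 t : ℝ} (hc : Real.cos (t - t0) ≠ 0) :
    rh d t0 t = |Real.cos (t - t0)| ^ (-(d : ℝ) / 2) := by
  rw [rh, Real.rpow_def_of_pos (abs_pos.2 hc), Real.log_abs, mul_comm]

lemma cos_hda (t0 t : ℝ) : HasDerivAt (fun s => Real.cos (s - t0)) (-Real.sin (t - t0)) t := by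
  simpa using ((hasDerivAt_id t).sub_const t0).cos

lemma rh_hda {d : ℕ} {t0 t : ℝ} (hc : Real.cos (t - t0) ≠ 0) :
    HasDerivAt (rh d t0) (rh' d t0 t) t := by
  have h := (((cos_hda t0 t).log hc).const_mul (-(d:ℝ) / 2)).exp
  refine h.congr_deriv ?_
  rw [rh', rh, Real.tan_eq_sin_div_cos]; ring

lemma tan_hda {t0 t : ℝ} (hc : Real.cos (t - t0) ≠ 0) :
    HasDerivAt (fun s => Real.tan (s - t0)) (1 + Real.tan (t - t0) ^ 2) t := by
  have h := (Real.hasDerivAt_tan hc).comp t ((hasDerivAt_id t).sub_const t0)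
  refine h.congr_deriv ?_
  rw [mul_one, ← Real.inv_one_add_tan_sq hc, one_div, inv_inv]

lemma al_hda {ε t0 t : ℝ} (hc : Real.cos (t - t0) ≠ 0) :
    HasDerivAt (al ε t0) (al' ε t0 t) t := ((tan_hda hc).neg.div_const _)

lemma sg_hda {t0 t : ℝ} (hc : Real.cos (t - t0) ≠ 0) :
    HasDerivAt (sg t0) (sg' t0 t) t := by
  refine ((cos_hda t0 t).inv hc).congr_deriv ?_
  rw [sg', sg, Real.tan_eq_sin_div_cos]
  field_simp
  
lemma lens_params {d : ℕ} {ε t0 a b : ℝ} (hc : ∀ t ∈ Icc a b, Real.cos (t - t0) ≠ 0) :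
    ContinuousOn (rh' d t0) (Icc a b) ∧ ContinuousOn (al' ε t0) (Icc a b) ∧
      ContinuousOn (sg' t0) (Icc a b) := by
  have ht : ContinuousOn (fun s => Real.tan (s - t0)) (Icc a b) := fun t h =>
    (tan_hda (hc t h)).continuousAt.continuousWithinAt
  have hr : ContinuousOn (rh d t0) (Icc a b) := fun t h =>
    (rh_hda (hc t h)).continuousAt.continuousWithinAt
  have hs : ContinuousOn (sg t0) (Icc a b) := fun t h =>
    (sg_hda (hc t h)).continuousAt.continuousWithinAt
  exact ⟨(continuousOn_const.mul ht).mul hr, (continuousOn_const.add (ht.pow 2)).neg.div_const _,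
    ht.mul hs⟩

/-- The lens ansatz centred at time `t0`, with profile `B(θ(t), x / cos(t - t0))`. -/
def lns {d : ℕ} (ε t0 : ℝ) (θ : ℝ → ℝ) (B : ℝ × Ed d → ℂ) : ℝ → Ed d → ℂ :=
  lens (rh d t0) (al ε t0) θ (sg t0) B

/-- The time derivative of `lns ε t0 θ B` off the focus, `θ'` being the derivative of `θ`. -/
def lnsD {d : ℕ} (ε t0 : ℝ) (θ θ' : ℝ → ℝ) (B : ℝ × Ed d → ℂ) : ℝ → Ed d → ℂ :=
  lensD (rh d t0) (al ε t0) θ (sg t0) (rh' d t0) (al' ε t0) θ' (sg' t0) B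

lemma lns_good {d : ℕ} {ε t0 a b : ℝ} {θ θ' : ℝ → ℝ} {B : ℝ × Ed d → ℂ}
    (hc : ∀ t ∈ Icc a b, Real.cos (t - t0) ≠ 0)
    (hθ : ∀ t ∈ Icc a b, HasDerivAt θ (θ' t) t) (cθ : ContinuousOn θ' (Icc a b))
    (hB : ContDiff ℝ 2 B) : Good a b (lns ε t0 θ B) (lnsD ε t0 θ θ' B) :=
  lens_good (fun t ht => rh_hda (hc t ht)) (fun t ht => al_hda (hc t ht)) hθ
    (fun t ht => sg_hda (hc t ht)) (lens_params hc (ε := ε)).1 (lens_params hc (d := d)).2.1 cθ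
    (lens_params hc (d := d) (ε := ε)).2.2 hB

/-- The lens transform conjugates the harmonic oscillator to the free flow. -/
lemma lns_eq {d : ℕ} {ε t0 : ℝ} (hε : ε ≠ 0) {θ θ' : ℝ → ℝ} {B : ℝ × Ed d → ℂ}
    (hB : ContDiff ℝ 2 B) (t : ℝ) (x : Ed d) :
    lnsD ε t0 θ θ' B t x = I * ε / 2 * lap d (lns ε t0 θ B t) x +
      -I * ((‖x‖ ^ 2 / (2 * ε) : ℝ) : ℂ) * lns ε t0 θ B t x +
      rh d t0 t * (chirp (al ε t0 t) x * (fderiv ℝ B (θ t, sg t0 t • x) (θ' t, 0) -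
        I * ε / 2 * (sg t0 t : ℂ) ^ 2 * lap d (fun y => B (θ t, y)) (sg t0 t • x))) := by
  refine lens_eq hε ?_ ?_ ?_ hB x
  · rw [rh', al]; field_simp
  · rw [al', al]; field_simp; ring
  · rw [sg', al]; field_simp

lemma lns_norm {d : ℕ} {ε t0 t : ℝ} {θ : ℝ → ℝ} {B : ℝ × Ed d → ℂ}
    (hc : Real.cos (t - t0) ≠ 0) (x : Ed d) : ‖lns ε t0 θ B t x‖ =
      |Real.cos (t - t0)| ^ (-(d : ℝ) / 2) * ‖B (θ t, (Real.cos (t - t0))⁻¹ • x)‖ := by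
  rw [lns, lens, norm_mul, norm_mul, norm_chirp, one_mul, rh_eq hc, Complex.norm_real,
    Real.norm_of_nonneg (by positivity), sg]

/-! ### The modulated profile -/

section

/-- The profile `a(y) e^{-iθφ(y)}` with `φ = |·|^{-γ} ∗ |a|²`, as a function of `(θ, y)`. -/
def BV {d : ℕ} (γ : ℝ) (a : Ed d → ℂ) (z : ℝ × Ed d) : ℂ :=
  a z.2 * cexp (-I * ((z.1 * VK γ a z.2 : ℝ) : ℂ))

lemma BV_norm {d : ℕ} (γ : ℝ) (a : Ed d → ℂ) (z : ℝ × Ed d) : ‖BV γ a z‖ = ‖a z.2‖ := by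
  rw [BV, norm_mul, neg_mul, mul_comm I, ← neg_mul, ← Complex.ofReal_neg,
    Complex.norm_exp_ofReal_mul_I, mul_one]

/-- Pointwise decay at rate `(1 + |y|)^{-(d+1)}` gives an `L²` bound. -/
lemma L2le_of_jap {d : ℕ} {f : Ed d → ℂ} {S : ℝ} (hf : AEStronglyMeasurable f volume)
    (h : ∀ y, ‖f y‖ ≤ S * (1 + ‖y‖) ^ (-((d : ℝ) + 1))) :
    L2le f (S ^ 2 * ∫ y : Ed d, (1 + ‖y‖) ^ (-((d : ℝ) + 1))) := by
  have hb : ∀ y, ‖f y‖ ^ 2 ≤ S ^ 2 * (1 + ‖y‖) ^ (-((d : ℝ) + 1)) := by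
    intro y
    have h1 : (1 + ‖y‖) ^ (-((d : ℝ) + 1)) ≤ 1 :=
      Real.rpow_le_one_of_one_le_of_nonpos (by linarith [norm_nonneg y]) (by
        have : (0:ℝ) ≤ d := Nat.cast_nonneg d
        linarith)
    have h0 : 0 ≤ (1 + ‖y‖) ^ (-((d : ℝ) + 1)) := by positivity
    calc _ ≤ (S * (1 + ‖y‖) ^ (-((d : ℝ) + 1))) ^ 2 := by gcongr; exact h y
      _ = S ^ 2 * ((1 + ‖y‖) ^ (-((d : ℝ) + 1)) * (1 + ‖y‖) ^ (-((d : ℝ) + 1))) := by ring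
      _ ≤ _ := by gcongr; exact mul_le_of_le_one_left h0 h1
  have hi := (jap_integrable d).const_mul (S ^ 2)
  have hi2 : Integrable fun y => ‖f y‖ ^ 2 := hi.mono' (hf.norm.pow 2) (ae_of_all _ fun y => by
    rw [Real.norm_of_nonneg (by positivity)]; exact hb y)
  exact ⟨(memLp_two_iff_integrable_sq_norm hf).2 hi2, by
    rw [← integral_const_mul]; exact integral_mono hi2 hi hb⟩

lemma pd_expI {d : ℕ} {Φ : Ed d → ℂ} (hΦ : Differentiable ℝ Φ) (θ : ℂ) (i : Fin d) :
    pd d i (fun y => cexp (θ * Φ y)) = fun y => θ * pd d i Φ y * cexp (θ * Φ y) := by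
  funext y
  have h : HasFDerivAt (fun y => cexp (θ * Φ y)) _ y := ((hΦ y).hasFDerivAt.const_mul θ).cexp
  unfold pd
  rw [h.fderiv]
  simp
  ring

lemma lap_expI {d : ℕ} {Φ : Ed d → ℂ} (hΦ : ContDiff ℝ 2 Φ) (θ : ℂ) (y : Ed d) :
    lap d (fun y => cexp (θ * Φ y)) y =
      (θ * lap d Φ y + θ ^ 2 * ∑ i, pd d i Φ y ^ 2) * cexp (θ * Φ y) := by
  have hd := hΦ.differentiable two_ne_zero
  have hp : ∀ i, Differentiable ℝ (pd d i Φ) := fun i =>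
    (pd_contDiff hΦ (m := 1) (by norm_num) i).differentiable one_ne_zero
  have hp' : ∀ i, Differentiable ℝ fun y => θ * pd d i Φ y := fun i => (hp i).const_mul θ
  have he : Differentiable ℝ fun y => cexp (θ * Φ y) := (hd.const_mul θ).cexp
  rw [lap_eq, lap_eq, Finset.mul_sum, Finset.mul_sum, ← Finset.sum_add_distrib, Finset.sum_mul]
  refine Finset.sum_congr rfl fun i _ => ?_
  rw [pd_expI hd, pd_mul (hp' i) he, pd_const_mul θ (hp i), pd_expI hd]
  ring

variable {d : ℕ} {γ : ℝ} (hd : 2 ≤ d) (hγ : 0 < γ ∧ γ < 1) (a : SchwartzMap (Ed d) ℂ)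
include hd hγ

lemma BV_contDiff : ContDiff ℝ 2 (BV γ (fun y => a y)) := by
  have h1 : ContDiff ℝ 2 (VK γ fun y => a y) := by
    exact_mod_cast contDiff_infty.1 (VK_growth hd hγ a).1 2
  unfold BV
  exact ((a.smooth 2).comp contDiff_snd).mul (contDiff_const.mul (Complex.ofRealCLM.contDiff.comp
    (contDiff_fst.mul (h1.comp contDiff_snd)))).cexp

lemma BV_fderiv (z : ℝ × Ed d) (τ : ℝ) : fderiv ℝ (BV γ (fun y => a y)) z (τ, 0) =
    -I * ((τ * VK γ (fun y => a y) z.2 : ℝ) : ℂ) * BV γ (fun y => a y) z := by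
  have h1 : HasFDerivAt (BV γ (fun y => a y)) _ (z.1, z.2) :=
    ((BV_contDiff hd hγ a).differentiable two_ne_zero z).hasFDerivAt
  have h2 : HasDerivAt (fun θ : ℝ => BV γ (fun y => a y) (θ, z.2))
      (fderiv ℝ (BV γ (fun y => a y)) z (1, 0)) z.1 :=
    HasFDerivAt.comp_hasDerivAt (f := fun θ : ℝ => (θ, z.2)) z.1 h1 ((hasDerivAt_id z.1).prodMk (hasDerivAt_const z.1 z.2))
  have h3 : HasDerivAt (fun θ : ℝ => BV γ (fun y => a y) (θ, z.2))
      (-I * ((VK γ (fun y => a y) z.2 : ℝ) : ℂ) * BV γ (fun y => a y) z) z.1 := by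
    have h : HasDerivAt (fun s : ℝ => -I * ((s * VK γ (fun y => a y) z.2 : ℝ) : ℂ))
      (-I * ((1 * VK γ (fun y => a y) z.2 : ℝ) : ℂ)) z.1 :=
      (((hasDerivAt_id z.1).mul_const _).ofReal_comp).const_mul (-I)
    refine (h.cexp.const_mul (a z.2)).congr_deriv ?_
    simp only [BV]
    push_cast; ring
  have e : ((τ, 0) : ℝ × Ed d) = τ • ((1, 0) : ℝ × Ed d) := by simp
  rw [e, map_smul, h2.unique h3, real_smul]
  push_cast; ring

/-- The Laplacian of the modulated profile is bounded in `L²` uniformly for bounded phases. -/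
lemma BV_lap (Θ : ℝ) (hΘ : 0 ≤ Θ) : ∃ C : ℝ, 0 ≤ C ∧ ∀ θ ∈ Icc 0 Θ,
    L2le (lap d (fun y => BV γ (fun y => a y) (θ, y))) (C ^ 2) := by
  have hφ : ContDiff ℝ 2 (fun y => ((VK γ (fun y => a y) y : ℝ) : ℂ)) := by
    have h1 : ContDiff ℝ 2 (VK γ fun y => a y) := by
      exact_mod_cast contDiff_infty.1 (VK_growth hd hγ a).1 2
    exact Complex.ofRealCLM.contDiff.comp h1
  set Φ : Ed d → ℂ := fun y => ((VK γ (fun y => a y) y : ℝ) : ℂ) with hΦ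
  have hn : ∀ n y, ‖iteratedFDeriv ℝ n Φ y‖ = ‖iteratedFDeriv ℝ n (VK γ fun y => a y) y‖ := by
    intro n y
    exact Complex.ofRealLI.norm_iteratedFDeriv_comp_left
      (f := VK γ fun y => a y) (n := (⊤ : ℕ∞)) ((VK_growth hd hγ a).1.contDiffAt)
      (by exact_mod_cast le_top)
  obtain ⟨C1, hC1⟩ := (VK_growth hd hγ a).2 1
  obtain ⟨C2, hC2⟩ := (VK_growth hd hγ a).2 2
  have hC1' : ∀ i y, ‖pd d i Φ y‖ ≤ C1 := fun i y => (norm_pd_le i y).trans (by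
    rw [← norm_iteratedFDeriv_one, hn]; exact hC1 y)
  have hC2' : ∀ y, ‖lap d Φ y‖ ≤ d * C2 := fun y => (norm_lap_le hφ y).trans (by
    rw [hn]; gcongr; exact hC2 y)
  have h10 : 0 ≤ C1 := (norm_nonneg _).trans (hC1 0)
  have h20 : 0 ≤ C2 := (norm_nonneg _).trans (hC2 0)
  obtain ⟨A0, hA0, hA0'⟩ := schwartz_jap a
  obtain ⟨A1, hA1, hA1'⟩ := schwartz_jap (SchwartzMap.fderivCLM ℝ (Ed d) ℂ a)
  obtain ⟨A2, hA2, hA2'⟩ := schwartz_jap (SchwartzMap.fderivCLM ℝ (Ed d) _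
    (SchwartzMap.fderivCLM ℝ (Ed d) ℂ a))
  have ha : ContDiff ℝ 2 (fun y => a y) := a.smooth 2
  have hA1'' : ∀ i y, ‖pd d i (fun y => a y) y‖ ≤ A1 * (1 + ‖y‖) ^ (-((d : ℝ) + 1)) := fun i y =>
    (norm_pd_le i y).trans (hA1' y)
  have hA2'' : ∀ y, ‖lap d (fun y => a y) y‖ ≤ d * (A2 * (1 + ‖y‖) ^ (-((d : ℝ) + 1))) := fun y =>
    (norm_lap_le ha y).trans (by
      rw [← norm_iteratedFDeriv_fderiv, norm_iteratedFDeriv_one]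
      gcongr
      exact hA2' y)
  let J : ℝ := ∫ y : Ed d, (1 + ‖y‖) ^ (-((d : ℝ) + 1))
  have hJ : 0 ≤ J := integral_nonneg fun y => by positivity
  let S : ℝ := A0 * (Θ * (d * C2) + Θ ^ 2 * (d * C1 ^ 2)) + 2 * (d * (A1 * (Θ * C1))) + d * A2
  have hS : 0 ≤ S := by positivity
  refine ⟨S * Real.sqrt J, by positivity, fun θ hθ => ?_⟩
  rw [mul_pow, Real.sq_sqrt hJ]
  have hB : ContDiff ℝ 2 (fun y => BV γ (fun y => a y) (θ, y)) :=
    (BV_contDiff hd hγ a).comp (contDiff_const.prodMk contDiff_id)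
  refine L2le_of_jap (lap_continuous hB).aestronglyMeasurable fun y => ?_
  have e : (fun y => BV γ (fun y => a y) (θ, y)) = fun y => a y * cexp ((-I * θ) * Φ y) := by
    funext y
    simp only [BV, hΦ]
    push_cast; ring_nf
  have hE : ContDiff ℝ 2 fun y => cexp ((-I * θ) * Φ y) := (contDiff_const.mul hφ).cexp
  have hE1 : ∀ y, ‖cexp ((-I * θ) * Φ y)‖ = 1 := fun y => by
    have : (-I * θ) * Φ y = ((-(θ * VK γ (fun y => a y) y) : ℝ) : ℂ) * I := by
      simp only [hΦ]; push_cast; ring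
    rw [this, Complex.norm_exp_ofReal_mul_I]
  have hθ1 : ‖-I * (θ : ℂ)‖ ≤ Θ := by
    rw [norm_mul, norm_neg, norm_I, one_mul, Complex.norm_real, Real.norm_of_nonneg hθ.1]
    exact hθ.2
  rw [e, lap_mul ha hE, lap_expI hφ]
  simp only [pd_expI (hφ.differentiable two_ne_zero)]
  set w := (1 + ‖y‖) ^ (-((d : ℝ) + 1)) with hw
  have hw0 : 0 ≤ w := by positivity
  have b1 : ‖a y * ((-I * θ * lap d Φ y + (-I * θ) ^ 2 * ∑ i, pd d i Φ y ^ 2) *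
      cexp (-I * θ * Φ y))‖ ≤ (A0 * w) * (Θ * (d * C2) + Θ ^ 2 * (d * C1 ^ 2)) := by
    rw [norm_mul, norm_mul, hE1, mul_one]
    refine mul_le_mul (hA0' y) ((norm_add_le _ _).trans (add_le_add ?_ ?_)) (norm_nonneg _)
      (by positivity)
    · rw [norm_mul]; exact mul_le_mul hθ1 (hC2' y) (norm_nonneg _) hΘ
    · rw [norm_mul, norm_pow]
      refine mul_le_mul (by gcongr) ((norm_sum_le _ _).trans ?_) (norm_nonneg _) (by positivity)
      refine (Finset.sum_le_card_nsmul _ _ (C1 ^ 2) fun i _ => ?_).trans_eq (by simp)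
      rw [norm_pow]; gcongr; exact hC1' i y
  have b2 : ‖2 * ∑ i, pd d i (fun y => a y) y * (-I * θ * pd d i Φ y * cexp (-I * θ * Φ y))‖ ≤
      2 * (d * ((A1 * w) * (Θ * C1))) := by
    rw [norm_mul, Complex.norm_two]
    refine mul_le_mul_of_nonneg_left ((norm_sum_le _ _).trans ?_) (by norm_num)
    refine (Finset.sum_le_card_nsmul _ _ ((A1 * w) * (Θ * C1)) fun i _ => ?_).trans_eq (by simp)
    rw [norm_mul, norm_mul, norm_mul (-I * (θ : ℂ)), hE1, mul_one]
    exact mul_le_mul (hA1'' i y) (mul_le_mul hθ1 (hC1' i y) (norm_nonneg _) hΘ)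
      (by positivity) (by positivity)
  have b3 : ‖lap d (fun y => a y) y * cexp (-I * θ * Φ y)‖ ≤ d * (A2 * w) := by
    rw [norm_mul, hE1, mul_one]; exact hA2'' y
  refine ((norm_add₃_le).trans (add_le_add (add_le_add b1 b2) b3)).trans_eq ?_
  simp only [S]
  ring

end

/-! ### Gronwall's inequality and the approximate solution -/

/-- Gronwall's inequality in integral form, for a kernel `k` with primitive `H`. -/
lemma gronwall_int {a b c : ℝ} {y k H : ℝ → ℝ} (cy : ContinuousOn y (Icc a b))
    (ck : ContinuousOn k (Icc a b)) (hk : ∀ t, 0 ≤ k t) (hH : ∀ t ∈ Icc a b, HasDerivAt H (k t) t)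
    (hy : ∀ t ∈ Icc a b, y t ≤ c + ∫ τ in a..t, k τ * y τ) {t : ℝ} (ht : t ∈ Icc a b) :
    y t ≤ c * Real.exp (H t - H a) := by
  have hab : a ≤ b := ht.1.trans ht.2
  have hint : IntegrableOn (fun τ => k τ * y τ) (uIcc a b) := by
    rw [uIcc_of_le hab]; exact (ck.mul cy).integrableOn_Icc
  set z : ℝ → ℝ := fun t => c + ∫ τ in a..t, k τ * y τ with hz
  have cz : ContinuousOn z (Icc a b) := by
    have := intervalIntegral.continuousOn_primitive_interval hint
    rw [uIcc_of_le hab] at this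
    exact continuousOn_const.add this
  have dz : ∀ s ∈ Ioo a b, HasDerivAt z (k s * y s) s := fun s hs => by
    have hs' := Ioo_subset_Icc_self hs
    have hn : Icc a b ∈ nhds s := Icc_mem_nhds hs.1 hs.2
    refine (intervalIntegral.integral_hasDerivAt_right ?_ ?_
      ((ck.mul cy).continuousAt hn)).const_add c
    · exact (hint.mono_set (by
        rw [uIcc_of_le hab, uIcc_of_le hs.1.le]
        exact Icc_subset_Icc le_rfl hs.2.le)).intervalIntegrable
    · exact ((ck.mul cy).mono Ioo_subset_Icc_self).stronglyMeasurableAtFilter isOpen_Ioo s hs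
  have cH : ContinuousOn H (Icc a b) := fun s hs => (hH s hs).continuousAt.continuousWithinAt
  have anti : AntitoneOn (fun s => z s * Real.exp (-H s)) (Icc a b) := by
    have hd : ∀ s ∈ Ioo a b, HasDerivAt (fun s => z s * Real.exp (-H s))
        (k s * y s * Real.exp (-H s) + z s * (Real.exp (-H s) * -k s)) s := fun s hs =>
      (dz s hs).mul (hH s (Ioo_subset_Icc_self hs)).neg.exp
    refine antitoneOn_of_deriv_nonpos (convex_Icc a b) (cz.mul (Real.continuous_exp.comp_continuousOn
      cH.neg)) (fun s hs => ?_) fun s hs => ?_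
    · rw [interior_Icc] at hs
      exact (hd s hs).differentiableAt.differentiableWithinAt
    · rw [interior_Icc] at hs
      rw [(hd s hs).deriv]
      have h1 := hy s (Ioo_subset_Icc_self hs)
      have h2 := mul_nonneg (hk s) (sub_nonneg.2 h1)
      have h3 := mul_nonneg h2 (Real.exp_pos (-H s)).le
      linarith [show k s * (z s - y s) * Real.exp (-H s) =
        -(k s * y s * Real.exp (-H s) + z s * (Real.exp (-H s) * -k s)) by ring,
        show k s * (c + (∫ τ in a..s, k τ * y τ) - y s) * Real.exp (-H s) =
          k s * (z s - y s) * Real.exp (-H s) from rfl]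
  have h := anti ⟨le_rfl, hab⟩ ht ht.1
  have ha : z a = c := by simp [hz]
  simp only [ha] at h
  have h4 : z t ≤ c * Real.exp (-H a) * Real.exp (H t) := by
    have := mul_le_mul_of_nonneg_right h (Real.exp_pos (H t)).le
    rwa [mul_assoc, ← Real.exp_add, neg_add_cancel, Real.exp_zero, mul_one] at this
  refine (hy t ht).trans (h4.trans_eq ?_)
  rw [mul_assoc, ← Real.exp_add]; ring_nf

/-- The approximate solution away from the focus: the lens transform, centred at time `0`, of the
profile `a e^{-iG(t)φ}`. It agrees with `hartreeProfile` wherever `cos t ≠ 0`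
(`vv_eq_hartreeProfile`). -/
def vv {d : ℕ} (γ : ℝ) (a : Ed d → ℂ) (ε : ℝ) : ℝ → Ed d → ℂ := lns ε 0 (GG γ) (BV γ a)

/-- The time derivative of `vv` where `cos t ≠ 0`. -/
def vvD {d : ℕ} (γ : ℝ) (a : Ed d → ℂ) (ε : ℝ) : ℝ → Ed d → ℂ :=
  lnsD ε 0 (GG γ) (fun t => |Real.cos t| ^ (-γ)) (BV γ a)

/-- The remainder with which `vv` solves the Hartree equation. -/
def vR {d : ℕ} (γ : ℝ) (a : Ed d → ℂ) (ε t : ℝ) (x : Ed d) : ℂ :=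
  rh d 0 t * (chirp (al ε 0 t) x * (-(I * ε / 2 * (sg 0 t : ℂ) ^ 2 *
    lap d (fun y => BV γ a (GG γ t, y)) (sg 0 t • x))))

lemma vv_norm {d : ℕ} {γ ε t : ℝ} {a : Ed d → ℂ} (hc : Real.cos t ≠ 0) (x : Ed d) :
    ‖vv γ a ε t x‖ = |Real.cos t| ^ (-(d : ℝ) / 2) * ‖a ((Real.cos t)⁻¹ • x)‖ := by
  have := lns_norm (B := BV γ a) (ε := ε) (θ := GG γ) (t0 := 0) (t := t) (by simpa using hc) x
  rw [BV_norm, sub_zero] at this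
  exact this

lemma vv_kernel {d : ℕ} {γ ε t : ℝ} {a : Ed d → ℂ} (hc : Real.cos t ≠ 0) (x : Ed d) :
    VK γ (vv γ a ε t) x = |Real.cos t| ^ (-γ) * VK γ a ((Real.cos t)⁻¹ • x) :=
  scale_kernel_integral hc (vv_norm hc) γ x

section
variable {d : ℕ} {γ : ℝ} (hd : 2 ≤ d) (hγ : 0 < γ ∧ γ < 1) (a : SchwartzMap (Ed d) ℂ)
include hd hγ

lemma vv_good {ε a1 b1 : ℝ} (h1 : Icc a1 b1 ⊆ Icc 0 Real.pi)
    (hc : ∀ t ∈ Icc a1 b1, Real.cos t ≠ 0) :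
    Good a1 b1 (vv γ (fun y => a y) ε) (vvD γ (fun y => a y) ε) :=
  lns_good (by simpa using hc) (fun t ht => GG_hasDerivAt hγ (h1 ht) (hc t ht))
    (fun t ht => (cg_cont (hc t ht)).continuousWithinAt) (BV_contDiff hd hγ a)

/-- The phase `G` absorbs the Hartree potential of `vv`, which is `|cos t|^{-γ} φ(x / cos t)`; the
Laplacian of the profile remains as the error. -/
lemma vv_eq {ε t : ℝ} (hε : ε ≠ 0) (hc : Real.cos t ≠ 0) (x : Ed d) :
    vvD γ (fun y => a y) ε t x = I * ε / 2 * lap d (vv γ (fun y => a y) ε t) x +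
      -I * ((‖x‖ ^ 2 / (2 * ε) + VK γ (vv γ (fun y => a y) ε t) x : ℝ) : ℂ) *
        vv γ (fun y => a y) ε t x + vR γ (fun y => a y) ε t x := by
  rw [vvD, lns_eq hε (BV_contDiff hd hγ a), BV_fderiv hd hγ a, vv_kernel hc]
  unfold vv lns lens vR
  simp only [sg, sub_zero]
  push_cast
  ring

/-- The remainder is `O(ε / m²)` in `L²` at times with `|cos t| ≥ m`: the factor `1 / cos²` comes from
the two derivatives falling on the rescaled profile. -/
lemma vR_L2 : ∃ C : ℝ, 0 ≤ C ∧ ∀ ε m t : ℝ, 0 < ε → 0 < m → t ∈ Icc 0 Real.pi →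
    m ≤ |Real.cos t| → L2le (vR γ (fun y => a y) ε t) ((C * ε / m ^ 2) ^ 2) := by
  obtain ⟨C, hC, h⟩ := BV_lap hd hγ a (GG γ Real.pi) (GG_nonneg hγ ⟨Real.pi_pos.le, le_rfl⟩)
  refine ⟨C / 2, by positivity, fun ε m t hε hm ht hmc => ?_⟩
  have hc : Real.cos t ≠ 0 := abs_pos.1 (hm.trans_le hmc)
  have hL := h (GG γ t) ⟨GG_nonneg hγ ht, GG_mono hγ ht ⟨Real.pi_pos.le, le_rfl⟩ ht.2⟩
  set L := lap d (fun y => BV γ (fun y => a y) (GG γ t, y)) with hLd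
  set k : ℝ := ε / 2 * ((Real.cos t)⁻¹) ^ 2 with hk
  have hk0 : 0 ≤ k := by positivity
  have hLc : Continuous L := lap_continuous
    ((BV_contDiff hd hγ a).comp (contDiff_const.prodMk contDiff_id))
  have hkm : k ≤ ε / 2 / m ^ 2 := by
    rw [hk, div_eq_mul_inv _ (m ^ 2), inv_pow]
    refine mul_le_mul_of_nonneg_left (inv_anti₀ (by positivity) ?_) (by positivity)
    rw [← sq_abs (Real.cos t)]; gcongr
  have hB : L2le (fun y => (k : ℂ) * L y) ((C / 2 * ε / m ^ 2) ^ 2) := by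
    refine ⟨hL.1.const_mul _, ?_⟩
    simp only [norm_mul, mul_pow, Complex.norm_real, Real.norm_of_nonneg hk0]
    rw [integral_const_mul]
    calc _ ≤ (ε / 2 / m ^ 2) ^ 2 * C ^ 2 := by
          refine mul_le_mul (by gcongr) hL.2 (integral_nonneg fun _ => by positivity) (by positivity)
      _ = _ := by ring
  refine scale_L2le hc (fun x => ?_) ?_ hB
  · rw [vR, norm_mul, norm_mul, norm_chirp, one_mul, norm_neg, rh_eq (by simpa using hc), sub_zero,
      Complex.norm_real, Real.norm_of_nonneg (by positivity)]
    congr 1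
    rw [sg, sub_zero, hk]
    simp only [norm_mul, norm_div, norm_I, one_mul, Complex.norm_real, Complex.norm_two, norm_pow,
      Real.norm_of_nonneg hε.le, norm_inv, Real.norm_ofNat]
    rfl
  · unfold vR
    exact (continuous_const.mul ((chirp_contDiff _ (n := 0)).continuous.mul (continuous_const.mul
      (hLc.comp (continuous_const_smul _))).neg)).aestronglyMeasurable

end

/-! ### Stability away from the focus -/

/-- The squared distance in terms of the masses and the overlap. -/
lemma sq_sub_integral {d : ℕ} {p q : Ed d → ℂ} (hp : MemLp p 2 volume) (hq : MemLp q 2 volume) :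
    ∫ x, ‖p x - q x‖ ^ 2 = (∫ x, ‖p x‖ ^ 2) + (∫ x, ‖q x‖ ^ 2) -
      2 * ∫ x, (p x * (starRingEnd ℂ) (q x)).re := by
  have i1 := hp.integrable_norm_pow two_ne_zero
  have i2 := hq.integrable_norm_pow two_ne_zero
  have i3 := (integrable_mul_conj hp hq).const_mul 2
  have i12 : Integrable fun x => ‖p x‖ ^ 2 + ‖q x‖ ^ 2 := i1.add i2
  rw [← integral_const_mul, ← integral_add i1 i2, ← integral_sub i12 i3]
  refine integral_congr_ae (ae_of_all _ fun x => ?_)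
  simp only [← Complex.normSq_eq_norm_sq, Complex.normSq_sub]

lemma sub_L2le {d : ℕ} {p q : Ed d → ℂ} {A B : ℝ} (hA : 0 ≤ A) (hB : 0 ≤ B) (hp : L2le p (A ^ 2))
    (hq : L2le q (B ^ 2)) : L2le (fun x => p x - q x) ((A + B) ^ 2) := by
  have hm : MemLp (fun x => p x - q x) 2 volume := hp.1.sub hq.1
  refine ⟨hm, ?_⟩
  rw [← l2_sq hm]
  have e : ∀ {f : Ed d → ℂ} {C : ℝ}, 0 ≤ C → L2le f (C ^ 2) → (eLpNorm f 2 volume).toReal ≤ C := by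
    intro f C hC hf
    have := hf.2
    rw [← l2_sq hf.1] at this
    exact abs_le_of_sq_le_sq' this hC |>.2
  have h : (eLpNorm (fun x => p x - q x) 2 volume).toReal ≤ A + B := by
    have h1 : eLpNorm (fun x => p x - q x) 2 volume ≤ eLpNorm p 2 volume + eLpNorm q 2 volume :=
      eLpNorm_sub_le hp.1.1 hq.1.1 (by norm_num)
    have h2 := ENNReal.toReal_mono (ENNReal.add_ne_top.2 ⟨hp.1.2.ne, hq.1.2.ne⟩) h1
    rw [ENNReal.toReal_add hp.1.2.ne hq.1.2.ne] at h2
    exact h2.trans (add_le_add (e hA hp) (e hB hq))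
  gcongr

section
variable {d : ℕ} {γ : ℝ}

lemma schwartz_bdd (a : SchwartzMap (Ed d) ℂ) : ∃ C : ℝ, 0 ≤ C ∧ ∀ y, ‖a y‖ ≤ C := by
  obtain ⟨C, hC, h⟩ := schwartz_jap a
  refine ⟨C, hC, fun y => (h y).trans (mul_le_of_le_one_right hC ?_)⟩
  refine Real.rpow_le_one_of_one_le_of_nonpos (by linarith [norm_nonneg y]) ?_
  have : (0:ℝ) ≤ d := Nat.cast_nonneg d
  linarith

lemma schwartz_L2 (a : SchwartzMap (Ed d) ℂ) : L2le (fun y => a y) (∫ y, ‖a y‖ ^ 2) :=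
  ⟨a.memLp 2 volume, le_rfl⟩

lemma vv_mass {ε t : ℝ} {a : Ed d → ℂ} (hc : Real.cos t ≠ 0) :
    ∫ x, ‖vv γ a ε t x‖ ^ 2 = ∫ y, ‖a y‖ ^ 2 := by
  simp only [scale_sq (vv_norm hc)]
  exact scale_integral hc fun y => ‖a y‖ ^ 2

/-- The source terms in the comparison of a solution with an approximate solution, in terms of the
`L²` distance `ρ` between the two. -/
lemma source_bound {ε : ℝ} {p q R : Ed d → ℂ} {P : ℝ → Ed d → ℂ} {Q : ℝ → Ed d → ℂ}
    {DP DQ : ℝ → Ed d → ℂ} {t A M ρ N : ℝ} (hp : P t = p) (hq : Q t = q)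
    (eP : ∀ x, DP t x = I * ε / 2 * lap d p x +
      -I * ((‖x‖ ^ 2 / (2 * ε) + VK γ p x : ℝ) : ℂ) * p x)
    (eQ : ∀ x, DQ t x = I * ε / 2 * lap d q x +
      -I * ((‖x‖ ^ 2 / (2 * ε) + VK γ q x : ℝ) : ℂ) * q x + R x)
    (hM : Mle γ q M) (hM0 : 0 ≤ M) (hA : 0 ≤ A) (hρ : 0 ≤ ρ) (hρA : ρ ≤ 2 * A) (hN : 0 ≤ N)
    (hr : L2le (fun x => p x - q x) (ρ ^ 2)) (hpA : L2le p (A ^ 2)) (hqA : L2le q (A ^ 2))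
    (hR : L2le R (N ^ 2))
    (ip : ∀ x, Integrable fun y => ‖x - y‖ ^ (-γ) * ‖p y‖ ^ 2)
    (iq : ∀ x, Integrable fun y => ‖x - y‖ ^ (-γ) * ‖q y‖ ^ 2) :
    ∫⁻ x, ‖Hdot P Q DP DQ t x - Ldot ε (P t) (Q t) x‖ₑ ≤
      ENNReal.ofReal (4 * A * M * ρ ^ 2 + A * N) := by
  subst hp hq
  have key : ∀ x, ‖Hdot P Q DP DQ t x - Ldot ε (P t) (Q t) x‖ₑ ≤
      ‖VK γ (P t) x - VK γ (Q t) x‖ₑ * (‖Q t x‖ₑ * ‖P t x - Q t x‖ₑ) + ‖P t x‖ₑ * ‖R x‖ₑ := by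
    intro x
    rw [Hdot_sub_Ldot (eP x) (eQ x)]
    simp only [← ofReal_norm]
    rw [← ENNReal.ofReal_mul (by positivity), ← ENNReal.ofReal_mul (by positivity),
      ← ENNReal.ofReal_mul (by positivity), ← ENNReal.ofReal_add (by positivity) (by positivity)]
    apply ENNReal.ofReal_le_ofReal
    refine (norm_add_le _ _).trans (add_le_add ?_ ?_)
    · rw [norm_mul]
      refine mul_le_mul (le_of_eq (by congr 1; ring)) ?_ (by positivity) (by positivity)
      have : (P t x * (starRingEnd ℂ) (Q t x)).im =
          ((P t x - Q t x) * (starRingEnd ℂ) (Q t x)).im := by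
        rw [sub_mul, Complex.sub_im, Complex.mul_conj, Complex.ofReal_im, sub_zero]
      rw [this, Real.norm_eq_abs]
      refine (Complex.abs_im_le_norm _).trans_eq ?_
      rw [norm_mul, Complex.norm_conj, mul_comm]
    · rw [Real.norm_eq_abs]
      refine (Complex.abs_re_le_norm _).trans_eq ?_
      rw [norm_mul, Complex.norm_conj]
  refine (lintegral_mono key).trans ?_
  have hm : AEMeasurable (fun x => ‖P t x‖ₑ * ‖R x‖ₑ) volume := hpA.1.1.enorm.mul hR.1.1.enorm
  rw [lintegral_add_right' _ hm,
    ENNReal.ofReal_add (by positivity) (by positivity)]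
  refine add_le_add ((trilinear_diff hM hM0 hA hρ hr hqA ip iq).trans
    (ENNReal.ofReal_le_ofReal ?_)) (cs hpA.1.1.enorm hR.1.1.enorm hA hN hpA.lint hR.lint)
  nlinarith [mul_nonneg (mul_nonneg hM0 (sq_nonneg ρ)) (sub_nonneg.2 hρA)]

/-- Stability of the approximate solution `vv` away from the focus: the squared `L²` error grows
by at most a fixed factor, up to an `O(ε)` contribution. -/
lemma vv_estimate (hd : 2 ≤ d) (hγ : 0 < γ ∧ γ < 1) (a : SchwartzMap (Ed d) ℂ) :
    ∃ C : ℝ, 0 ≤ C ∧ ∀ (m ε : ℝ) (ψ : ℝ → Ed d → ℂ), 0 < m → 0 < ε → ε ≤ 1 → Sol γ ε ψ →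
      (∫ x, ‖ψ 0 x‖ ^ 2 = ∫ y, ‖a y‖ ^ 2) → ∀ a1 b1, Icc a1 b1 ⊆ Icc 0 Real.pi →
      (∀ t ∈ Icc a1 b1, m ≤ |Real.cos t|) → ∀ t ∈ Icc a1 b1,
      ∫ x, ‖ψ t x - vv γ (fun y => a y) ε t x‖ ^ 2 ≤
        C * ((∫ x, ‖ψ a1 x - vv γ (fun y => a y) ε a1 x‖ ^ 2) + ε / m ^ 2) := by
  obtain ⟨Cb, hCb, hb⟩ := schwartz_bdd a
  obtain ⟨CR, hCR, hR⟩ := vR_L2 hd hγ a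
  set A : ℝ := Real.sqrt (∫ y, ‖a y‖ ^ 2) with hA
  have hA0 : 0 ≤ A := Real.sqrt_nonneg _
  have hA2 : A ^ 2 = ∫ y, ‖a y‖ ^ 2 := Real.sq_sqrt (integral_nonneg fun y => by positivity)
  have haL : L2le (fun y => a y) (A ^ 2) := hA2 ▸ schwartz_L2 a
  set M0 : ℝ := Real.sqrt (Cb ^ 2 * kap d (2 * γ) + A ^ 2) with hM0d
  have hM0 : 0 ≤ M0 := Real.sqrt_nonneg _
  have hMle : Mle γ (fun y => a y) M0 := Mle_of_bdd hd hγ.1.le hγ.2 haL hb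
  set K : ℝ := 8 * A * M0 with hK
  set E : ℝ := 2 * A * CR * Real.pi with hE
  have hK0 : 0 ≤ K := by positivity
  have hE0 : 0 ≤ E := by have := Real.pi_pos; positivity
  refine ⟨(1 + E) * Real.exp (K * GG γ Real.pi), by positivity,
    fun m ε ψ hm hε hε1 hψ hmass a1 b1 hsub hcm t ht => ?_⟩
  have hc : ∀ t ∈ Icc a1 b1, Real.cos t ≠ 0 := fun t ht => abs_pos.1 (hm.trans_le (hcm t ht))
  set v := vv γ (fun y => a y) ε with hv
  obtain ⟨Kψ, hKψ0, hKψ⟩ := hψ.bound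
  have hab : a1 ≤ b1 := ht.1.trans ht.2
  have hvg := vv_good hd hγ a (ε := ε) hsub hc
  have hψA : ∀ s ∈ Icc a1 b1, L2le (ψ s) (A ^ 2) := fun s hs =>
    ⟨(hKψ s (hsub hs)).1.1, by rw [hψ.mass hd hγ ⟨hε, hε1⟩ (hsub hs), hmass, hA2]⟩
  have hvA : ∀ s ∈ Icc a1 b1, L2le (v s) (A ^ 2) := fun s hs =>
    scale_L2le (hc s hs) (vv_norm (hc s hs)) (hvg.smooth s hs).continuous.aestronglyMeasurable haL
  set y : ℝ → ℝ := fun s => ∫ x, ‖ψ s x - v s x‖ ^ 2 with hy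
  set h : ℝ → ℝ := fun s => ∫ x, (ψ s x * (starRingEnd ℂ) (v s x)).re with hh
  have hy0 : ∀ s, 0 ≤ y s := fun s => integral_nonneg fun x => by positivity
  -- Both masses are `A²`, so the squared error is affine in the overlap.
  have hyh : ∀ s ∈ Icc a1 b1, y s = 2 * A ^ 2 - 2 * h s := fun s hs => by
    have e := sq_sub_integral (hψA s hs).1 (hvA s hs).1
    rw [hψ.mass hd hγ ⟨hε, hε1⟩ (hsub hs), hmass, ← hA2, hv, vv_mass (hc s hs), ← hA2] at e
    simp only [hy, hh]
    rw [e]; ring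
  have hyA : ∀ s ∈ Icc a1 b1, y s ≤ (2 * A) ^ 2 := fun s hs => by
    have := (sub_L2le hA0 hA0 (hψA s hs) (hvA s hs)).2
    rwa [← two_mul] at this
  have hk : ∀ s, 0 ≤ |Real.cos s| ^ (-γ) := fun s => by positivity
  have hsrc : ∀ s ∈ Icc a1 b1, ∫⁻ x, ‖Hdot ψ v (fun t x => deriv (fun s => ψ s x) t)
      (vvD γ (fun y => a y) ε) s x - Ldot ε (ψ s) (v s) x‖ₑ ≤
      ENNReal.ofReal (4 * A * (|Real.cos s| ^ (-γ) * M0) * y s + A * (CR * ε / m ^ 2)) := by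
    intro s hs
    have e : Real.sqrt (y s) ^ 2 = y s := Real.sq_sqrt (hy0 s)
    have := source_bound (R := vR γ (fun y => a y) ε s) (P := ψ) (Q := v)
      (DP := fun t x => deriv (fun s => ψ s x) t) (DQ := vvD γ (fun y => a y) ε) (t := s)
      (ρ := Real.sqrt (y s)) (N := CR * ε / m ^ 2) rfl rfl (hψ.eq s (hsub hs))
      (vv_eq hd hγ a hε.ne' (hc s hs)) (Mle_scale (hc s hs) (vv_norm (hc s hs)) hMle)
      (mul_nonneg (hk s) hM0) hA0 (Real.sqrt_nonneg _)
      (Real.sqrt_le_iff.2 ⟨by positivity, hyA s hs⟩) (by positivity)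
      (by rw [e]; exact ⟨(hψA s hs).1.sub (hvA s hs).1, le_rfl⟩) (hψA s hs) (hvA s hs)
      (hR ε m s hε hm (hsub hs) (hcm s hs))
      (fun x => by
        obtain ⟨C, _, hC⟩ := hψ.kernel hd hγ ‖x‖
        exact (hC s (hsub hs) x (by simp)).1)
      (fun x => scale_kernel_integrable (hc s hs) (vv_norm (hc s hs)) γ x
        (kernel_bound (by omega) hγ.1.le (by
          have : (2:ℝ) ≤ d := by exact_mod_cast hd
          linarith [hγ.2]) haL _ (fun y _ => hb y)).1)
    rwa [e] at this
  have hen : ∀ β : ℝ → ℝ, (∀ t, 0 ≤ β t) → (∀ s ∈ Icc a1 b1,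
      4 * A * (|Real.cos s| ^ (-γ) * M0) * y s + A * (CR * ε / m ^ 2) ≤ β s) →
      IntervalIntegrable β volume a1 b1 → ∀ s t, a1 ≤ s → s ≤ t → t ≤ b1 →
      |h t - h s| ≤ ∫ τ in s..t, β τ := by
    intro β hβ0 hβ hβi s t hs hst htb
    have hsub' : Icc s t ⊆ Icc a1 b1 := Icc_subset_Icc hs htb
    refine energy hε.le hst (((hψ.good hd hγ ⟨hε, hε1⟩).mono
      (hsub ⟨le_rfl, hab⟩).1 (hsub ⟨hab, le_rfl⟩).2).mono hs htb) (hvg.mono hs htb)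
      (fun τ hτ => (hKψ τ (hsub (hsub' hτ))).1) (fun τ hτ => (hKψ τ (hsub (hsub' hτ))).2.1)
      ((ae_restrict_mem measurableSet_Icc).mono fun τ hτ => hvA τ (hsub' hτ))
      (hvA s ⟨hs, hst.trans htb⟩).1 (hvA t ⟨hs.trans hst, htb⟩).1 ?_ hβ0
      ((ae_restrict_mem measurableSet_Icc).mono fun τ hτ =>
        (hsrc τ (hsub' hτ)).trans (ENNReal.ofReal_le_ofReal (hβ τ (hsub' hτ))))
    exact hβi.mono_set (by
      rw [uIcc_of_le hst, uIcc_of_le hab]; exact hsub')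
  have ck : ContinuousOn (fun s => |Real.cos s| ^ (-γ)) (Icc a1 b1) := fun s hs =>
    (cg_cont (hc s hs)).continuousWithinAt
  -- A crude bound on the source gives Lipschitz continuity of the overlap.
  have cy : ContinuousOn y (Icc a1 b1) := by
    have hmk : ∀ s ∈ Icc a1 b1, |Real.cos s| ^ (-γ) ≤ m ^ (-γ) := fun s hs =>
      Real.rpow_le_rpow_of_nonpos hm (hcm s hs) (by linarith [hγ.1])
    set L : ℝ := 4 * A * (m ^ (-γ) * M0) * (2 * A) ^ 2 + A * (CR * ε / m ^ 2) with hL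
    have hL0 : 0 ≤ L := by positivity
    have hlip := hen (fun _ => L) (fun _ => hL0) (fun s hs => by
      rw [hL]
      have h1 := hmk s hs
      have h2 := hyA s hs
      have h3 := hy0 s
      gcongr) intervalIntegrable_const
    have hl2 : ∀ s ∈ Icc a1 b1, ∀ t ∈ Icc a1 b1, s ≤ t → |h t - h s| ≤ L * (t - s) := by
      intro s hs t ht hst
      have := hlip s t hs.1 hst ht.2
      simpa [mul_comm] using this
    have hlh : LipschitzOnWith (Real.toNNReal L) h (Icc a1 b1) := by
      refine LipschitzOnWith.of_dist_le_mul fun s hs t ht => ?_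
      rw [Real.coe_toNNReal L hL0, Real.dist_eq, Real.dist_eq]
      rcases le_total s t with hst | hst
      · rw [abs_sub_comm, abs_sub_comm s t, abs_of_nonneg (sub_nonneg.2 hst)]
        exact hl2 s hs t ht hst
      · rw [abs_of_nonneg (sub_nonneg.2 hst)]
        exact hl2 t ht s hs hst
    exact (continuousOn_const.sub (continuousOn_const.mul hlh.continuousOn)).congr hyh
  have hfin := hen (fun s => 4 * A * (|Real.cos s| ^ (-γ) * M0) * y s + A * (CR * ε / m ^ 2))
    (fun s => by have := hk s; have := hy0 s; positivity) (fun s _ => le_rfl) (by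
      apply ContinuousOn.intervalIntegrable
      rw [uIcc_of_le hab]
      exact ((continuousOn_const.mul (ck.mul continuousOn_const)).mul cy).add continuousOn_const)
  -- With `y` continuous, the energy bound is linear in `y` with kernel `|cos|^{-γ}`, whose
  -- primitive `GG γ` stays bounded up to the focus.
  have hG := gronwall_int (a := a1) (b := b1) (c := y a1 + E * (ε / m ^ 2)) (y := y)
    (k := fun s => K * |Real.cos s| ^ (-γ)) (H := fun s => K * GG γ s) cy
    (continuousOn_const.mul ck) (fun s => mul_nonneg hK0 (hk s))
    (fun s hs => (GG_hasDerivAt hγ (hsub hs) (hc s hs)).const_mul K) (fun s hs => by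
      have h1 := hfin a1 s le_rfl hs.1 hs.2
      have i1 : IntervalIntegrable (fun τ => 4 * A * (|Real.cos τ| ^ (-γ) * M0) * y τ) volume a1 s := by
        apply ContinuousOn.intervalIntegrable
        rw [uIcc_of_le hs.1]
        exact ((continuousOn_const.mul (ck.mul continuousOn_const)).mul cy).mono
          (Icc_subset_Icc le_rfl hs.2)
      rw [intervalIntegral.integral_add i1 intervalIntegrable_const,
        intervalIntegral.integral_const, smul_eq_mul] at h1
      have h2 : ∫ τ in a1..s, K * |Real.cos τ| ^ (-γ) * y τ =
          2 * ∫ τ in a1..s, 4 * A * (|Real.cos τ| ^ (-γ) * M0) * y τ := by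
        rw [← intervalIntegral.integral_const_mul]
        refine intervalIntegral.integral_congr fun τ _ => ?_
        simp only [hK]; ring
      rw [h2, hyh s hs, hyh a1 ⟨le_rfl, hab⟩]
      have h3 : (s - a1) * (A * (CR * ε / m ^ 2)) * 2 ≤ E * (ε / m ^ 2) := by
        have h4 : s - a1 ≤ Real.pi := by
          linarith [(hsub hs).2, (hsub (⟨le_rfl, hab⟩ : a1 ∈ Icc a1 b1)).1]
        have h5 : 0 ≤ A * (CR * ε / m ^ 2) * 2 := by positivity
        calc _ = (s - a1) * (A * (CR * ε / m ^ 2) * 2) := by ring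
          _ ≤ Real.pi * (A * (CR * ε / m ^ 2) * 2) := by gcongr
          _ = _ := by rw [hE]; ring
      linarith [neg_abs_le (h s - h a1)]) ht
  refine hG.trans ?_
  have he : Real.exp (K * GG γ t - K * GG γ a1) ≤ Real.exp (K * GG γ Real.pi) := by
    apply Real.exp_le_exp.2
    have h1 := GG_nonneg hγ (hsub (⟨le_rfl, hab⟩ : a1 ∈ Icc a1 b1))
    have h2 := GG_mono hγ (hsub ht) ⟨Real.pi_pos.le, le_rfl⟩ (hsub ht).2
    nlinarith [mul_nonneg hK0 h1, mul_le_mul_of_nonneg_left h2 hK0]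
  have hq : 0 ≤ ε / m ^ 2 := by positivity
  have hy1 := hy0 a1
  calc _ ≤ ((1 + E) * (y a1 + ε / m ^ 2)) * Real.exp (K * GG γ Real.pi) := by
        refine mul_le_mul ?_ he (Real.exp_pos _).le (by positivity)
        nlinarith [mul_nonneg hE0 hy1]
    _ = _ := by ring
end

/-! ### The free Schrödinger propagator -/

section
open scoped FourierTransform RealInnerProductSpace

/-- The free Schrödinger propagator on Schwartz functions, through its Fourier multiplier: a uniform
bound, conservation of mass, and closeness to the identity for short times. -/
lemma exists_free {d : ℕ} (f : SchwartzMap (Ed d) ℂ) (s : ℝ) : ∃ g : SchwartzMap (Ed d) ℂ,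
    (∀ y, g y = ∫ ξ, cexp (2 * Real.pi * I * ((⟪y, ξ⟫ : ℝ) : ℂ) -
      2 * Real.pi ^ 2 * I * s * ((‖ξ‖ ^ 2 : ℝ) : ℂ)) * 𝓕 f ξ) ∧
    (∀ y, ‖g y‖ ≤ ∫ ξ, ‖𝓕 f ξ‖) ∧ (∫ y, ‖g y‖ ^ 2 = ∫ y, ‖f y‖ ^ 2) ∧
    L2le (fun y => g y - f y) ((2 * Real.pi ^ 2 * s) ^ 2 * ∫ ξ, ‖ξ‖ ^ 4 * ‖𝓕 f ξ‖ ^ 2) := by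
  have hnsq : (fun ξ : Ed d => ‖ξ‖ ^ 2).HasTemperateGrowth := by fun_prop
  have hT := (expI_growth (-(2 * Real.pi ^ 2 * s))).comp
    (hnsq)
  set m : Ed d → ℂ := (fun r : ℝ => cexp (I * ((-(2 * Real.pi ^ 2 * s) * r : ℝ) : ℂ))) ∘
    fun ξ : Ed d => ‖ξ‖ ^ 2 with hm
  set G : SchwartzMap (Ed d) ℂ := SchwartzMap.smulLeftCLM (𝕜 := ℂ) ℂ m (𝓕 f) with hG
  have hGe : ∀ ξ, G ξ = m ξ * 𝓕 f ξ := fun ξ => by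
    rw [hG, SchwartzMap.smulLeftCLM_apply_apply hT, smul_eq_mul]
  have hmn : ∀ ξ, ‖m ξ‖ = 1 := fun ξ => by
    simp only [hm, Function.comp]
    rw [mul_comm, Complex.norm_exp_ofReal_mul_I]
  have hge : ∀ y, 𝓕⁻ G y = ∫ ξ, cexp (2 * Real.pi * I * ((⟪y, ξ⟫ : ℝ) : ℂ) -
      2 * Real.pi ^ 2 * I * s * ((‖ξ‖ ^ 2 : ℝ) : ℂ)) * 𝓕 f ξ := by
    intro y
    rw [SchwartzMap.fourierInv_coe, Real.fourierInv_eq']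
    refine integral_congr_ae (ae_of_all _ fun ξ => ?_)
    simp only [hGe, smul_eq_mul, hm, Function.comp]
    rw [← mul_assoc, ← Complex.exp_add, real_inner_comm]
    congr 2
    push_cast; ring
  have hF : 𝓕 (𝓕⁻ G) = G := FourierTransform.fourier_fourierInv_eq G
  refine ⟨𝓕⁻ G, hge, fun y => ?_, ?_, ?_⟩
  · rw [hge]
    refine (norm_integral_le_integral_norm _).trans (le_of_eq ?_)
    refine integral_congr_ae (ae_of_all _ fun ξ => ?_)
    simp only [norm_mul]
    rw [show (2 * Real.pi * I * ((⟪y, ξ⟫ : ℝ) : ℂ) -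
      2 * Real.pi ^ 2 * I * s * ((‖ξ‖ ^ 2 : ℝ) : ℂ)) =
      ((2 * Real.pi * ⟪y, ξ⟫ - 2 * Real.pi ^ 2 * s * ‖ξ‖ ^ 2 : ℝ) : ℂ) * I by push_cast; ring,
      Complex.norm_exp_ofReal_mul_I, one_mul]
  · rw [← SchwartzMap.integral_norm_sq_fourier (𝓕⁻ G), hF, ← SchwartzMap.integral_norm_sq_fourier f]
    simp only [hGe, norm_mul, hmn, one_mul]
  · have hml : MemLp (fun y => (𝓕⁻ G - f) y) 2 volume := (𝓕⁻ G - f).memLp 2 volume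
    refine ⟨hml, ?_⟩
    have e := SchwartzMap.integral_norm_sq_fourier (𝓕⁻ G - f)
    have e2 : 𝓕 (𝓕⁻ G - f) = G - 𝓕 f := by
      have := (FourierTransform.fourierCLM ℂ (SchwartzMap (Ed d) ℂ)).map_sub (𝓕⁻ G) f
      simpa only [FourierTransform.fourierCLM_apply, hF] using this
    rw [e2] at e
    simp only [_root_.sub_apply] at e ⊢
    rw [← e, ← integral_const_mul]
    have hb : ∀ ξ, ‖G ξ - 𝓕 f ξ‖ ^ 2 ≤
        (2 * Real.pi ^ 2 * s) ^ 2 * (‖ξ‖ ^ 4 * ‖𝓕 f ξ‖ ^ 2) := by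
      intro ξ
      have h1 : ‖m ξ - 1‖ ≤ ‖-(2 * Real.pi ^ 2 * s) * ‖ξ‖ ^ 2‖ := by
        simp only [hm, Function.comp]
        exact Real.norm_exp_I_mul_ofReal_sub_one_le
      rw [hGe, show m ξ * 𝓕 f ξ - 𝓕 f ξ = (m ξ - 1) * 𝓕 f ξ by ring, norm_mul, mul_pow]
      calc _ ≤ ‖-(2 * Real.pi ^ 2 * s) * ‖ξ‖ ^ 2‖ ^ 2 * ‖𝓕 f ξ‖ ^ 2 := by gcongr
        _ = _ := by rw [Real.norm_eq_abs, sq_abs]; ring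
    have i1 : Integrable fun ξ => ‖G ξ - 𝓕 f ξ‖ ^ 2 :=
      ((G - 𝓕 f).memLp 2 volume).integrable_norm_pow two_ne_zero
    have i2 : Integrable fun ξ => ‖ξ‖ ^ 4 * ‖𝓕 f ξ‖ ^ 2 := by
      obtain ⟨C, hC, hb⟩ := schwartz_bdd (𝓕 f)
      have h4 : Integrable fun ξ => ‖ξ‖ ^ 4 * ‖𝓕 f ξ‖ := (𝓕 f).integrable_pow_mul volume 4
      refine (h4.mul_const C).mono' (by
        apply Continuous.aestronglyMeasurable
        have := (𝓕 f).continuous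
        fun_prop) (ae_of_all _ fun ξ => ?_)
      rw [Real.norm_of_nonneg (by positivity), sq, ← mul_assoc]
      exact mul_le_mul_of_nonneg_left (hb ξ) (by positivity)
    exact integral_mono i1 (i2.const_mul _) hb

end

/-! ### Mehler's formula -/

section
open scoped FourierTransform RealInnerProductSpace

/-- The damped version of `mehler`: moving the Fourier transform from `f` to the Gaussian. -/
lemma gauss_flip {d : ℕ} (f : SchwartzMap (Ed d) ℂ) {b : ℂ} (hb : 0 < b.re) (y : Ed d) :
    ∫ ξ, cexp (-b * ‖ξ‖ ^ 2 + 2 * Real.pi * I * ((⟪y, ξ⟫ : ℝ) : ℂ)) * 𝓕 f ξ =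
      (Real.pi / b) ^ (d / 2 : ℂ) * ∫ z, cexp (-Real.pi ^ 2 * ‖y - z‖ ^ 2 / b) * f z := by
  have h := VectorFourier.integral_fourierIntegral_smul_eq_flip (μ := (volume : Measure (Ed d)))
    (ν := (volume : Measure (Ed d))) (L := innerₗ (Ed d)) (e := Real.fourierChar)
    (g := fun z => f z) Real.continuous_fourierChar continuous_inner
    (GaussianFourier.integrable_cexp_neg_mul_sq_norm_add hb (2 * Real.pi * I) y) f.integrable
  rw [flip_innerₗ] at h
  have e1 : ∀ ξ, VectorFourier.fourierIntegral Real.fourierChar volume (innerₗ (Ed d))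
      (fun z => f z) ξ = 𝓕 f ξ := fun ξ => rfl
  have e2 := fun z => fourier_gaussian_innerProductSpace' hb y z
  simp only [e1, smul_eq_mul] at h
  rw [← h, ← integral_const_mul]
  refine integral_congr_ae (ae_of_all _ fun z => ?_)
  have := e2 z
  simp only [finrank_euclideanSpace, Fintype.card_fin] at this
  simp only [← mul_assoc]
  rw [← this]
  rfl

/-- The principal branch of `(i s)^{-d/2}`: the sign `σ` of `s` determines the phase `e^{-iσdπ/4}`. -/
lemma mehler_const {d : ℕ} {s : ℝ} (hs : s ≠ 0) {σ : ℝ} (hσ : σ * |s| = s) :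
    (Real.pi / (2 * Real.pi ^ 2 * I * s) : ℂ) ^ (d / 2 : ℂ) =
      (((2 * Real.pi * |s|) ^ (-(d : ℝ) / 2) : ℝ) : ℂ) * cexp (-I * ((σ * d * Real.pi / 4 : ℝ) : ℂ)) := by
  have hs' : 0 < |s| := abs_pos.2 hs
  have hσ2 : σ = 1 ∨ σ = -1 := by
    rcases lt_or_gt_of_ne hs with h | h
    · right; rw [abs_of_neg h] at hσ; have : (σ + 1) * s = 0 := by linarith
      rcases mul_eq_zero.1 this with h' | h'
      · linarith
      · exact absurd h' hs
    · left; rw [abs_of_pos h] at hσ; exact mul_right_cancel₀ hs (by linarith)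
  have hss : σ * σ = 1 := by rcases hσ2 with rfl | rfl <;> norm_num
  have hsc : ((σ : ℝ) : ℂ) * σ = 1 := by exact_mod_cast hss
  have hp := Real.pi_pos
  have hr : (0:ℝ) < (2 * Real.pi * |s|)⁻¹ := by positivity
  have e : (Real.pi / (2 * Real.pi ^ 2 * I * s) : ℂ) =
      (((2 * Real.pi * |s|)⁻¹ : ℝ) : ℂ) * cexp (((-(σ * (Real.pi / 2)) : ℝ) : ℂ) * I) := by
    have : cexp (((-(σ * (Real.pi / 2)) : ℝ) : ℂ) * I) = -σ * I := by
      rw [Complex.exp_mul_I, ← Complex.ofReal_cos, ← Complex.ofReal_sin]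
      rcases hσ2 with rfl | rfl <;> simp
    rw [this]
    conv_lhs => rw [← hσ]
    have h1 : ((|s| : ℝ) : ℂ) ≠ 0 := by exact_mod_cast hs'.ne'
    have h2 : ((Real.pi : ℝ) : ℂ) ≠ 0 := by exact_mod_cast hp.ne'
    have h3 : (σ : ℂ) ≠ 0 := by intro h0; rw [h0] at hsc; simp at hsc
    push_cast
    field_simp
    rw [Complex.I_sq, sq, hsc]; ring
  have hd : (d / 2 : ℂ) = (((d : ℝ) / 2 : ℝ) : ℂ) := by push_cast; rfl
  rw [e, hd]
  set l := Real.log (2 * Real.pi * |s|)⁻¹ with hl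
  have e3 : (((2 * Real.pi * |s|)⁻¹ : ℝ) : ℂ) * cexp (((-(σ * (Real.pi / 2)) : ℝ) : ℂ) * I) =
      cexp (l + ((-(σ * (Real.pi / 2)) : ℝ) : ℂ) * I) := by
    rw [Complex.exp_add, ← Complex.ofReal_exp, hl, Real.exp_log hr]
  have him : (l + ((-(σ * (Real.pi / 2)) : ℝ) : ℂ) * I).im = -(σ * (Real.pi / 2)) := by simp
  rw [e3, Complex.cpow_def_of_ne_zero (Complex.exp_ne_zero _), Complex.log_exp]
  · rw [Real.rpow_def_of_pos (by positivity), Complex.ofReal_exp, ← Complex.exp_add,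
      show Real.log (2 * Real.pi * |s|) = -l by rw [hl, Real.log_inv, neg_neg]]
    congr 1
    push_cast
    ring
  · rw [him]; rcases hσ2 with rfl | rfl <;> linarith
  · rw [him]; rcases hσ2 with rfl | rfl <;> linarith

/-- Mehler's formula for the free flow: the Fourier multiplier `e^{-2π²is|ξ|²}` is the convolution
with a Gaussian kernel of imaginary variance, the phase of the prefactor depending on the sign `σ`
of `s`. It is obtained from the Gaussian case by letting the damping parameter tend to `0`. -/
lemma mehler {d : ℕ} (f : SchwartzMap (Ed d) ℂ) {s : ℝ} (hs : s ≠ 0) {σ : ℝ} (hσ : σ * |s| = s)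
    (y : Ed d) :
    ∫ ξ, cexp (2 * Real.pi * I * ((⟪y, ξ⟫ : ℝ) : ℂ) -
      2 * Real.pi ^ 2 * I * s * ((‖ξ‖ ^ 2 : ℝ) : ℂ)) * 𝓕 f ξ =
      (((2 * Real.pi * |s|) ^ (-(d : ℝ) / 2) : ℝ) : ℂ) * cexp (-I * ((σ * d * Real.pi / 4 : ℝ) : ℂ)) *
        ∫ z, cexp (I * ((‖y - z‖ ^ 2 / (2 * s) : ℝ) : ℂ)) * f z := by
  have hp := Real.pi_pos
  let b : ℝ → ℂ := fun η => η + 2 * Real.pi ^ 2 * I * s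
  have hbre : ∀ η, (b η).re = η := fun η => by
    simp [b, ← Complex.ofReal_pow]
  have hb0 : b 0 ≠ 0 := by
    simp only [b, Complex.ofReal_zero, zero_add]
    have : (s : ℂ) ≠ 0 := by exact_mod_cast hs
    have h2 : ((Real.pi : ℝ) : ℂ) ≠ 0 := by exact_mod_cast hp.ne'
    simp [this, h2]
  have cb : ContinuousAt b 0 := by
    simp only [b]; fun_prop
  have tb : Tendsto b (nhdsWithin 0 (Ioi 0)) (nhds (b 0)) := cb.tendsto.mono_left nhdsWithin_le_nhds
  have hpos : ∀ᶠ η : ℝ in nhdsWithin 0 (Ioi 0), 0 < η := self_mem_nhdsWithin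
  have h1 : Tendsto (fun η : ℝ => ∫ ξ, cexp (-(b η) * ‖ξ‖ ^ 2 + 2 * Real.pi * I * ((⟪y, ξ⟫ : ℝ) : ℂ)) *
      𝓕 f ξ) (nhdsWithin 0 (Ioi 0)) (nhds (∫ ξ, cexp (-(b 0) * ‖ξ‖ ^ 2 +
        2 * Real.pi * I * ((⟪y, ξ⟫ : ℝ) : ℂ)) * 𝓕 f ξ)) := by
    refine tendsto_integral_filter_of_dominated_convergence (fun ξ => ‖𝓕 f ξ‖)
      (Eventually.of_forall fun η => ?_) ?_ (𝓕 f).integrable.norm (ae_of_all _ fun ξ => ?_)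
    · have := (𝓕 f).continuous
      apply Continuous.aestronglyMeasurable
      fun_prop
    · filter_upwards [hpos] with η hη
      refine ae_of_all _ fun ξ => ?_
      rw [norm_mul, Complex.norm_exp]
      refine mul_le_of_le_one_left (norm_nonneg _) (Real.exp_le_one_iff.2 ?_)
      rw [Complex.add_re, ← Complex.ofReal_pow, Complex.re_mul_ofReal, Complex.neg_re, hbre]
      have : (2 * Real.pi * I * ((⟪y, ξ⟫ : ℝ) : ℂ)).re = 0 := by simp
      rw [this]
      nlinarith [sq_nonneg ‖ξ‖]
    · exact (((tb.neg.mul_const _).add_const _).cexp).mul_const _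
  have h2 : Tendsto (fun η : ℝ => ∫ z, cexp (-Real.pi ^ 2 * ‖y - z‖ ^ 2 / b η) * f z)
      (nhdsWithin 0 (Ioi 0)) (nhds (∫ z, cexp (-Real.pi ^ 2 * ‖y - z‖ ^ 2 / b 0) * f z)) := by
    refine tendsto_integral_filter_of_dominated_convergence (fun z => ‖f z‖)
      (Eventually.of_forall fun η => ?_) ?_ f.integrable.norm (ae_of_all _ fun z => ?_)
    · have := f.continuous
      apply Continuous.aestronglyMeasurable
      fun_prop
    · filter_upwards [hpos] with η hη
      refine ae_of_all _ fun z => ?_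
      rw [norm_mul, Complex.norm_exp]
      refine mul_le_of_le_one_left (norm_nonneg _) (Real.exp_le_one_iff.2 ?_)
      have : -(Real.pi : ℂ) ^ 2 * ‖y - z‖ ^ 2 / b η =
          ((-(Real.pi ^ 2 * ‖y - z‖ ^ 2) : ℝ) : ℂ) * (b η)⁻¹ := by push_cast; ring
      rw [this, Complex.re_ofReal_mul, Complex.inv_re, hbre]
      have : 0 ≤ η / normSq (b η) := div_nonneg hη.le (normSq_nonneg _)
      nlinarith [mul_nonneg (mul_nonneg (sq_nonneg Real.pi) (sq_nonneg ‖y - z‖)) this]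
    · exact ((tendsto_const_nhds.div tb hb0).cexp).mul_const _
  have h3 : Tendsto (fun η : ℝ => (Real.pi / b η : ℂ) ^ (d / 2 : ℂ)) (nhdsWithin 0 (Ioi 0))
      (nhds ((Real.pi / b 0 : ℂ) ^ (d / 2 : ℂ))) := by
    refine (tendsto_const_nhds.div tb hb0).cpow tendsto_const_nhds (Or.inr ?_)
    -- `π / b 0` is a nonzero multiple of `I`, so it avoids the branch cut.
    simp only [b, Complex.ofReal_zero, zero_add]
    have e : (Real.pi / (2 * Real.pi ^ 2 * I * s) : ℂ) = ((-(2 * Real.pi * s)⁻¹ : ℝ) : ℂ) * I := by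
      have h1 : (s : ℂ) ≠ 0 := by exact_mod_cast hs
      have h2 : ((Real.pi : ℝ) : ℂ) ≠ 0 := by exact_mod_cast hp.ne'
      push_cast
      field_simp
      rw [Complex.I_sq, neg_neg]
    rw [e]
    simp [hs, hp.ne']
  have h4 := tendsto_nhds_unique (h1.congr' (by
    filter_upwards [hpos] with η hη
    exact gauss_flip f (by rw [hbre]; exact hη) y)) (h3.mul h2)
  simp only [b, Complex.ofReal_zero, zero_add] at h4
  rw [mehler_const hs hσ] at h4
  have e5 : ∀ z, -(Real.pi : ℂ) ^ 2 * ‖y - z‖ ^ 2 / (2 * Real.pi ^ 2 * I * s) =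
      I * ((‖y - z‖ ^ 2 / (2 * s) : ℝ) : ℂ) := fun z => by
    have h1 : (s : ℂ) ≠ 0 := by exact_mod_cast hs
    have h2 : ((Real.pi : ℝ) : ℂ) ≠ 0 := by exact_mod_cast hp.ne'
    push_cast
    field_simp
    rw [Complex.I_sq]; ring
  simp only [e5] at h4
  rw [← h4]
  refine integral_congr_ae (ae_of_all _ fun ξ => ?_)
  simp only
  congr 2
  push_cast; ring

end

/-! ### Fourier integrals over the paraboloid -/

section
open scoped FourierTransform RealInnerProductSpace

/-- The paraboloid `z ↦ (|z|², z)`. -/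
def par {d : ℕ} (z : Ed d) : ℝ × Ed d := (‖z‖ ^ 2, z)

lemma par_cont {d : ℕ} : Continuous (par (d := d)) := by unfold par; fun_prop

/-- The real inner product of `ℝ^d` as a bilinear map. -/
def innerB (d : ℕ) : Ed d →L[ℝ] Ed d →L[ℝ] ℝ := innerSL ℝ

lemma innerB_apply {d : ℕ} (x y : Ed d) : innerB d x y = ⟪x, y⟫ := rfl

/-- The pairing for which Fourier integrals over the paraboloid are the integrals
`∫ e^{-i(s|z|²/2 + y·z)/ε} F(z) dz`. -/
def pairL (d : ℕ) (ε : ℝ) : (ℝ × Ed d) →L[ℝ] (ℝ × Ed d) →L[ℝ] ℝ :=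
  (2 * Real.pi)⁻¹ • ((2 * ε)⁻¹ • (ContinuousLinearMap.mul ℝ ℝ).bilinearComp
      (ContinuousLinearMap.fst ℝ ℝ (Ed d)) (ContinuousLinearMap.fst ℝ ℝ (Ed d)) +
    ε⁻¹ • (innerB d).bilinearComp
      (ContinuousLinearMap.snd ℝ ℝ (Ed d)) (ContinuousLinearMap.snd ℝ ℝ (Ed d)))

lemma pairL_apply {d : ℕ} (ε : ℝ) (v w : ℝ × Ed d) :
    pairL d ε v w = (2 * Real.pi)⁻¹ * ((2 * ε)⁻¹ * (v.1 * w.1) + ε⁻¹ * ⟪v.2, w.2⟫) := by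
  simp [pairL, innerB_apply]
  ring

/-- A continuous amplitude all of whose moments on the paraboloid are finite. -/
def Mom {d : ℕ} (F : ℝ × Ed d → ℂ) : Prop :=
  Continuous F ∧ ∀ n : ℕ, Integrable fun z : Ed d => ‖par z‖ ^ n * ‖F (par z)‖

lemma Mom.mul {d : ℕ} {F : ℝ × Ed d → ℂ} (h : Mom F) (ℓ : (ℝ × Ed d) →L[ℝ] ℝ) (c : ℂ) :
    Mom fun v => c * (ℓ v : ℂ) * F v := by
  refine ⟨(continuous_const.mul (Complex.continuous_ofReal.comp ℓ.continuous)).mul h.1,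
    fun n => ?_⟩
  refine ((h.2 (n + 1)).const_mul (‖c‖ * ‖ℓ‖)).mono' ?_ (ae_of_all _ fun z => ?_)
  · have h1 := par_cont (d := d)
    have h2 := h.1
    apply Continuous.aestronglyMeasurable
    fun_prop
  · rw [Real.norm_of_nonneg (by positivity), norm_mul, norm_mul, Complex.norm_real]
    have := ℓ.le_opNorm (par z)
    calc _ ≤ ‖par z‖ ^ n * (‖c‖ * (‖ℓ‖ * ‖par z‖) * ‖F (par z)‖) := by gcongr
      _ = _ := by ring

/-- The Fourier integral over the paraboloid. -/
def osc {d : ℕ} (ε : ℝ) (F : ℝ × Ed d → ℂ) : ℝ × Ed d → ℂ :=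
  VectorFourier.fourierIntegral Real.fourierChar (Measure.map par volume)
    (pairL d ε).toLinearMap₁₂ F

lemma Mom.map {d : ℕ} {F : ℝ × Ed d → ℂ} (h : Mom F) (n : ℕ) :
    Integrable (fun v => ‖v‖ ^ n * ‖F v‖) (Measure.map par (volume : Measure (Ed d))) := by
  have h2 := h.1
  rw [integrable_map_measure (by
    apply Continuous.aestronglyMeasurable; fun_prop) par_cont.aemeasurable]
  exact h.2 n

lemma Mom.int {d : ℕ} {F : ℝ × Ed d → ℂ} (h : Mom F) :
    Integrable F (Measure.map par (volume : Measure (Ed d))) := by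
  have := h.map 0
  simp only [pow_zero, one_mul] at this
  exact (integrable_norm_iff h.1.aestronglyMeasurable).1 this

lemma osc_eq {d : ℕ} {ε : ℝ} {F : ℝ × Ed d → ℂ} (h : Mom F) (w : ℝ × Ed d) :
    osc ε F w = ∫ z, cexp (-I * ((w.1 * ‖z‖ ^ 2 / (2 * ε) + ⟪z, w.2⟫ / ε : ℝ) : ℂ)) * F (par z) := by
  have hF := h.1
  unfold osc VectorFourier.fourierIntegral
  rw [integral_map par_cont.aemeasurable]
  · refine integral_congr_ae (ae_of_all _ fun z => ?_)
    simp only [Circle.smul_def, Real.fourierChar_apply, smul_eq_mul]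
    congr 2
    change ((2 * Real.pi * -(pairL d ε (par z) w) : ℝ) : ℂ) * I = _
    have hp : 2 * Real.pi ≠ 0 := by positivity
    rw [pairL_apply, mul_neg, ← mul_assoc, mul_inv_cancel₀ hp, par]
    push_cast; ring
  · apply Continuous.aestronglyMeasurable
    have : Continuous fun v : ℝ × Ed d => Real.fourierChar (-(pairL d ε v w)) :=
      Real.continuous_fourierChar.comp (by fun_prop)
    exact this.smul hF

lemma osc_contDiff {d : ℕ} {ε : ℝ} {F : ℝ × Ed d → ℂ} (h : Mom F) : ContDiff ℝ 2 (osc ε F) := by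
  exact VectorFourier.contDiff_fourierIntegral (N := 2) (pairL d ε) fun n _ => h.map n

lemma osc_fderiv {d : ℕ} {ε : ℝ} {F : ℝ × Ed d → ℂ} (h : Mom F) (w u : ℝ × Ed d) :
    fderiv ℝ (osc ε F) w u =
      osc ε (fun v => -(2 * Real.pi * I) * (((pairL d ε).flip u v : ℝ) : ℂ) * F v) w := by
  have h1 : Integrable (fun v => ‖v‖ * ‖F v‖) (Measure.map par (volume : Measure (Ed d))) := by
    simpa using h.map 1
  have hd := VectorFourier.hasFDerivAt_fourierIntegral (pairL d ε) h.int h1 w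
  have hi : Integrable (VectorFourier.fourierSMulRight (pairL d ε) F)
      (Measure.map par (volume : Measure (Ed d))) := by
    refine (h1.const_mul (2 * Real.pi * ‖pairL d ε‖)).mono'
      h.1.aestronglyMeasurable.fourierSMulRight (ae_of_all _ fun v => ?_)
    refine (VectorFourier.norm_fourierSMulRight_le _ _ _).trans (le_of_eq (by ring))
  unfold osc
  rw [hd.fderiv, VectorFourier.fourierIntegral_continuousLinearMap_apply
    Real.continuous_fourierChar hi]
  congr 1
  funext v
  simp [mul_assoc]

lemma osc_pd {d : ℕ} {ε s : ℝ} {F : ℝ × Ed d → ℂ} (h : Mom F) (i : Fin d) :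
    pd d i (fun y => osc ε F (s, y)) = fun y => osc ε (fun v => -(2 * Real.pi * I) *
      (((pairL d ε).flip (0, EuclideanSpace.single i 1) v : ℝ) : ℂ) * F v) (s, y) := by
  funext y
  have h1 : HasFDerivAt (fun y : Ed d => (s, y)) (ContinuousLinearMap.inr ℝ ℝ (Ed d)) y :=
    hasFDerivAt_prodMk_right s y
  have h2 := (((osc_contDiff (ε := ε) h).differentiable two_ne_zero) (s, y)).hasFDerivAt.comp y h1
  rw [← osc_fderiv h, pd]
  have : (fun y => osc ε F (s, y)) = osc ε F ∘ fun y : Ed d => (s, y) := rfl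
  rw [this, h2.fderiv]
  simp

/-- Integrals over the paraboloid solve the free Schrödinger equation. -/
lemma osc_schrodinger {d : ℕ} {ε : ℝ} (hε : ε ≠ 0) {F : ℝ × Ed d → ℂ} (h : Mom F) (s τ : ℝ)
    (y : Ed d) : fderiv ℝ (osc ε F) (s, y) (τ, 0) =
      I * ε / 2 * τ * lap d (fun y => osc ε F (s, y)) y := by
  rw [osc_fderiv h, lap_eq]
  simp only [osc_pd h]
  have hm := fun i : Fin d => h.mul ((pairL d ε).flip (0, EuclideanSpace.single i 1))
    (-(2 * Real.pi * I))
  have hm2 := fun i : Fin d => (hm i).mul ((pairL d ε).flip (0, EuclideanSpace.single i 1))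
    (-(2 * Real.pi * I))
  have hi : ∀ {G : ℝ × Ed d → ℂ}, Mom G → Integrable fun z : Ed d =>
      cexp (-I * ((s * ‖z‖ ^ 2 / (2 * ε) + ⟪z, y⟫ / ε : ℝ) : ℂ)) * G (par z) := by
    intro G hG
    have h0 := hG.2 0
    simp only [pow_zero, one_mul] at h0
    refine h0.mono' ?_ (ae_of_all _ fun z => ?_)
    · have h1 := par_cont (d := d)
      have h2 := hG.1
      apply Continuous.aestronglyMeasurable
      fun_prop
    · rw [norm_mul, neg_mul, ← mul_neg, mul_comm I, ← Complex.ofReal_neg,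
        Complex.norm_exp_ofReal_mul_I, one_mul]
  have hpd : ∀ i : Fin d, pd d i (fun y => osc ε (fun v => -(2 * Real.pi * I) *
      (((pairL d ε).flip (0, EuclideanSpace.single i 1) v : ℝ) : ℂ) * F v) (s, y)) y = _ := fun i =>
    (congrFun (osc_pd (hm i) i) y).trans (osc_eq (hm2 i) (s, y))
  simp only [hpd]
  rw [osc_eq (h.mul _ _), ← integral_finsetSum _ fun i _ => hi (hm2 i), ← integral_const_mul]
  refine integral_congr_ae (ae_of_all _ fun z => ?_)
  have hz : ((‖z‖ ^ 2 : ℝ) : ℂ) = ∑ i, ((z i : ℝ) : ℂ) ^ 2 := by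
    rw [EuclideanSpace.norm_sq_eq]; push_cast
    refine Finset.sum_congr rfl fun i _ => ?_
    rw [← Complex.ofReal_pow, ← Complex.ofReal_pow, Real.norm_eq_abs, sq_abs]
  have hpi : ((Real.pi : ℝ) : ℂ) ≠ 0 := by exact_mod_cast Real.pi_ne_zero
  have hε' : (ε : ℂ) ≠ 0 := by exact_mod_cast hε
  simp only [ContinuousLinearMap.flip_apply, pairL_apply, par, inner_zero_right, mul_zero, add_zero,
    zero_add, EuclideanSpace.inner_single_right, one_mul, conj_trivial]
  rw [← Finset.mul_sum]
  have : ∀ i, -(2 * Real.pi * I) * (((2 * Real.pi)⁻¹ * (ε⁻¹ * z i) : ℝ) : ℂ) *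
      (-(2 * Real.pi * I) * (((2 * Real.pi)⁻¹ * (ε⁻¹ * z i) : ℝ) : ℂ) * F (‖z‖ ^ 2, z)) =
      -(ε : ℂ)⁻¹ ^ 2 * F (‖z‖ ^ 2, z) * ((z i : ℝ) : ℂ) ^ 2 := fun i => by
    push_cast
    field_simp
    rw [Complex.I_sq]; ring
  simp only [this]
  rw [← Finset.mul_sum, ← hz]
  push_cast
  field_simp

end

/-! ### The linear solution through the focus -/

section
open scoped FourierTransform RealInnerProductSpace

lemma schwartz_mom {d : ℕ} (f : SchwartzMap (Ed d) ℂ) : Mom fun v : ℝ × Ed d => f v.2 := by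
  have hc : Continuous fun v : ℝ × Ed d => f v.2 := f.continuous.comp continuous_snd
  refine ⟨hc, fun n => ?_⟩
  have i1 : Integrable fun z : Ed d => ‖z‖ ^ (2 * n) * ‖f z‖ :=
    f.integrable_pow_mul volume (2 * n)
  have i2 : Integrable fun z : Ed d => ‖z‖ ^ n * ‖f z‖ := f.integrable_pow_mul volume n
  refine (i1.add i2).mono' ?_ (ae_of_all _ fun z => ?_)
  · have h1 := par_cont (d := d)
    apply Continuous.aestronglyMeasurable
    exact (h1.norm.pow n).mul (hc.comp h1).norm
  · rw [Real.norm_of_nonneg (by positivity)]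
    have : ‖par z‖ ^ n ≤ ‖z‖ ^ (2 * n) + ‖z‖ ^ n := by
      have h : ‖par z‖ = max (‖z‖ ^ 2) ‖z‖ := by
        rw [par, Prod.norm_mk, Real.norm_of_nonneg (by positivity)]
      rw [h, pow_mul]
      rcases max_cases (‖z‖ ^ 2) ‖z‖ with h | h <;> rw [h.1]
      · exact le_add_of_nonneg_right (by positivity)
      · exact le_add_of_nonneg_left (by positivity)
    calc _ ≤ (‖z‖ ^ (2 * n) + ‖z‖ ^ n) * ‖f z‖ := by gcongr; rfl
      _ = _ := by simp only [Pi.add_apply]; ring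

/-- The free wave packet focusing at `t = π/2`, in lens variables. -/
def WB {d : ℕ} (ε : ℝ) (f : SchwartzMap (Ed d) ℂ) (z : ℝ × Ed d) : ℂ :=
  (((2 * Real.pi * ε) ^ (-(d : ℝ) / 2) : ℝ) : ℂ) * cexp (-I * ((d * Real.pi / 4 : ℝ) : ℂ)) *
    osc ε (fun v => f v.2) z

lemma WB_contDiff {d : ℕ} (ε : ℝ) (f : SchwartzMap (Ed d) ℂ) : ContDiff ℝ 2 (WB ε f) :=
  contDiff_const.mul (osc_contDiff (schwartz_mom f))

/-- The free Schrödinger equation for `WB`, in the form consumed by `lns_eq`. -/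
lemma WB_schrodinger {d : ℕ} {ε : ℝ} (hε : ε ≠ 0) (f : SchwartzMap (Ed d) ℂ) (s τ : ℝ) (y : Ed d) :
    fderiv ℝ (WB ε f) (s, y) (τ, 0) = I * ε / 2 * τ * lap d (fun y => WB ε f (s, y)) y := by
  have h := osc_contDiff (ε := ε) (schwartz_mom f)
  have h2 : ContDiff ℝ 2 fun y : Ed d => osc ε (fun v : ℝ × Ed d => f v.2) (s, y) :=
    h.comp (contDiff_const.prodMk contDiff_id)
  have h3 := ((h.differentiable two_ne_zero (s, y)).hasFDerivAt.const_mul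
    ((((2 * Real.pi * ε) ^ (-(d : ℝ) / 2) : ℝ) : ℂ) * cexp (-I * ((d * Real.pi / 4 : ℝ) : ℂ)))).fderiv
  unfold WB
  rw [h3, lap_const_mul _ h2]
  simp only [_root_.smul_apply, smul_eq_mul]
  rw [osc_schrodinger hε (schwartz_mom f)]
  ring

/-- The exact solution of the linear equation with harmonic potential that passes through the
focus at `t = π/2`: the lens transform of `WB`, centred at the focus, where the free time is
`tan (t - π/2)`. -/
def ww {d : ℕ} (ε : ℝ) (f : SchwartzMap (Ed d) ℂ) : ℝ → Ed d → ℂ :=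
  lns ε (Real.pi / 2) (fun t => Real.tan (t - Real.pi / 2)) (WB ε f)

/-- The time derivative of `ww` where `sin t ≠ 0`. -/
def wwD {d : ℕ} (ε : ℝ) (f : SchwartzMap (Ed d) ℂ) : ℝ → Ed d → ℂ :=
  lnsD ε (Real.pi / 2) (fun t => Real.tan (t - Real.pi / 2))
    (fun t => 1 + Real.tan (t - Real.pi / 2) ^ 2) (WB ε f)

lemma ww_good {d : ℕ} {ε a b : ℝ} (f : SchwartzMap (Ed d) ℂ) (hs : ∀ t ∈ Icc a b, Real.sin t ≠ 0) :
    Good a b (ww ε f) (wwD ε f) := by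
  have hc : ∀ t ∈ Icc a b, Real.cos (t - Real.pi / 2) ≠ 0 := fun t ht => by
    rw [Real.cos_sub_pi_div_two]; exact hs t ht
  exact lns_good hc (fun t ht => tan_hda (hc t ht)) (fun t ht =>
    (continuousAt_const.add ((tan_hda (hc t ht)).continuousAt.pow 2)).continuousWithinAt)
    (WB_contDiff ε f)

/-- The lens transform of a free solution solves the harmonic Schrödinger equation exactly. -/
lemma ww_eq {d : ℕ} {ε t : ℝ} (hε : ε ≠ 0) (f : SchwartzMap (Ed d) ℂ) (hs : Real.sin t ≠ 0)
    (x : Ed d) : wwD ε f t x = I * ε / 2 * lap d (ww ε f t) x +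
      -I * ((‖x‖ ^ 2 / (2 * ε) : ℝ) : ℂ) * ww ε f t x := by
  have hc : Real.cos (t - Real.pi / 2) ≠ 0 := by rwa [Real.cos_sub_pi_div_two]
  rw [wwD, lns_eq hε (WB_contDiff ε f), WB_schrodinger hε]
  have : ((1 + Real.tan (t - Real.pi / 2) ^ 2 : ℝ) : ℂ) = (sg (Real.pi / 2) t : ℂ) ^ 2 := by
    rw [← Complex.ofReal_pow, sg, inv_pow, ← Real.inv_one_add_tan_sq hc, inv_inv]
  rw [this, sub_self, mul_zero, mul_zero, add_zero]
  rfl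

/-- Mehler's formula: away from the focus, the solution `ww` is a lens transform of the free
evolution of `f` over the short time `ε tan t`; the phase records the Maslov shift. -/
lemma ww_mehler {d : ℕ} {ε t σ : ℝ} (hε : 0 < ε) (f : SchwartzMap (Ed d) ℂ) (hs : 0 < Real.sin t)
    (hc : Real.cos t ≠ 0) (hσ : σ * |Real.cos t| = Real.cos t) {g : Ed d → ℂ}
    (hg : ∀ y, g y = ∫ ξ, cexp (2 * Real.pi * I * ((⟪y, ξ⟫ : ℝ) : ℂ) -
      2 * Real.pi ^ 2 * I * ((ε * Real.tan t : ℝ) : ℂ) * ((‖ξ‖ ^ 2 : ℝ) : ℂ)) * 𝓕 f ξ) (x : Ed d) :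
    ww ε f t x = cexp (-I * (((1 - σ) * d * Real.pi / 4 : ℝ) : ℂ)) *
      (((|Real.cos t| ^ (-(d : ℝ) / 2) : ℝ) : ℂ) *
        (chirp (al ε 0 t) x * g ((Real.cos t)⁻¹ • x))) := by
  have hp := Real.pi_pos
  have hs0 := hs.ne'
  have htan : Real.tan t = Real.sin t / Real.cos t := Real.tan_eq_sin_div_cos t
  have ht0 : Real.tan t ≠ 0 := by rw [htan]; positivity
  have hca : 0 < |Real.cos t| := abs_pos.2 hc
  have habs : |ε * Real.tan t| = ε * (Real.sin t / |Real.cos t|) := by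
    rw [abs_mul, abs_of_pos hε, htan, abs_div, abs_of_pos hs]
  have hσ1 : σ * |ε * Real.tan t| = ε * Real.tan t := by
    rw [habs, htan]
    have hσ2 : σ * Real.cos t = |Real.cos t| := by
      have h1 : σ * σ * |Real.cos t| = σ * Real.cos t := by rw [mul_assoc, hσ]
      have h3 : |σ| = 1 := by
        have := congrArg abs hσ
        rw [abs_mul, abs_abs] at this
        exact mul_right_cancel₀ hca.ne' (by rw [this, one_mul])
      have h2 : σ * σ = 1 := by rw [← abs_mul_abs_self, h3, one_mul]
      rw [← h1, h2, one_mul]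
    field_simp
    rw [hσ2]
  have hc' : Real.cos (t - Real.pi / 2) = Real.sin t := Real.cos_sub_pi_div_two t
  have hθ : Real.tan (t - Real.pi / 2) = -(Real.cos t / Real.sin t) := by
    rw [Real.tan_eq_sin_div_cos, Real.sin_sub_pi_div_two, hc']; ring
  have hamp : Real.sin t ^ (-(d : ℝ) / 2) * (2 * Real.pi * ε) ^ (-(d : ℝ) / 2) =
      |Real.cos t| ^ (-(d : ℝ) / 2) * (2 * Real.pi * |ε * Real.tan t|) ^ (-(d : ℝ) / 2) := by
    rw [← Real.mul_rpow hs.le (by positivity), ← Real.mul_rpow hca.le (by positivity), habs]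
    congr 1
    field_simp
  rw [hg, mehler f (mul_ne_zero hε.ne' ht0) hσ1, ww, lns, lens, WB, osc_eq (schwartz_mom f),
    rh_eq (by rwa [hc']), hc', abs_of_pos hs]
  have hampC := congrArg (fun r : ℝ => (r : ℂ)) hamp
  simp only [Complex.ofReal_mul] at hampC
  have hph : cexp (-I * (((1 - σ) * d * Real.pi / 4 : ℝ) : ℂ)) *
      cexp (-I * ((σ * d * Real.pi / 4 : ℝ) : ℂ)) = cexp (-I * ((d * Real.pi / 4 : ℝ) : ℂ)) := by
    rw [← Complex.exp_add]; congr 1; push_cast; ring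
  have hint : chirp (al ε (Real.pi / 2) t) x * ∫ z, cexp (-I * ((Real.tan (t - Real.pi / 2) *
        ‖z‖ ^ 2 / (2 * ε) + ⟪z, sg (Real.pi / 2) t • x⟫ / ε : ℝ) : ℂ)) * f z =
      chirp (al ε 0 t) x * ∫ z, cexp (I * ((‖(Real.cos t)⁻¹ • x - z‖ ^ 2 /
        (2 * (ε * Real.tan t)) : ℝ) : ℂ)) * f z := by
    rw [← integral_const_mul, ← integral_const_mul]
    refine integral_congr_ae (ae_of_all _ fun z => ?_)
    simp only [chirp]
    rw [← mul_assoc, ← mul_assoc, ← Complex.exp_add, ← Complex.exp_add]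
    congr 2
    rw [neg_mul, ← mul_neg, ← mul_add, ← mul_add]
    congr 1
    rw [← Complex.ofReal_neg, ← Complex.ofReal_add, ← Complex.ofReal_add]
    congr 1
    have hcs : Real.cos t ^ 2 = 1 - Real.sin t ^ 2 := Real.cos_sq' t
    rw [al, al, hθ, sub_zero, htan, sg, hc', norm_sub_sq_real, norm_smul, real_inner_smul_left,
      real_inner_smul_right, real_inner_comm z x, mul_pow, norm_inv, Real.norm_eq_abs, inv_pow,
      sq_abs]
    field_simp
    rw [hcs]
    linear_combination (‖x‖ ^ 2 + ‖z‖ ^ 2) * hcs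
  calc _ = ((Real.sin t ^ (-(d : ℝ) / 2) : ℝ) : ℂ) * (((2 * Real.pi * ε) ^ (-(d : ℝ) / 2) : ℝ) : ℂ) *
        (cexp (-I * ((d * Real.pi / 4 : ℝ) : ℂ)) * (chirp (al ε (Real.pi / 2) t) x *
          ∫ z, cexp (-I * ((Real.tan (t - Real.pi / 2) *
            ‖z‖ ^ 2 / (2 * ε) + ⟪z, sg (Real.pi / 2) t • x⟫ / ε : ℝ) : ℂ)) * f z)) := by
        simp only [par]; ring
    _ = _ := by rw [hampC, hint, ← hph]; ring

end

/-! ### Matching at the focus and crossing it -/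

section
open scoped FourierTransform RealInnerProductSpace

lemma norm_expI_sub (r s : ℝ) : ‖cexp (-I * (r : ℂ)) - cexp (-I * (s : ℂ))‖ ≤ |r - s| := by
  have e : cexp (-I * (r : ℂ)) - cexp (-I * (s : ℂ)) =
      cexp ((-s : ℝ) * I) * (cexp (I * ((s - r : ℝ) : ℂ)) - 1) := by
    rw [mul_sub, ← Complex.exp_add, mul_one]
    congr 2 <;> push_cast <;> ring
  rw [e, norm_mul, Complex.norm_exp_ofReal_mul_I, one_mul, abs_sub_comm, ← Real.norm_eq_abs]
  exact Real.norm_exp_I_mul_ofReal_sub_one_le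

/-- The focusing solution built from the profile at `t = π/2`: its mass, its Hartree kernel bound,
and its `L²` distance to the geometric-optics approximation on either side of the focus. -/
lemma ww_data {d : ℕ} (hd : 2 ≤ d) {γ : ℝ} (hγ : 0 < γ ∧ γ < 1) (a : SchwartzMap (Ed d) ℂ) :
    ∃ (f : SchwartzMap (Ed d) ℂ) (M B : ℝ), 0 ≤ M ∧ 0 ≤ B ∧ ∀ ε t σ : ℝ, 0 < ε → 0 < Real.sin t →
      Real.cos t ≠ 0 → σ * |Real.cos t| = Real.cos t →
      MemLp (ww ε f t) 2 volume ∧ (∫ x, ‖ww ε f t x‖ ^ 2 = ∫ x, ‖a x‖ ^ 2) ∧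
      Mle γ (ww ε f t) (|Real.cos t| ^ (-γ) * M) ∧
      L2le (fun x => ww ε f t x - cexp (-I * (((1 - σ) * d * Real.pi / 4 : ℝ) : ℂ)) *
        vv γ (fun y => a y) ε t x)
        ((B * (ε * |Real.tan t| + |GG γ t - GG γ (Real.pi / 2)|)) ^ 2) := by
  obtain ⟨f, hf⟩ := exists_schwartz_profile hd hγ a (GG γ (Real.pi / 2))
  have hfn : ∀ y, ‖f y‖ = ‖a y‖ := fun y => by
    rw [hf]; exact BV_norm γ (fun y => a y) (GG γ (Real.pi / 2), y)
  obtain ⟨V, hV⟩ := (VK_growth hd hγ a).2 0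
  simp only [norm_iteratedFDeriv_zero] at hV
  have hV0 : 0 ≤ V := (norm_nonneg _).trans (hV 0)
  set A : ℝ := Real.sqrt (∫ y, ‖a y‖ ^ 2) with hA
  have hA0 : 0 ≤ A := Real.sqrt_nonneg _
  have hA2 : A ^ 2 = ∫ y, ‖a y‖ ^ 2 := Real.sq_sqrt (integral_nonneg fun y => by positivity)
  set F1 : ℝ := ∫ ξ, ‖𝓕 f ξ‖
  set J : ℝ := ∫ ξ, ‖ξ‖ ^ 4 * ‖𝓕 f ξ‖ ^ 2
  have hJ : 0 ≤ J := integral_nonneg fun y => by positivity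
  refine ⟨f, Real.sqrt (F1 ^ 2 * kap d (2 * γ) + A ^ 2), 2 * Real.pi ^ 2 * Real.sqrt J + V * A,
    Real.sqrt_nonneg _, by positivity, fun ε t σ hε hs hc hσ => ?_⟩
  obtain ⟨g, hg, hgb, hgm, hgf⟩ := exists_free f (ε * Real.tan t)
  have hm := fun x => ww_mehler hε f hs hc hσ hg x
  have hκ : ∀ r : ℝ, ‖cexp (-I * (r : ℂ))‖ = 1 := fun r => by
    rw [neg_mul, mul_comm I, ← neg_mul, ← Complex.ofReal_neg, Complex.norm_exp_ofReal_mul_I]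
  have hn : ∀ x, ‖ww ε f t x‖ = |Real.cos t| ^ (-(d : ℝ) / 2) * ‖g ((Real.cos t)⁻¹ • x)‖ :=
    fun x => by
    rw [hm, norm_mul, hκ, one_mul, norm_mul, norm_mul, norm_chirp, one_mul, Complex.norm_real,
      Real.norm_of_nonneg (by positivity)]
  have hfm : ∫ y, ‖f y‖ ^ 2 = A ^ 2 := by rw [hA2]; simp only [hfn]
  have hgA : L2le (fun y => g y) (A ^ 2) := ⟨(schwartz_L2 g).1, by rw [hgm, hfm]⟩
  have hwc : AEStronglyMeasurable (ww ε f t) volume := by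
    have := (ww_good (a := t) (b := t) (ε := ε) f (fun s hs' => by
      rw [Icc_self, mem_singleton_iff] at hs'; rw [hs']; exact hs.ne')).smooth t (by simp)
    exact this.continuous.aestronglyMeasurable
  have hvc : AEStronglyMeasurable (vv γ (fun y => a y) ε t) volume := by
    have hB := BV_contDiff hd hγ a
    have := (chirp_contDiff (d := d) (al ε 0 t) (n := 0)).continuous
    have hB2 : Continuous fun x : Ed d => BV γ (fun y => a y) (GG γ t, sg 0 t • x) :=
      hB.continuous.comp (by fun_prop)
    exact (continuous_const.mul (this.mul hB2)).aestronglyMeasurable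
  refine ⟨(scale_L2le hc hn hwc hgA).1, ?_, Mle_scale hc hn
    (Mle_of_bdd hd hγ.1.le hγ.2 hgA hgb), ?_⟩
  · simp only [scale_sq hn]
    rw [scale_integral hc fun y => ‖g y‖ ^ 2, hgm]
    simp only [hfn]
  · have hB1 : L2le (fun y => g y - f y)
        ((2 * Real.pi ^ 2 * Real.sqrt J * (ε * |Real.tan t|)) ^ 2) := by
      refine hgf.mono (le_of_eq ?_)
      have e : (2 * Real.pi ^ 2 * Real.sqrt J * (ε * |Real.tan t|)) ^ 2 =
          (2 * Real.pi ^ 2) ^ 2 * ε ^ 2 * |Real.tan t| ^ 2 * Real.sqrt J ^ 2 := by ring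
      rw [e, Real.sq_sqrt hJ, sq_abs]
      ring
    have hB2 : L2le (fun y => BV γ (fun y => a y) (GG γ t, y) - f y)
        ((V * A * |GG γ t - GG γ (Real.pi / 2)|) ^ 2) := by
      have hcont : Continuous fun y : Ed d => BV γ (fun y => a y) (GG γ t, y) :=
        (BV_contDiff hd hγ a).continuous.comp (by fun_prop)
      have hb : ∀ y, ‖BV γ (fun y => a y) (GG γ t, y) - f y‖ ≤
          V * |GG γ t - GG γ (Real.pi / 2)| * ‖a y‖ := fun y => by
        rw [hf, BV, ← mul_sub, norm_mul, mul_comm]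
        refine mul_le_mul_of_nonneg_right ((norm_expI_sub _ _).trans ?_) (norm_nonneg _)
        rw [← sub_mul, abs_mul, mul_comm]
        exact mul_le_mul_of_nonneg_right (hV y) (abs_nonneg _)
      have hmeas : AEStronglyMeasurable (fun y => BV γ (fun y => a y) (GG γ t, y) - f y) volume :=
        (hcont.sub f.continuous).aestronglyMeasurable
      have ha2 := (schwartz_L2 a).int
      have hsq : ∀ y, ‖BV γ (fun y => a y) (GG γ t, y) - f y‖ ^ 2 ≤
          (V * |GG γ t - GG γ (Real.pi / 2)|) ^ 2 * ‖a y‖ ^ 2 := fun y => by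
        rw [← mul_pow]; gcongr; exact hb y
      have hi := ha2.const_mul ((V * |GG γ t - GG γ (Real.pi / 2)|) ^ 2)
      have hi2 : Integrable fun y => ‖BV γ (fun y => a y) (GG γ t, y) - f y‖ ^ 2 :=
        hi.mono' (hmeas.norm.pow 2) (ae_of_all _ fun y => by
          rw [Real.norm_of_nonneg (by positivity)]; exact hsq y)
      refine ⟨(memLp_two_iff_integrable_sq_norm hmeas).2 hi2, (integral_mono hi2 hi hsq).trans_eq ?_⟩
      rw [integral_const_mul, ← hA2]; ring
    have hB := (sub_L2le (by positivity) (by positivity) hB1 hB2)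
    refine (scale_L2le hc (fun x => ?_) (hwc.sub (hvc.const_mul _)) hB).mono ?_
    · change ‖ww ε f t x - cexp (-I * (((1 - σ) * d * Real.pi / 4 : ℝ) : ℂ)) *
          vv γ (fun y => a y) ε t x‖ = _
      rw [hm, vv, lns, lens, rh_eq (by simpa using hc), sub_zero, ← mul_sub, ← mul_sub, ← mul_sub,
        norm_mul, hκ, one_mul, norm_mul, norm_mul, norm_chirp, one_mul, Complex.norm_real,
        Real.norm_of_nonneg (by positivity), sg, sub_zero, sub_sub_sub_cancel_right]
    · have h1 : 0 ≤ ε * |Real.tan t| := by positivity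
      have h2 := abs_nonneg (GG γ t - GG γ (Real.pi / 2))
      have h3 := Real.sqrt_nonneg J
      refine pow_le_pow_left₀ (by positivity) ?_ 2
      have h4 : 0 ≤ 2 * Real.pi ^ 2 * Real.sqrt J := by positivity
      have h5 : 0 ≤ V * A := by positivity
      nlinarith [mul_nonneg h4 h2, mul_nonneg h5 h1]

lemma cos_ne_zero_of_ne {t : ℝ} (h0 : 0 < t) (h1 : t < Real.pi) (h : t ≠ Real.pi / 2) :
    Real.cos t ≠ 0 := by
  rcases lt_or_gt_of_ne h with h | h
  · exact (Real.cos_pos_of_mem_Ioo ⟨by linarith, h⟩).ne'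
  · exact (Real.cos_neg_of_pi_div_two_lt_of_lt h (by linarith [Real.pi_pos])).ne

/-- Crossing the focus: over a time interval containing `π/2` the squared distance between a
solution and the linear focusing solution grows by at most the integral of `|cos|^{-γ}`, which is
small on short intervals. -/
lemma ww_cross {d : ℕ} (hd : 2 ≤ d) {γ : ℝ} (hγ : 0 < γ ∧ γ < 1) {ε A M : ℝ} (hε : 0 < ε)
    (hε1 : ε ≤ 1) {ψ : ℝ → Ed d → ℂ} (hψ : Sol γ ε ψ) (hA : 0 ≤ A) (hM : 0 ≤ M)
    (hmass : ∫ x, ‖ψ 0 x‖ ^ 2 = A ^ 2) (f : SchwartzMap (Ed d) ℂ)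
    (hw : ∀ t, 0 < Real.sin t → Real.cos t ≠ 0 → MemLp (ww ε f t) 2 volume ∧
      (∫ x, ‖ww ε f t x‖ ^ 2 = A ^ 2) ∧ Mle γ (ww ε f t) (|Real.cos t| ^ (-γ) * M))
    {a1 b1 : ℝ} (ha : 0 < a1) (hab : a1 ≤ b1) (hb : b1 < Real.pi) (ha2 : a1 ≠ Real.pi / 2)
    (hb2 : b1 ≠ Real.pi / 2) :
    ∫ x, ‖ψ b1 x - ww ε f b1 x‖ ^ 2 ≤ (∫ x, ‖ψ a1 x - ww ε f a1 x‖ ^ 2) +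
      2 * (M * A ^ 3) * (GG γ b1 - GG γ a1) := by
  have hsub : Icc a1 b1 ⊆ Icc 0 Real.pi := Icc_subset_Icc ha.le hb.le
  have ma : a1 ∈ Icc a1 b1 := ⟨le_rfl, hab⟩
  have mb : b1 ∈ Icc a1 b1 := ⟨hab, le_rfl⟩
  obtain ⟨Kψ, hKψ0, hKψ⟩ := hψ.bound
  have hs : ∀ t ∈ Icc a1 b1, 0 < Real.sin t := fun t ht =>
    Real.sin_pos_of_pos_of_lt_pi (ha.trans_le ht.1) (ht.2.trans_lt hb)
  have hψA : ∀ s ∈ Icc a1 b1, L2le (ψ s) (A ^ 2) := fun s hs =>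
    ⟨(hKψ s (hsub hs)).1.1, by rw [hψ.mass hd hγ ⟨hε, hε1⟩ (hsub hs), hmass]⟩
  have hwa := hw a1 (hs a1 ma) (cos_ne_zero_of_ne ha (hab.trans_lt hb) ha2)
  have hwb := hw b1 (hs b1 mb) (cos_ne_zero_of_ne (ha.trans_le hab) hb hb2)
  -- The bounds on `ww` fail only at the focus time, a null set.
  have hae : ∀ᵐ t ∂(volume.restrict (Icc a1 b1)), t ∈ Icc a1 b1 ∧ Real.cos t ≠ 0 := by
    have h1 : ∀ᵐ t ∂(volume.restrict (Icc a1 b1)), t ≠ Real.pi / 2 :=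
      ae_restrict_of_ae (Measure.ae_ne volume _)
    filter_upwards [ae_restrict_mem measurableSet_Icc, h1] with t ht h
    exact ⟨ht, cos_ne_zero_of_ne (ha.trans_le ht.1) (ht.2.trans_lt hb) h⟩
  have hen := energy (C := A ^ 2) (β := fun t => M * A ^ 3 * |Real.cos t| ^ (-γ)) hε.le hab
    ((hψ.good hd hγ ⟨hε, hε1⟩).mono ha.le hb.le)
    (ww_good f (ε := ε) fun t ht => (hs t ht).ne')
    (fun τ hτ => (hKψ τ (hsub hτ)).1) (fun τ hτ => (hKψ τ (hsub hτ)).2.1)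
    (hae.mono fun t ht => ⟨(hw t (hs t ht.1) ht.2).1, (hw t (hs t ht.1) ht.2).2.1.le⟩)
    hwa.1 hwb.1 ((cg_int' hγ (hsub ma) (hsub mb)).const_mul _) (fun t => by positivity)
    (hae.mono fun t ht => by
      have h := hw t (hs t ht.1) ht.2
      refine (lintegral_mono fun x => ?_).trans ((trilinear h.2.2 (by positivity) hA
        (hψA t ht.1) h.1.1).trans_eq (by congr 1; ring))
      rw [Hdot_sub_Ldot (R := 0) (hψ.eq t (hsub ht.1) x)
        ((ww_eq hε.ne' f (hs t ht.1).ne' x).trans (add_zero _).symm)]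
      simp only [← ofReal_norm]
      rw [← ENNReal.ofReal_mul (by positivity), ← ENNReal.ofReal_mul (by positivity)]
      apply ENNReal.ofReal_le_ofReal
      rw [map_zero, mul_zero, Complex.zero_re, add_zero, norm_mul]
      refine mul_le_mul (le_of_eq (by congr 1; ring)) ?_ (by positivity) (by positivity)
      rw [Real.norm_eq_abs]
      refine (Complex.abs_im_le_norm _).trans_eq ?_
      rw [norm_mul, Complex.norm_conj, mul_comm])
  rw [intervalIntegral.integral_const_mul, GG_sub hγ (hsub ma) (hsub mb)] at hen
  -- All masses equal `A²`, so the distances are determined by the overlaps.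
  rw [sq_sub_integral (hψA b1 mb).1 hwb.1, sq_sub_integral (hψA a1 ma).1 hwa.1, hwa.2.1, hwb.2.1,
    hψ.mass hd hγ ⟨hε, hε1⟩ (hsub ma), hψ.mass hd hγ ⟨hε, hε1⟩ (hsub mb)]
  have := neg_abs_le ((∫ x, (ψ b1 x * (starRingEnd ℂ) (ww ε f b1 x)).re) -
    ∫ x, (ψ a1 x * (starRingEnd ℂ) (ww ε f a1 x)).re)
  linarith

end

/-! ### From admissible families to the profile -/

section
variable {d : ℕ} {γ : ℝ}

lemma vv_eq_hartreeProfile {ε t : ℝ} {a : Ed d → ℂ} (hc : Real.cos t ≠ 0) (x : Ed d) :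
    vv γ a ε t x = hartreeProfile d γ a ε t x := by
  rw [vv, lns, lens, rh_eq (by simpa using hc), hartreeProfile, Complex.exp_add, chirp, BV, al, sg]
  simp only [sub_zero]
  rw [gphase, ← GG, ← VK]
  rw [show I * ((-Real.tan t / (2 * ε) * ‖x‖ ^ 2 : ℝ) : ℂ) =
      -I * ((‖x‖ ^ 2 * Real.tan t / (2 * ε) : ℝ) : ℂ) by push_cast; ring,
    show -I * ((GG γ t * VK γ a ((Real.cos t)⁻¹ • x) : ℝ) : ℂ) =
      I * ((-VK γ a ((Real.cos t)⁻¹ • x) * GG γ t : ℝ) : ℂ) by push_cast; ring]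
  ring

/-- A unimodular factor does not change the Hartree potential, so it commutes with the nonlinear
profile. -/
lemma vv_const_mul {ε t : ℝ} {a : Ed d → ℂ} {κ : ℂ} (hκ : ‖κ‖ = 1) (x : Ed d) :
    vv γ (fun y => κ * a y) ε t x = κ * vv γ a ε t x := by
  have h : ∀ y, VK γ (fun y => κ * a y) y = VK γ a y := fun y => by
    simp only [VK, norm_mul, hκ, one_mul]
  simp only [vv, lns, lens, BV, h]
  ring

lemma vv_zero {ε : ℝ} {a : Ed d → ℂ} (x : Ed d) : vv γ a ε 0 x = a x := by
  rw [vv, lns, lens, rh_eq (by simp), BV, chirp, al, sg, GG_zero]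
  simp

lemma vv_memLp (hd : 2 ≤ d) (hγ : 0 < γ ∧ γ < 1) (a : SchwartzMap (Ed d) ℂ) {ε t : ℝ}
    (hc : Real.cos t ≠ 0) : MemLp (vv γ (fun y => a y) ε t) 2 volume := by
  have hvc : AEStronglyMeasurable (vv γ (fun y => a y) ε t) volume := by
    have hB := BV_contDiff hd hγ a
    have := (chirp_contDiff (d := d) (al ε 0 t) (n := 0)).continuous
    have hB2 : Continuous fun x : Ed d => BV γ (fun y => a y) (GG γ t, sg 0 t • x) :=
      hB.continuous.comp (by fun_prop)
    exact (continuous_const.mul (this.mul hB2)).aestronglyMeasurable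
  exact (scale_L2le hc (vv_norm hc) hvc (schwartz_L2 a)).1

/-- The equation, divided by `iε`. -/
lemma sol_of_admissible {ψ : ℝ → ℝ → Ed d → ℂ} (hadm : AdmissibleFamily d Real.pi ψ)
    (heq : ∀ ε ∈ Set.Ioc (0 : ℝ) 1, ∀ t ∈ Set.Icc (0 : ℝ) Real.pi, ∀ x : Ed d,
      Complex.I * (ε : ℂ) * deriv (fun s => ψ ε s x) t =
        -(((ε : ℂ) ^ 2) / 2) * lap d (ψ ε t) x + ((‖x‖ ^ 2 / 2 : ℝ) : ℂ) * ψ ε t x +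
          (ε : ℂ) * (((∫ y : Ed d, ‖x - y‖ ^ (-γ) * ‖ψ ε t y‖ ^ 2) : ℝ) : ℂ) * ψ ε t x)
    {ε : ℝ} (hε : ε ∈ Set.Ioc (0 : ℝ) 1) : Sol γ ε (ψ ε) := by
  obtain ⟨h1, h2, h3, h4, -⟩ := hadm ε hε
  refine ⟨h1, h2, h3, h4, fun t ht x => ?_⟩
  have h := heq ε hε t ht x
  rw [← VK] at h
  have he : (ε : ℂ) ≠ 0 := by exact_mod_cast hε.1.ne'
  refine mul_left_cancel₀ (mul_ne_zero I_ne_zero he) (h.trans ?_)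
  push_cast
  field_simp
  linear_combination (-(ε : ℂ) ^ 2 * lap d (ψ ε t) x + ψ ε t x * (‖x‖ : ℂ) ^ 2 +
    2 * ε * VK γ (ψ ε t) x * ψ ε t x) * I_sq

/-- The triangle inequality for squared `L²` distances. -/
lemma integral_sub_le {p q r : Ed d → ℂ} (hp : MemLp p 2 volume) (hq : MemLp q 2 volume)
    (hr : MemLp r 2 volume) : ∫ x, ‖p x - r x‖ ^ 2 ≤
      2 * (∫ x, ‖p x - q x‖ ^ 2) + 2 * ∫ x, ‖q x - r x‖ ^ 2 := by
  have i1 := (hp.sub hq).integrable_norm_pow two_ne_zero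
  have i2 := (hq.sub hr).integrable_norm_pow two_ne_zero
  have i3 := (hp.sub hr).integrable_norm_pow two_ne_zero
  simp only [Pi.sub_apply] at i1 i2 i3
  have i12 : Integrable fun x => 2 * ‖p x - q x‖ ^ 2 + 2 * ‖q x - r x‖ ^ 2 :=
    (i1.const_mul 2).add (i2.const_mul 2)
  rw [← integral_const_mul, ← integral_const_mul,
    ← integral_add (i1.const_mul 2) (i2.const_mul 2)]
  refine integral_mono i3 i12 fun x => ?_
  have h : ‖p x - r x‖ ≤ ‖p x - q x‖ + ‖q x - r x‖ := norm_sub_le_norm_sub_add_norm_sub _ _ _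
  have h0 := norm_nonneg (p x - r x)
  dsimp only
  nlinarith [sq_nonneg (‖p x - q x‖ - ‖q x - r x‖)]

end

/-- A uniform bound on squared `L²` norms that becomes arbitrarily small gives convergence of the
suprema of the `L²` norms. -/
lemma tendsto_iSup_of_sq {d : ℕ} {s : Set ℝ} {F : ℝ → ℝ → Ed d → ℂ}
    (hF : ∀ ε ∈ Ioc (0 : ℝ) 1, ∀ τ ∈ s, MemLp (F ε τ) 2 volume)
    (h : ∀ η > 0, ∀ᶠ ε in nhdsWithin (0 : ℝ) (Ioc 0 1), ∀ τ ∈ s, ∫ x, ‖F ε τ x‖ ^ 2 ≤ η) :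
    Tendsto (fun ε : ℝ => ⨆ τ : s, (eLpNorm (fun x => F ε (τ : ℝ) x) 2 volume).toReal)
      (nhdsWithin 0 (Ioc 0 1)) (nhds 0) := by
  rw [Metric.tendsto_nhds]
  intro η hη
  filter_upwards [h ((η / 2) ^ 2) (by positivity), self_mem_nhdsWithin] with ε hε hm
  have h0 : 0 ≤ ⨆ τ : s, (eLpNorm (fun x => F ε (τ : ℝ) x) 2 volume).toReal :=
    Real.iSup_nonneg fun _ => ENNReal.toReal_nonneg
  rw [Real.dist_eq, sub_zero, abs_of_nonneg h0]
  refine lt_of_le_of_lt (Real.iSup_le (fun τ => ?_) (half_pos hη).le) (half_lt_self hη)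
  have := hε τ τ.2
  rw [← l2_sq (hF ε hm τ τ.2)] at this
  exact (abs_le_of_sq_le_sq' this (half_pos hη).le).2

/-! ### Convergence -/

section
variable {d : ℕ} {γ : ℝ}

/-- `vv_estimate` with zero initial error. -/
lemma before_focus (hd : 2 ≤ d) (hγ : 0 < γ ∧ γ < 1) (a : SchwartzMap (Ed d) ℂ) :
    ∃ C : ℝ, 0 ≤ C ∧ ∀ (ε : ℝ) (ψ : ℝ → Ed d → ℂ), 0 < ε → ε ≤ 1 → Sol γ ε ψ →
      (∀ x, ψ 0 x = a x) → ∀ t ∈ Ico 0 (Real.pi / 2), ∀ τ ∈ Icc 0 t,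
      ∫ x, ‖ψ τ x - vv γ (fun y => a y) ε τ x‖ ^ 2 ≤ C * (ε / Real.cos t ^ 2) := by
  obtain ⟨C, hC, h⟩ := vv_estimate hd hγ a
  refine ⟨C, hC, fun ε ψ hε hε1 hψ h0 t ht τ hτ => ?_⟩
  have hct : 0 < Real.cos t := Real.cos_pos_of_mem_Ioo ⟨by linarith [ht.1, Real.pi_pos], ht.2⟩
  have := h (Real.cos t) ε ψ hct hε hε1 hψ (by simp only [h0]) 0 t
    (Icc_subset_Icc le_rfl (by linarith [ht.2, Real.pi_pos]))
    (fun s hs => (Real.cos_le_cos_of_nonneg_of_le_pi hs.1 (by linarith [ht.2, Real.pi_pos])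
      hs.2).trans (le_abs_self _)) τ hτ
  simpa [h0, vv_zero] using this

/-- The bound after the focus: `δ` is the half-width of the crossed interval around `π / 2`. On the
far side `vv_estimate` is restarted with the data `κ a`, where `κ = e^{-idπ/2}`. -/
lemma after_focus (hd : 2 ≤ d) (hγ : 0 < γ ∧ γ < 1) (a : SchwartzMap (Ed d) ℂ) :
    ∃ C1 C2 M B : ℝ, 0 ≤ C1 ∧ 0 ≤ C2 ∧ 0 ≤ M ∧ 0 ≤ B ∧ ∀ (ε : ℝ) (ψ : ℝ → Ed d → ℂ),
      0 < ε → ε ≤ 1 → Sol γ ε ψ → (∀ x, ψ 0 x = a x) → ∀ δ, 0 < δ → δ < Real.pi / 2 →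
      ∀ τ ∈ Icc (Real.pi / 2 + δ) Real.pi,
      ∫ x, ‖ψ τ x - cexp (-I * ((d * Real.pi / 2 : ℝ) : ℂ)) * vv γ (fun y => a y) ε τ x‖ ^ 2 ≤
      C2 * ((2 * ((2 * (C1 * (ε / Real.sin δ ^ 2)) +
            2 * (B * (ε * |Real.tan (Real.pi / 2 - δ)| +
              |GG γ (Real.pi / 2 - δ) - GG γ (Real.pi / 2)|)) ^ 2) +
            2 * M * (GG γ (Real.pi / 2 + δ) - GG γ (Real.pi / 2 - δ))) +
          2 * (B * (ε * |Real.tan (Real.pi / 2 + δ)| +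
              |GG γ (Real.pi / 2 + δ) - GG γ (Real.pi / 2)|)) ^ 2) + ε / Real.sin δ ^ 2) := by
  set κ : ℂ := cexp (-I * ((d * Real.pi / 2 : ℝ) : ℂ)) with hκd
  have hκ : ‖κ‖ = 1 := by
    rw [hκd, neg_mul, mul_comm I, ← neg_mul, ← Complex.ofReal_neg, Complex.norm_exp_ofReal_mul_I]
  obtain ⟨C1, hC1, h1⟩ := before_focus hd hγ a
  obtain ⟨C2, hC2, h2⟩ := vv_estimate hd hγ (κ • a)
  obtain ⟨f, M, B, hM, hB, hw⟩ := ww_data hd hγ a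
  set A : ℝ := Real.sqrt (∫ y, ‖a y‖ ^ 2) with hA
  have hA0 : 0 ≤ A := Real.sqrt_nonneg _
  have hA2 : A ^ 2 = ∫ y, ‖a y‖ ^ 2 := Real.sq_sqrt (integral_nonneg fun y => by positivity)
  refine ⟨C1, C2, M * A ^ 3, B, hC1, hC2, by positivity, hB,
    fun ε ψ hε hε1 hψ h0 δ hδ hδ2 τ hτ => ?_⟩
  have hpi := Real.pi_pos
  have hmass : ∫ x, ‖ψ 0 x‖ ^ 2 = A ^ 2 := by simp only [h0, hA2]
  have hsδ : 0 < Real.sin δ := Real.sin_pos_of_pos_of_lt_pi hδ (by linarith)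
  set p := Real.pi / 2 - δ with hp
  set q := Real.pi / 2 + δ with hq
  have hcp : Real.cos p = Real.sin δ := Real.cos_pi_div_two_sub δ
  have hcq : Real.cos q = -Real.sin δ := by rw [hq, add_comm, Real.cos_add_pi_div_two]
  have hsp : 0 < Real.sin p := Real.sin_pos_of_pos_of_lt_pi (by linarith) (by linarith)
  have hsq : 0 < Real.sin q := Real.sin_pos_of_pos_of_lt_pi (by linarith) (by linarith)
  have hcp0 : Real.cos p ≠ 0 := by rw [hcp]; exact hsδ.ne'
  have hcq0 : Real.cos q ≠ 0 := by rw [hcq]; exact (neg_neg_of_pos hsδ).ne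
  obtain ⟨K, -, hK⟩ := hψ.bound
  have hψp : MemLp (ψ p) 2 volume := (hK p ⟨by linarith, by linarith⟩).1.1
  have hψq : MemLp (ψ q) 2 volume := (hK q ⟨by linarith, by linarith⟩).1.1
  have hvp := vv_memLp hd hγ a (ε := ε) hcp0
  have hvq := (vv_memLp hd hγ a (ε := ε) hcq0).const_mul κ
  -- Before the focus the linear solution carries no extra phase.
  obtain ⟨hwp, -, -, hwvp⟩ := hw ε p 1 hε hsp hcp0
    (by rw [one_mul, abs_of_pos (by rw [hcp]; exact hsδ)])
  -- After the focus it carries the Maslov phase `κ`.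
  obtain ⟨hwq, -, -, hwvq⟩ := hw ε q (-1) hε hsq hcq0
    (by rw [abs_of_neg (by rw [hcq]; exact neg_neg_of_pos hsδ)]; ring)
  have hE2 := hwvp.2
  have hE5 := hwvq.2
  rw [show ((1 - 1) * d * Real.pi / 4 : ℝ) = 0 by ring] at hE2
  rw [show ((1 - -1) * d * Real.pi / 4 : ℝ) = d * Real.pi / 2 by ring, ← hκd] at hE5
  simp only [Complex.ofReal_zero, mul_zero, Complex.exp_zero, one_mul] at hE2
  have hE1 := h1 ε ψ hε hε1 hψ h0 p ⟨by linarith, by linarith⟩ p ⟨by linarith, le_rfl⟩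
  rw [hcp] at hE1
  have hE3 := integral_sub_le hψp hvp hwp
  have hE2' : ∫ x, ‖vv γ (fun y => a y) ε p x - ww ε f p x‖ ^ 2 =
      ∫ x, ‖ww ε f p x - vv γ (fun y => a y) ε p x‖ ^ 2 := by simp only [norm_sub_rev]
  rw [hE2'] at hE3
  have hE4 := ww_cross hd hγ hε hε1 hψ hA0 hM hmass f (fun t hs hc => by
    rcases lt_or_gt_of_ne hc with h | h
    · obtain ⟨w1, w2, w3, -⟩ := hw ε t (-1) hε hs hc (by rw [abs_of_neg h]; ring)
      exact ⟨w1, w2.trans hA2.symm, w3⟩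
    · obtain ⟨w1, w2, w3, -⟩ := hw ε t 1 hε hs hc (by rw [abs_of_pos h]; ring)
      exact ⟨w1, w2.trans hA2.symm, w3⟩) (a1 := p) (b1 := q) (by linarith) (by linarith)
      (by linarith) (by rw [hp]; linarith : p < Real.pi / 2).ne
      (by rw [hq]; linarith : Real.pi / 2 < q).ne'
  have hE6 := integral_sub_le hψq hwq hvq
  have hE7 := h2 (Real.sin δ) ε ψ hsδ hε hε1 hψ (by
      rw [hmass, hA2]
      simp only [smul_apply, norm_smul, hκ, one_mul]) q Real.pi
    (Icc_subset_Icc (by linarith) le_rfl) (fun s hs => by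
      have := Real.cos_le_cos_of_nonneg_of_le_pi (by linarith : (0:ℝ) ≤ q) hs.2 hs.1
      rw [hcq] at this
      exact (le_neg_of_le_neg this).trans (neg_le_abs _)) τ hτ
  have hκv : ∀ t x, vv γ (fun y => (κ • a) y) ε t x = κ * vv γ (fun y => a y) ε t x :=
    fun t x => by
      simp only [smul_apply, smul_eq_mul]
      exact vv_const_mul hκ x
  simp only [hκv] at hE7
  refine hE7.trans (mul_le_mul_of_nonneg_left ?_ hC2)
  linarith

end

/-- semiclassical asymptotics for the weakly nonlinear Hartree equation
with harmonic potential, before and after the focus at `τ = π/2`; after the focus the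
profile acquires the Maslov phase factor `e^{-idπ/2}`. -/
theorem hartree_harmonic_wkb_asymptotics
    (d : ℕ) (hd : 2 ≤ d) (γ : ℝ) (hγ : 0 < γ ∧ γ < 1)
    (a₀ : SchwartzMap (Ed d) ℂ)
    (ψ : ℝ → ℝ → Ed d → ℂ)
    (hadm : AdmissibleFamily d Real.pi ψ)
    (heq : ∀ ε ∈ Set.Ioc (0 : ℝ) 1, ∀ t ∈ Set.Icc (0 : ℝ) Real.pi, ∀ x : Ed d,
      Complex.I * (ε : ℂ) * deriv (fun s => ψ ε s x) t =
        -(((ε : ℂ) ^ 2) / 2) * lap d (ψ ε t) x + ((‖x‖ ^ 2 / 2 : ℝ) : ℂ) * ψ ε t x +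
          (ε : ℂ) * (((∫ y : Ed d, ‖x - y‖ ^ (-γ) * ‖ψ ε t y‖ ^ 2) : ℝ) : ℂ) * ψ ε t x)
    (hinit : ∀ ε ∈ Set.Ioc (0 : ℝ) 1, ∀ x : Ed d, ψ ε 0 x = a₀ x) :
    (∀ t : ℝ, t ∈ Set.Ico (0 : ℝ) (Real.pi / 2) →
      Tendsto (fun ε : ℝ =>
          ⨆ τ : Set.Icc (0 : ℝ) t,
            (eLpNorm (fun x =>
                ψ ε (τ : ℝ) x - hartreeProfile d γ (fun y => a₀ y) ε (τ : ℝ) x)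
              2 volume).toReal)
        (nhdsWithin 0 (Set.Ioc 0 1)) (nhds 0)) ∧
    (∀ t : ℝ, t ∈ Set.Ioc (Real.pi / 2) Real.pi →
      Tendsto (fun ε : ℝ =>
          ⨆ τ : Set.Icc t Real.pi,
            (eLpNorm (fun x =>
                ψ ε (τ : ℝ) x -
                  Complex.exp (-Complex.I * ((d * Real.pi / 2 : ℝ) : ℂ)) *
                    hartreeProfile d γ (fun y => a₀ y) ε (τ : ℝ) x)
              2 volume).toReal)
        (nhdsWithin 0 (Set.Ioc 0 1)) (nhds 0)) := by
  have hpi := Real.pi_pos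
  have hsol : ∀ ε ∈ Ioc (0 : ℝ) 1, Sol γ ε (ψ ε) := fun ε hε => sol_of_admissible hadm heq hε
  have hψL : ∀ ε ∈ Ioc (0 : ℝ) 1, ∀ τ ∈ Icc 0 Real.pi, MemLp (ψ ε τ) 2 volume :=
    fun ε hε τ hτ => by
      obtain ⟨K, -, hK⟩ := (hsol ε hε).bound
      exact (hK τ hτ).1.1
  have hprof : ∀ {ε τ : ℝ}, Real.cos τ ≠ 0 → hartreeProfile d γ (fun y => a₀ y) ε τ =
      vv γ (fun y => a₀ y) ε τ := fun hc => funext fun x => (vv_eq_hartreeProfile hc x).symm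
  refine ⟨fun t ht => ?_, fun t ht => ?_⟩
  · have hcos : ∀ τ ∈ Icc 0 t, Real.cos τ ≠ 0 := fun τ hτ =>
      (Real.cos_pos_of_mem_Ioo ⟨by linarith [hτ.1], by linarith [hτ.2, ht.2]⟩).ne'
    refine tendsto_iSup_of_sq (s := Icc 0 t)
      (F := fun ε τ x => ψ ε τ x - hartreeProfile d γ (fun y => a₀ y) ε τ x)
      (fun ε hε τ hτ => ?_) fun η hη => ?_
    · rw [hprof (hcos τ hτ)]
      exact (hψL ε hε τ ⟨hτ.1, by linarith [hτ.2, ht.2]⟩).sub (vv_memLp hd hγ a₀ (hcos τ hτ))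
    · obtain ⟨C, hC, h⟩ := before_focus hd hγ a₀
      have hlim : Tendsto (fun ε : ℝ => C * (ε / Real.cos t ^ 2)) (nhds 0) (nhds 0) := by
        have : Continuous fun ε : ℝ => C * (ε / Real.cos t ^ 2) := by fun_prop
        simpa using this.tendsto 0
      filter_upwards [(hlim.mono_left nhdsWithin_le_nhds).eventually (gt_mem_nhds hη),
        self_mem_nhdsWithin] with ε hε hm τ hτ
      simp only [hprof (hcos τ hτ)]
      exact (h ε (ψ ε) hm.1 hm.2 (hsol ε hm) (hinit ε hm) t ht τ hτ).trans hε.le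
  · have hcos : ∀ τ ∈ Icc t Real.pi, Real.cos τ ≠ 0 := fun τ hτ =>
      (Real.cos_neg_of_pi_div_two_lt_of_lt (by linarith [hτ.1, ht.1]) (by linarith [hτ.2])).ne
    refine tendsto_iSup_of_sq (s := Icc t Real.pi)
      (F := fun ε τ x => ψ ε τ x - cexp (-I * ((d * Real.pi / 2 : ℝ) : ℂ)) *
        hartreeProfile d γ (fun y => a₀ y) ε τ x)
      (fun ε hε τ hτ => ?_) fun η hη => ?_
    · rw [hprof (hcos τ hτ)]
      exact (hψL ε hε τ ⟨by linarith [hτ.1, ht.1], hτ.2⟩).sub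
        ((vv_memLp hd hγ a₀ (hcos τ hτ)).const_mul _)
    · obtain ⟨C1, C2, M, B, hC1, hC2, hM, hB, h⟩ := after_focus hd hγ a₀
      -- `R ε δ` is the bound of `after_focus`; its value at `ε = 0` vanishes as `δ → 0`.
      set R : ℝ → ℝ → ℝ := fun ε δ =>
        C2 * ((2 * ((2 * (C1 * (ε / Real.sin δ ^ 2)) +
            2 * (B * (ε * |Real.tan (Real.pi / 2 - δ)| +
              |GG γ (Real.pi / 2 - δ) - GG γ (Real.pi / 2)|)) ^ 2) +
            2 * M * (GG γ (Real.pi / 2 + δ) - GG γ (Real.pi / 2 - δ))) +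
          2 * (B * (ε * |Real.tan (Real.pi / 2 + δ)| +
              |GG γ (Real.pi / 2 + δ) - GG γ (Real.pi / 2)|)) ^ 2) + ε / Real.sin δ ^ 2) with hR
      have hG : ContinuousAt (GG γ) (Real.pi / 2) :=
        (GG_cont hγ).continuousAt (Icc_mem_nhds (by linarith) (by linarith))
      have hR0 : Tendsto (fun δ => R 0 δ) (nhds 0) (nhds 0) := by
        have hm : ContinuousAt (fun δ : ℝ => GG γ (Real.pi / 2 - δ)) 0 :=
          ContinuousAt.comp (g := GG γ) (f := fun δ : ℝ => Real.pi / 2 - δ)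
            (by simpa using hG) (by fun_prop)
        have hp : ContinuousAt (fun δ : ℝ => GG γ (Real.pi / 2 + δ)) 0 :=
          ContinuousAt.comp (g := GG γ) (f := fun δ : ℝ => Real.pi / 2 + δ)
            (by simpa using hG) (by fun_prop)
        have hc : ContinuousAt (fun δ => R 0 δ) 0 := by
          simp only [hR, zero_mul, zero_div, zero_add, mul_zero, add_zero]
          fun_prop
        have := hc.tendsto
        simpa [hR] using this
      obtain ⟨δ, hδR, hδ0, hδ1⟩ : ∃ δ, R 0 δ < η ∧ 0 < δ ∧ δ < min (t - Real.pi / 2) (Real.pi / 2) :=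
        (((hR0.mono_left nhdsWithin_le_nhds).eventually (gt_mem_nhds hη)).and
          (Ioo_mem_nhdsGT (lt_min (by linarith [ht.1]) (by linarith)))).exists (f := nhdsWithin 0 (Ioi 0))
      have hRε : Tendsto (fun ε => R ε δ) (nhds 0) (nhds (R 0 δ)) := by
        have : Continuous fun ε => R ε δ := by simp only [hR]; fun_prop
        exact this.tendsto 0
      filter_upwards [(hRε.mono_left nhdsWithin_le_nhds).eventually (gt_mem_nhds hδR),
        self_mem_nhdsWithin] with ε hε hm τ hτ
      simp only [hprof (hcos τ hτ)]
      exact (h ε (ψ ε) hm.1 hm.2 (hsol ε hm) (hinit ε hm) δ hδ0 (hδ1.trans_le (min_le_right _ _)) τ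
        ⟨by linarith [hτ.1, hδ1.trans_le (min_le_left _ _)], hτ.2⟩).trans hε.le
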